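/- arXiv:1509.07908 — 8 statements merged into one kernel-verified Lean document; each statement's English description precedes it below -/
import Mathlib

section
/- Let d be a positive integer, let p ≥ q ≥ 2d be positive integers, and let 0 < δ < 1. Then there exists a positive integer c = c(p,q,d,δ) such that the following holds: for any finite family 𝓕 of at least p compact convex sets in ℝ^d, each of diameter at least one, if among every p sets of 𝓕 there are q whose intersection has diameter at least one, then there exist c convex sets K₁, K₂, …, K_c in ℝ^d, each of diameter at least 1 − δ, such that every set in 𝓕 contains at least one K_i. -/
namespace PQDiam

/-- Weight of a tuple. -/
noncomputable def wt {ι J : Type} [Fintype J] (w : ι → ℝ) (i : J → ι) : ℝ := ∏ j, w (i j)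

lemma wt_nonneg {ι J : Type} [Fintype J] {w : ι → ℝ} (hw : ∀ a, 0 ≤ w a) (i : J → ι) :
    0 ≤ wt w i := Finset.prod_nonneg fun _ _ => hw _

open Classical in
lemma wt_sum' {ι J : Type} [Fintype ι] [Fintype J] (w : ι → ℝ) :
    ∑ i : J → ι, wt w i = (∑ a, w a) ^ (Fintype.card J) := by
  have := Finset.prod_univ_sum (fun _ : J => (Finset.univ : Finset ι)) (fun _ a => w a)
  simp only [Finset.prod_const, Fintype.piFinset_univ, Finset.card_univ] at this
  simpa [wt] using this.symm

open Classical in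
lemma wt_sum {ι J : Type} [Fintype ι] [Fintype J] {w : ι → ℝ} (h1 : ∑ a, w a = 1) :
    ∑ i : J → ι, wt w i = 1 := by
  rw [wt_sum', h1, one_pow]

open Classical in
lemma wt_marginal {ι J : Type} [Fintype ι] [Fintype J] {w : ι → ℝ} (h1 : ∑ a, w a = 1)
    (m : J) (φ : ι → ℝ) :
    ∑ i : J → ι, wt w i * φ (i m) = ∑ a, w a * φ a := by
  have := Finset.prod_univ_sum (fun _ : J => (Finset.univ : Finset ι))
    (fun j a => w a * (if j = m then φ a else 1))
  rw [Fintype.piFinset_univ] at this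
  have e1 : ∀ i : J → ι, ∏ j, (w (i j) * (if j = m then φ (i j) else 1)) = wt w i * φ (i m) := by
    intro i
    rw [Finset.prod_mul_distrib, wt]
    simp
  simp only [e1] at this
  rw [← this, Finset.prod_eq_single m]
  · simp
  · intro j _ hj
    simp [hj, h1]
  · simp

open Classical in
/-- swapping involution -/
noncomputable def swapE {ι J : Type} (S : Set J) : ((J → ι) × (J → ι)) ≃ ((J → ι) × (J → ι)) where
  toFun x := (S.piecewise x.2 x.1, S.piecewise x.1 x.2)
  invFun x := (S.piecewise x.2 x.1, S.piecewise x.1 x.2)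
  left_inv x := by
    ext j <;> by_cases h : j ∈ S <;> simp [h]
  right_inv x := by
    ext j <;> by_cases h : j ∈ S <;> simp [h]

open Classical in
lemma resample {ι J : Type} [Fintype ι] [Fintype J] {w : ι → ℝ} (h1 : ∑ a, w a = 1)
    (S : Set J) (f : (J → ι) → ℝ) :
    ∑ i, wt w i * f i = ∑ i, wt w i * ∑ i', wt w i' * f (S.piecewise i' i) := by
  have e1 : ∑ x : (J → ι) × (J → ι), wt w x.1 * wt w x.2 * f x.1 = ∑ i, wt w i * f i := by
    rw [Fintype.sum_prod_type]
    refine Finset.sum_congr rfl fun i _ => ?_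
    have : ∀ y : J → ι, wt w i * wt w y * f i = (wt w i * f i) * wt w y := fun y => by ring
    simp only [this, ← Finset.mul_sum, wt_sum h1, mul_one]
  rw [← e1, ← Equiv.sum_comp (swapE (ι := ι) S), Fintype.sum_prod_type]
  refine Finset.sum_congr rfl fun i _ => ?_
  rw [Finset.mul_sum]
  refine Finset.sum_congr rfl fun i' _ => ?_
  simp only [swapE, Equiv.coe_fn_mk]
  rw [← mul_assoc]
  congr 1
  simp only [wt, ← Finset.prod_mul_distrib]
  refine Finset.prod_congr rfl fun j _ => ?_
  by_cases h : j ∈ S <;> simp [h, mul_comm]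

open Classical in
/-- The pinning lemma. -/
lemma pin {ι J T : Type} [Fintype ι] [Fintype J] [Fintype T] {w : ι → ℝ}
    (hw : ∀ a, 0 ≤ w a) (h1 : ∑ a, w a = 1) (S : T → Set J) (Q : T → (J → ι) → Prop)
    (h : ∀ i, ∃ t, Q t i) :
    ∃ t i, 1 ≤ (Fintype.card T : ℝ) *
      ∑ i', wt w i' * (if Q t ((S t).piecewise i' i) then 1 else 0) := by
  by_contra! hc
  have h2 : ∀ t, (Fintype.card T : ℝ) * ∑ i, wt w i * (if Q t i then (1 : ℝ) else 0) < 1 := by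
    intro t
    rw [resample h1 (S t), Finset.mul_sum]
    obtain ⟨i0, hi0⟩ : ∃ i : J → ι, 0 < wt w i := by
      by_contra! hn
      have := wt_sum (J := J) h1
      have h3 := Finset.sum_nonpos (s := Finset.univ) fun i _ => hn i
      linarith
    refine lt_of_lt_of_eq ?_ (wt_sum (J := J) h1)
    refine Finset.sum_lt_sum (fun i _ => ?_) ⟨i0, Finset.mem_univ _, ?_⟩
    · have := hc t i
      have := wt_nonneg hw i
      nlinarith
    · have := hc t i0
      nlinarith
  have hT : Nonempty T := by
    by_contra hT
    rw [not_nonempty_iff] at hT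
    have hi : Nonempty (J → ι) := by
      by_contra hi
      rw [not_nonempty_iff] at hi
      have := wt_sum (J := J) h1
      simp at this
    obtain ⟨t, _⟩ := h hi.some
    exact hT.elim t
  have h3 : (1 : ℝ) ≤ ∑ t, ∑ i, wt w i * (if Q t i then (1 : ℝ) else 0) := by
    rw [Finset.sum_comm]
    refine le_of_eq_of_le (wt_sum (J := J) h1).symm ?_
    refine Finset.sum_le_sum fun i _ => ?_
    rw [← Finset.mul_sum]
    obtain ⟨t, ht⟩ := h i
    have : (1 : ℝ) ≤ ∑ t, (if Q t i then (1 : ℝ) else 0) := by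
      have := Finset.single_le_sum (f := fun t => if Q t i then (1 : ℝ) else 0)
        (fun t _ => by positivity) (Finset.mem_univ t)
      simpa [ht] using this
    have := wt_nonneg hw i
    nlinarith
  have h4 : (Fintype.card T : ℝ) * ∑ t, ∑ i, wt w i * (if Q t i then (1 : ℝ) else 0)
      < ∑ t : T, 1 := by
    rw [Finset.mul_sum]
    exact Finset.sum_lt_sum_of_nonempty Finset.univ_nonempty fun t _ => h2 t
  have h5 : (0 : ℝ) < Fintype.card T := by exact_mod_cast Fintype.card_pos
  rw [Finset.sum_const, Finset.card_univ, nsmul_eq_mul, mul_one] at h4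
  nlinarith

section geom

variable {G : Type} [NormedAddCommGroup G] [InnerProductSpace ℝ G] [FiniteDimensional ℝ G]

open Classical in
/-- a point of minimal norm -/
noncomputable def mn (S : Set G) : G :=
  if h : ∃ x ∈ S, ∀ y ∈ S, ‖x‖ ≤ ‖y‖ then h.choose else 0

lemma mn_eq {S : Set G} (hS : Convex ℝ S) {x : G} (hx : x ∈ S) (hm : ∀ y ∈ S, ‖x‖ ≤ ‖y‖) :
    mn S = x := by
  have h : ∃ x ∈ S, ∀ y ∈ S, ‖x‖ ≤ ‖y‖ := ⟨x, hx, hm⟩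
  rw [mn, dif_pos h]
  obtain ⟨h1, h2⟩ := h.choose_spec
  generalize h.choose = y at h1 h2
  have e : ‖y‖ = ‖x‖ := le_antisymm (h2 _ hx) (hm _ h1)
  have h3 := hm _ (hS h1 hx (by norm_num : (0:ℝ) ≤ 1/2) (by norm_num : (0:ℝ) ≤ 1/2) (by norm_num))
  have h4 := parallelogram_law_with_norm ℝ y x
  rw [← smul_add, norm_smul] at h3
  norm_num at h3
  have h5 : ‖y - x‖ = 0 := by
    have := norm_nonneg (y - x)
    have := norm_nonneg x
    rw [e] at h4
    nlinarith
  exact sub_eq_zero.1 (norm_eq_zero.1 h5)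

lemma exists_min {S : Set G} (hS : IsClosed S) (hn : S.Nonempty) :
    ∃ x ∈ S, ∀ y ∈ S, ‖x‖ ≤ ‖y‖ := by
  obtain ⟨x, hx, h⟩ := hS.exists_infDist_eq_dist hn 0
  refine ⟨x, hx, fun y hy => ?_⟩
  have := Metric.infDist_le_dist_of_mem (x := (0:G)) hy
  simpa [h] using this

lemma mn_lemma {D : ℕ} (hD : Module.finrank ℝ G = D) (K : Fin (D + 1) → Set G)
    (hc : ∀ j, IsClosed (K j)) (hK : ∀ j, Convex ℝ (K j)) (hn : (⋂ j, K j).Nonempty) :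
    ∃ k, mn (⋂ j ∈ {j | j ≠ k}, K j) ∈ K k := by
  classical
  obtain ⟨p, hp, hpm⟩ := exists_min (isClosed_iInter hc) hn
  rw [Set.mem_iInter] at hp
  suffices h : ∃ k, ∀ y ∈ ⋂ j ∈ {j | j ≠ k}, K j, ‖p‖ ≤ ‖y‖ by
    obtain ⟨k, hk⟩ := h
    refine ⟨k, ?_⟩
    rw [mn_eq (x := p) (convex_iInter₂ fun j _ => hK j) _ hk]
    · exact hp k
    · simp only [Set.mem_iInter]
      exact fun j _ => hp j
  by_contra! hcon
  let F : Option (Fin (D + 1)) → Set G := fun o => o.elim (Metric.ball 0 ‖p‖) K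
  have := Convex.helly_theorem (𝕜 := ℝ) (F := F) (s := Finset.univ) (by simp [hD]) (by
    intro i _
    cases i with
    | none => exact convex_ball _ _
    | some j => exact hK j) (by
    intro I _ hI
    have hI2 : I ≠ Finset.univ := by
      rintro rfl
      simp [hD] at hI
    obtain ⟨o, ho⟩ : ∃ o, o ∉ I := by
      by_contra! h
      exact hI2 (Finset.eq_univ_iff_forall.2 h)
    cases o with
    | none =>
      refine ⟨p, ?_⟩
      simp only [Set.mem_iInter]
      intro i hi
      cases i with
      | none => exact absurd hi ho
      | some j => exact hp j
    | some k =>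
      obtain ⟨y, hy, hlt⟩ := hcon k
      refine ⟨y, ?_⟩
      simp only [Set.mem_iInter] at hy ⊢
      intro i hi
      cases i with
      | none => simpa [F] using hlt
      | some j => exact hy j (by rintro rfl; exact ho hi))
  obtain ⟨y, hy⟩ := this
  simp only [Set.mem_iInter, Finset.mem_univ, true_imp_iff] at hy
  have h1 := hpm y (Set.mem_iInter.2 fun j => hy (some j))
  have h2 : ‖y‖ < ‖p‖ := by simpa [F] using hy none
  linarith

/-- weak Tverberg -/
lemma tverberg (G : Type) [NormedAddCommGroup G] [InnerProductSpace ℝ G] [FiniteDimensional ℝ G]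
    (m : ℕ) : ∃ (J : Type) (_ : Fintype J), ∀ z : J → G, ∃ c : J → ℕ, ∃ y : G,
    ∀ a < 2 ^ m, y ∈ convexHull ℝ (z '' {j | c j = a}) := by
  classical
  induction m with
  | zero =>
    refine ⟨Unit, inferInstance, fun z => ⟨fun _ => 0, z (), fun a ha => ?_⟩⟩
    apply subset_convexHull
    refine ⟨(), ?_, rfl⟩
    simp at ha
    simp [ha]
  | succ m ih =>
    obtain ⟨J, _, hJ⟩ := ih
    refine ⟨Fin (Module.finrank ℝ G + 2) × J, inferInstance, fun z => ?_⟩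
    choose c y hy using fun i => hJ (fun j => z (i, j))
    have hdep : ¬ AffineIndependent ℝ y := by
      intro h
      have := h.card_le_finrank_succ
      have h2 := Submodule.finrank_le (vectorSpan ℝ (Set.range y))
      simp at this
      omega
    obtain ⟨I, x, hx1, hx2⟩ := Convex.radon_partition hdep
    refine ⟨fun ij => if ij.1 ∈ I then c ij.1 ij.2 else c ij.1 ij.2 + 2 ^ m, x, fun a ha => ?_⟩
    by_cases h : a < 2 ^ m
    · refine convexHull_min ?_ (convex_convexHull ℝ _) hx1
      rintro _ ⟨i, hi, rfl⟩
      refine convexHull_mono ?_ (hy i a h)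
      rintro _ ⟨j, hj, rfl⟩
      exact ⟨(i, j), by simpa [hi] using hj, rfl⟩
    · refine convexHull_min ?_ (convex_convexHull ℝ _) hx2
      rintro _ ⟨i, hi, rfl⟩
      refine convexHull_mono ?_ (hy i (a - 2 ^ m) (by rw [pow_succ] at ha; omega))
      rintro _ ⟨j, hj, rfl⟩
      refine ⟨(i, j), ?_, rfl⟩
      have hi' : i ∉ I := hi
      have hj' : c i j = a - 2 ^ m := hj
      simp only [Set.mem_ofPred_eq, hi', if_false]
      omega

open Classical in
/-- first selection lemma -/
lemma selection (G : Type) [NormedAddCommGroup G] [InnerProductSpace ℝ G] [FiniteDimensional ℝ G] :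
    ∃ (J : Type) (_ : Fintype J) (c : ℝ), 0 < c ∧ ∀ (ι : Type) [Fintype ι] (w : ι → ℝ),
      (∀ a, 0 ≤ w a) → ∑ a, w a = 1 → ∀ z : ι → G, ∃ (x : G) (S : Set J),
        c ≤ ∑ i : J → ι, wt w i * (if x ∈ convexHull ℝ ((z ∘ i) '' S) then 1 else 0) := by
  set D := Module.finrank ℝ G with hD
  obtain ⟨J, _, hJ⟩ := tverberg G (D + 1)
  let T := {P : Fin (D + 1) → Set J // ∀ a b, a ≠ b → Disjoint (P a) (P b)} × Fin (D + 1)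
  refine ⟨J, inferInstance, 1 / (Fintype.card T + 1), by positivity, ?_⟩
  intro ι _ w hw h1 z
  obtain ⟨⟨⟨P, hP⟩, k⟩, i, hi⟩ := pin (T := T) hw h1 (fun t => t.1.1 t.2)
    (fun t i => mn (⋂ j ∈ {j | j ≠ t.2}, convexHull ℝ ((z ∘ i) '' (t.1.1 j))) ∈
      convexHull ℝ ((z ∘ i) '' (t.1.1 t.2))) (by
    intro i
    obtain ⟨c, y, hy⟩ := hJ (z ∘ i)
    obtain ⟨k, hk⟩ := mn_lemma (D := D) hD.symm
      (fun a : Fin (D + 1) => convexHull ℝ ((z ∘ i) '' {j | c j = a}))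
      (fun a => ((Set.toFinite _).isCompact_convexHull ℝ).isClosed)
      (fun a => convex_convexHull ℝ _)
      ⟨y, Set.mem_iInter.2 fun a => hy a (lt_trans a.2 Nat.lt_two_pow_self)⟩
    refine ⟨⟨⟨fun a => {j | c j = a}, ?_⟩, k⟩, hk⟩
    intro a b hab
    rw [Set.disjoint_left]
    intro j h1 h2
    apply hab
    have h1' : c j = a := h1
    have h2' : c j = b := h2
    exact Fin.ext (h1'.symm.trans h2'))
  refine ⟨mn (⋂ j ∈ {j | j ≠ k}, convexHull ℝ ((z ∘ i) '' (P j))), P k, ?_⟩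
  have key : ∀ i', ((mn (⋂ j ∈ {j | j ≠ k}, convexHull ℝ ((z ∘ (P k).piecewise i' i) '' (P j))) ∈
      convexHull ℝ ((z ∘ (P k).piecewise i' i) '' (P k))) ↔
      mn (⋂ j ∈ {j | j ≠ k}, convexHull ℝ ((z ∘ i) '' (P j))) ∈
        convexHull ℝ ((z ∘ i') '' (P k))) := by
    intro i'
    have e1 : (z ∘ (P k).piecewise i' i) '' (P k) = (z ∘ i') '' (P k) := by
      refine Set.image_congr fun j hj => ?_
      simp [hj]
    have e2 : ∀ j ∈ {j | j ≠ k},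
        convexHull ℝ ((z ∘ (P k).piecewise i' i) '' (P j)) = convexHull ℝ ((z ∘ i) '' (P j)) := by
      intro j hj
      congr 1
      refine Set.image_congr fun l hl => ?_
      have : l ∉ P k := Set.disjoint_left.1 (hP j k hj) hl
      simp [this]
    rw [e1, Set.iInter₂_congr e2]
  simp only [key] at hi
  rw [div_le_iff₀ (by positivity)]
  refine hi.trans ?_
  rw [mul_comm]
  refine mul_le_mul_of_nonneg_left (by linarith) ?_
  refine Finset.sum_nonneg fun i' _ => mul_nonneg (wt_nonneg hw _) (by positivity)

open Classical in
/-- weak epsilon nets -/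
lemma weak_net (G : Type) [NormedAddCommGroup G] [InnerProductSpace ℝ G] [FiniteDimensional ℝ G]
    (ε : ℝ) (hε : 0 < ε) :
    ∃ c : ℕ, 0 < c ∧ ∀ (ι : Type) [Fintype ι] (μ : ι → ℝ),
      (∀ a, 0 ≤ μ a) → ∑ a, μ a ≤ 1 → ∀ z : ι → G, ∃ N : Fin c → G,
        ∀ C : Set G, Convex ℝ C → ε ≤ ∑ a, μ a * (if z a ∈ C then 1 else 0) → ∃ j, N j ∈ C := by
  obtain ⟨J, _, c0, hc0, hsel⟩ := selection G
  set η := c0 * ε ^ Fintype.card J with hη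
  have hη0 : 0 < η := by positivity
  obtain ⟨m, hm⟩ := exists_nat_gt ((Fintype.card (Set J) : ℝ) / η)
  rw [div_lt_iff₀ hη0] at hm
  refine ⟨m + 1, by omega, ?_⟩
  intro ι _ μ hμ hμ1 z
  let Φ : Set G → ℝ := fun A => ∑ S : Set J, ∑ i : J → ι,
    wt μ i * (if ∃ x ∈ A, x ∈ convexHull ℝ ((z ∘ i) '' S) then 1 else 0)
  have hΦ : ∀ A, Φ A ≤ Fintype.card (Set J) := by
    intro A
    calc Φ A ≤ ∑ S : Set J, (1 : ℝ) := by
          refine Finset.sum_le_sum fun S _ => ?_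
          calc _ ≤ ∑ i : J → ι, wt μ i := by
                refine Finset.sum_le_sum fun i _ => ?_
                refine mul_le_of_le_one_right (wt_nonneg hμ i) ?_
                split_ifs <;> norm_num
            _ ≤ 1 := by
                rw [wt_sum']
                exact pow_le_one₀ (Finset.sum_nonneg fun a _ => hμ a) hμ1
      _ = _ := by simp
  have hstep : ∀ (A : Set G) (C : Set G), Convex ℝ C →
      ε ≤ ∑ a, μ a * (if z a ∈ C then 1 else 0) → (∀ x ∈ A, x ∉ C) →
      ∃ x, Φ A + η ≤ Φ (insert x A) := by
    intro A C hC hCε hAC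
    set M := ∑ a, μ a * (if z a ∈ C then (1 : ℝ) else 0) with hM
    have hM0 : 0 < M := lt_of_lt_of_le hε hCε
    let w : ι → ℝ := fun a => μ a * (if z a ∈ C then (1 : ℝ) else 0) / M
    obtain ⟨x, S0, hx⟩ := hsel ι w (fun a => div_nonneg (mul_nonneg (hμ a) (by positivity)) hM0.le)
      (by rw [← Finset.sum_div, ← hM, div_self hM0.ne']) z
    refine ⟨x, ?_⟩
    have hw : ∀ i : J → ι, M ^ Fintype.card J * wt w i =
        wt μ i * (if ∀ j, z (i j) ∈ C then 1 else 0) := by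
      intro i
      have : wt w i = wt μ i * (if ∀ j, z (i j) ∈ C then 1 else 0) / M ^ Fintype.card J := by
        simp only [wt, w]
        rw [Finset.prod_div_distrib, Finset.prod_const, Finset.prod_mul_distrib, Finset.card_univ]
        congr 2
        simp [Finset.prod_ite_zero]
      rw [this]
      field_simp
    have h2 : η ≤ ∑ i : J → ι, wt μ i * (if (∀ j, z (i j) ∈ C) ∧
        x ∈ convexHull ℝ ((z ∘ i) '' S0) then 1 else 0) := by
      calc η ≤ M ^ Fintype.card J * c0 := by
            rw [hη, mul_comm]
            gcongr
        _ ≤ M ^ Fintype.card J * ∑ i : J → ι, wt w i *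
              (if x ∈ convexHull ℝ ((z ∘ i) '' S0) then 1 else 0) := by gcongr
        _ = _ := by
            rw [Finset.mul_sum]
            refine Finset.sum_congr rfl fun i _ => ?_
            rw [← mul_assoc, hw, ite_and]
            split_ifs <;> simp
    have h3 : ∑ S : Set J, ∑ i : J → ι, wt μ i * (if S = S0 ∧ (∀ j, z (i j) ∈ C) ∧
        x ∈ convexHull ℝ ((z ∘ i) '' S) then (1 : ℝ) else 0) =
        ∑ i : J → ι, wt μ i * (if (∀ j, z (i j) ∈ C) ∧
        x ∈ convexHull ℝ ((z ∘ i) '' S0) then 1 else 0) := by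
      rw [Finset.sum_eq_single S0]
      · simp
      · intro S _ hS
        simp [hS]
      · simp
    have h4 : Φ A + ∑ S : Set J, ∑ i : J → ι, wt μ i * (if S = S0 ∧ (∀ j, z (i j) ∈ C) ∧
        x ∈ convexHull ℝ ((z ∘ i) '' S) then (1 : ℝ) else 0) ≤ Φ (insert x A) := by
      simp only [Φ]
      rw [← Finset.sum_add_distrib]
      refine Finset.sum_le_sum fun S _ => ?_
      rw [← Finset.sum_add_distrib]
      refine Finset.sum_le_sum fun i _ => ?_
      rw [← mul_add]
      refine mul_le_mul_of_nonneg_left ?_ (wt_nonneg hμ i)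
      by_cases hA : ∃ x ∈ A, x ∈ convexHull ℝ ((z ∘ i) '' S)
      · obtain ⟨y, hyA, hy⟩ := hA
        have hne : ¬ (S = S0 ∧ (∀ j, z (i j) ∈ C) ∧ x ∈ convexHull ℝ ((z ∘ i) '' S)) := by
          rintro ⟨_, hall, _⟩
          refine hAC y hyA (convexHull_min ?_ hC hy)
          rintro _ ⟨j, _, rfl⟩
          exact hall j
        rw [if_pos ⟨y, hyA, hy⟩, if_neg hne, if_pos ⟨y, Set.mem_insert_of_mem _ hyA, hy⟩]
        norm_num
      · rw [if_neg hA, zero_add]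
        by_cases hB : S = S0 ∧ (∀ j, z (i j) ∈ C) ∧ x ∈ convexHull ℝ ((z ∘ i) '' S)
        · rw [if_pos hB, if_pos ⟨x, Set.mem_insert _ _, hB.2.2⟩]
        · rw [if_neg hB]
          positivity
    linarith
  have hind : ∀ m : ℕ, (∃ N : Fin (m + 1) → G, ∀ C : Set G, Convex ℝ C →
      ε ≤ ∑ a, μ a * (if z a ∈ C then 1 else 0) → ∃ j, N j ∈ C) ∨
      ∃ N : Fin (m + 1) → G, m * η ≤ Φ (Set.range N) := by
    intro m
    induction m with
    | zero =>
      refine Or.inr ⟨fun _ => 0, ?_⟩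
      simp only [Nat.cast_zero, zero_mul, Φ]
      exact Finset.sum_nonneg fun S _ => Finset.sum_nonneg fun i _ =>
        mul_nonneg (wt_nonneg hμ i) (by positivity)
    | succ m ih =>
      rcases ih with ⟨N, hN⟩ | ⟨N, hN⟩
      · refine Or.inl ⟨Fin.cons 0 N, fun C hC hCε => ?_⟩
        obtain ⟨j, hj⟩ := hN C hC hCε
        exact ⟨j.succ, by simpa using hj⟩
      · by_cases hgood : ∀ C : Set G, Convex ℝ C →
          ε ≤ ∑ a, μ a * (if z a ∈ C then 1 else 0) → ∃ j, N j ∈ C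
        · refine Or.inl ⟨Fin.cons 0 N, fun C hC hCε => ?_⟩
          obtain ⟨j, hj⟩ := hgood C hC hCε
          exact ⟨j.succ, by simpa using hj⟩
        · push Not at hgood
          obtain ⟨C, hC, hCε, hNC⟩ := hgood
          obtain ⟨x, hx⟩ := hstep (Set.range N) C hC hCε (by rintro _ ⟨j, rfl⟩; exact hNC j)
          refine Or.inr ⟨Fin.cons x N, ?_⟩
          rw [Fin.range_cons]
          push_cast
          linarith
  rcases hind m with h | ⟨N, hN⟩
  · exact h
  · have := hΦ (Set.range N)
    linarith

open Classical in
/-- colored fractional Helly -/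
lemma frac_helly {D : ℕ} (hD : Module.finrank ℝ G = D) {V ι J : Type} [Fintype V] [Fintype J] [Fintype ι]
    (K : V → ι → Set G) (hc : ∀ v a, IsClosed (K v a)) (hK : ∀ v a, Convex ℝ (K v a))
    (h : ∀ i : J → ι, ∃ v, ∃ g : Fin (D + 1) ↪ J, (⋂ j, K v (i (g j))).Nonempty)
    (w : ι → ℝ) (hw : ∀ a, 0 ≤ w a) (h1 : ∑ a, w a = 1) :
    ∃ v x, 1 ≤ (Fintype.card (V × (Fin (D + 1) ↪ J) × Fin (D + 1)) : ℝ) *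
      ∑ a, w a * (if x ∈ K v a then 1 else 0) := by
  obtain ⟨⟨v, g, k⟩, i, hi⟩ := pin (T := V × (Fin (D + 1) ↪ J) × Fin (D + 1)) hw h1
    (fun t => {t.2.1 t.2.2})
    (fun t i => mn (⋂ j ∈ {j | j ≠ t.2.2}, K t.1 (i (t.2.1 j))) ∈ K t.1 (i (t.2.1 t.2.2))) (by
    intro i
    obtain ⟨v, g, hg⟩ := h i
    obtain ⟨k, hk⟩ := mn_lemma hD (fun j => K v (i (g j))) (fun j => hc _ _) (fun j => hK _ _) hg
    exact ⟨⟨v, g, k⟩, hk⟩)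
  refine ⟨v, mn (⋂ j ∈ {j | j ≠ k}, K v (i (g j))), ?_⟩
  have key : ∀ i' : J → ι, mn (⋂ j ∈ {j | j ≠ k},
      
        K v (@Set.piecewise J (fun _ => ι) {g k} i' i (fun _ => Classical.propDecidable _) (g j))) = mn (⋂ j ∈ {j | j ≠ k}, K v (i (g j))) := by
    intro i'
    congr 1
    refine Set.iInter₂_congr fun j hj => ?_
    have hj' : j ≠ k := hj
    have : g j ∉ ({g k} : Set (J)) := by simpa using hj'
    simp only [Set.piecewise]
    rw [if_neg this]
  have key2 : ∀ i' : J → ι, @Set.piecewise J (fun _ => ι) {g k} i' i (fun _ => Classical.propDecidable _) (g k) = i' (g k) := by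
    intro i'
    simp
  simp only [key, key2] at hi
  rwa [wt_marginal h1 (g k) (fun a => if mn (⋂ j ∈ {j | j ≠ k}, K v (i (g j))) ∈ K v a
    then (1 : ℝ) else 0)] at hi

/-- LP duality -/
lemma duality {X ι : Type} [Fintype ι] [Nonempty ι] (M : X → ι → ℝ)
    (hM : ∀ x a, M x a = 0 ∨ M x a = 1) (β : ℝ)
    (h : ∀ w : ι → ℝ, (∀ a, 0 ≤ w a) → ∑ a, w a = 1 → ∃ x, β ≤ ∑ a, w a * M x a) :
    ∃ (κ : Type) (_ : Fintype κ) (μ : κ → ℝ) (x : κ → X), (∀ s, 0 ≤ μ s) ∧ ∑ s, μ s = 1 ∧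
      ∀ a, β ≤ ∑ s, μ s * M (x s) a := by
  classical
  have hfin : (Set.range M).Finite := by
    refine Set.Finite.subset (Set.Finite.pi (t := fun _ : ι => ({0, 1} : Set ℝ))
      fun _ => Set.toFinite _) ?_
    rintro _ ⟨x, rfl⟩ a _
    simpa using hM x a
  by_cases hdis : Disjoint (convexHull ℝ (Set.range M)) {y | ∀ a, β ≤ y a}
  · exfalso
    obtain ⟨f, u, v, hf1, huv, hf2⟩ := geometric_hahn_banach_compact_closed
      (convex_convexHull ℝ _) (hfin.isCompact_convexHull ℝ) (by
        intro x hx y hy s t hs ht hst a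
        have h1 := hx a
        have h2 := hy a
        simp only [Pi.add_apply, Pi.smul_apply, smul_eq_mul]
        calc β = s * β + t * β := by rw [← add_mul, hst, one_mul]
          _ ≤ _ := by gcongr) (by
        simp only [Set.ofPred_forall]
        exact isClosed_iInter fun a => isClosed_le continuous_const (continuous_apply a)) hdis
    let w : ι → ℝ := fun a => f (Pi.single a 1)
    have hfw : ∀ y : ι → ℝ, f y = ∑ a, w a * y a := by
      intro y
      conv_lhs => rw [pi_eq_sum_univ' y]
      simp [w, map_sum, mul_comm]
    have hw : ∀ a, 0 ≤ w a := by
      intro a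
      by_contra! hneg
      have hb := hf2 (fun _ => β) (fun _ => le_rfl)
      set t := (f (fun _ => β) - v) / (- w a) with ht
      have ht0 : 0 ≤ t := div_nonneg (by linarith) (by linarith)
      have := hf2 ((fun _ => β) + t • Pi.single a 1) (by
        intro b
        simp only [Pi.add_apply, Pi.smul_apply, smul_eq_mul]
        have : (0 : ℝ) ≤ (Pi.single a 1 : ι → ℝ) b := by
          by_cases hb : b = a
          · subst hb; simp
          · simp [hb]
        have := mul_nonneg ht0 this
        linarith)
      rw [map_add, map_smul] at this
      have e : t * w a = - (f (fun _ => β) - v) := by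
        have : w a ≠ 0 := hneg.ne
        rw [ht]; field_simp
      have e2 : t • f (Pi.single a 1) = t * w a := rfl
      rw [e2, e] at this
      linarith
    have hW0 : 0 ≤ ∑ a, w a := Finset.sum_nonneg fun a _ => hw a
    have hfb := hf2 (fun _ => β) (fun _ => le_rfl)
    rw [hfw, ← Finset.sum_mul] at hfb
    rcases hW0.eq_or_lt with hW | hW
    · obtain ⟨a0⟩ := (inferInstance : Nonempty ι)
      obtain ⟨x, _⟩ := h (Pi.single a0 1) (by
        intro b
        by_cases hb : b = a0
        · subst hb; simp
        · simp [hb]) (by simp)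
      have h0 : ∀ a, w a = 0 := fun a =>
        (Finset.sum_eq_zero_iff_of_nonneg fun a _ => hw a).1 hW.symm a (Finset.mem_univ a)
      have := hf1 (M x) (subset_convexHull ℝ _ ⟨x, rfl⟩)
      rw [hfw] at this
      simp only [h0, zero_mul, Finset.sum_const_zero] at this hfb
      linarith
    · obtain ⟨x, hx⟩ := h (fun a => w a / ∑ a, w a) (fun a => div_nonneg (hw a) hW0)
        (by rw [← Finset.sum_div, div_self hW.ne'])
      have := hf1 (M x) (subset_convexHull ℝ _ ⟨x, rfl⟩)
      rw [hfw] at this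
      have e : ∑ a, (w a / ∑ a, w a) * M x a = (∑ a, w a * M x a) / ∑ a, w a := by
        rw [Finset.sum_div]
        refine Finset.sum_congr rfl fun a _ => by ring
      rw [e, le_div_iff₀ hW] at hx
      linarith
  · rw [Set.not_disjoint_iff] at hdis
    obtain ⟨y, hy1, hy2⟩ := hdis
    obtain ⟨κ, _, μ, z, hμ, hμ1, hz, rfl⟩ := mem_convexHull_iff_exists_fintype.1 hy1
    choose x hx using hz
    refine ⟨κ, inferInstance, μ, x, hμ, hμ1, fun a => ?_⟩
    have := hy2 a
    simpa [Finset.sum_apply, hx] using this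

open Classical in
/-- abstract (p,q) theorem -/
lemma core (G : Type) [NormedAddCommGroup G] [InnerProductSpace ℝ G] [FiniteDimensional ℝ G]
    {D : ℕ} (hD : Module.finrank ℝ G = D) (V J : Type) [Fintype V] [Fintype J] :
    ∃ c : ℕ, 0 < c ∧ ∀ (ι : Type) [Fintype ι] [Nonempty ι] (K : V → ι → Set G),
      (∀ v a, IsClosed (K v a)) → (∀ v a, Convex ℝ (K v a)) →
      (∀ i : J → ι, ∃ v, ∃ g : Fin (D + 1) ↪ J, (⋂ j, K v (i (g j))).Nonempty) →
      ∃ N : V → Fin c → G, ∀ a, ∃ v j, N v j ∈ K v a := by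
  set B : ℝ := (Fintype.card (V × (Fin (D + 1) ↪ J) × Fin (D + 1)) : ℝ) + 1 with hB
  have hB0 : 0 < B := by positivity
  obtain ⟨c, hc0, hc⟩ := weak_net G (1 / (B * (Fintype.card V + 1))) (by positivity)
  refine ⟨c, hc0, ?_⟩
  intro ι _ _ K hcl hK h
  obtain ⟨κ, _, μ, x, hμ, hμ1, hx⟩ := duality (X := V × G)
    (fun x a => if x.2 ∈ K x.1 a then (1 : ℝ) else 0)
    (by intro x a; split_ifs <;> simp) (1 / B) (by
      intro w hw h1
      obtain ⟨v, x, hx⟩ := frac_helly hD K hcl hK h w hw h1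
      refine ⟨(v, x), ?_⟩
      rw [div_le_iff₀ hB0]
      have : 0 ≤ ∑ a, w a * (if x ∈ K v a then (1 : ℝ) else 0) :=
        Finset.sum_nonneg fun a _ => mul_nonneg (hw a) (by positivity)
      rw [hB]
      linarith)
  choose N hN using fun v : V => hc κ (fun s => μ s * (if (x s).1 = v then 1 else 0))
    (fun s => mul_nonneg (hμ s) (by positivity))
    (by
      refine le_of_le_of_eq ?_ hμ1
      refine Finset.sum_le_sum fun s _ => mul_le_of_le_one_right (hμ s) ?_
      split_ifs <;> norm_num) (fun s => (x s).2)
  refine ⟨N, fun a => ?_⟩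
  by_contra! hcon
  have h1 : ∀ v, ∑ s, μ s * (if (x s).1 = v then 1 else 0) * (if (x s).2 ∈ K v a then 1 else 0)
      < 1 / (B * (Fintype.card V + 1)) := by
    intro v
    by_contra! hge
    obtain ⟨j, hj⟩ := hN v (K v a) (hK v a) hge
    exact hcon v j hj
  have h2 : ∑ s, μ s * (if (x s).2 ∈ K (x s).1 a then (1 : ℝ) else 0) =
      ∑ v, ∑ s, μ s * (if (x s).1 = v then 1 else 0) * (if (x s).2 ∈ K v a then 1 else 0) := by
    rw [Finset.sum_comm]
    refine Finset.sum_congr rfl fun s _ => ?_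
    rw [Finset.sum_eq_single (x s).1]
    · simp
    · intro v _ hv
      simp [hv.symm]
    · simp
  have h3 := hx a
  rw [h2] at h3
  have h4 := Finset.sum_le_sum fun v (_ : v ∈ Finset.univ) => (h1 v).le
  rw [Finset.sum_const, Finset.card_univ, nsmul_eq_mul] at h4
  have h5 : (Fintype.card V : ℝ) * (1 / (B * (Fintype.card V + 1))) < 1 / B := by
    rw [mul_one_div, div_lt_div_iff₀ (by positivity) hB0]
    nlinarith
  linarith

end geom

lemma param {d : ℕ} (hd : 0 < d) (v : EuclideanSpace ℝ (Fin d)) (hv : ‖v‖ = 1) (t : ℝ) :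
    ∃ L : EuclideanSpace ℝ (Fin (2 * d - 1)) →ᵃ[ℝ]
        (EuclideanSpace ℝ (Fin d) × EuclideanSpace ℝ (Fin d)),
      (∀ z, inner ℝ v ((L z).1 - (L z).2) = t) ∧
      ∀ x y, inner ℝ v (x - y) = t → ∃ z, L z = (x, y) := by
  let E := EuclideanSpace ℝ (Fin d)
  let φ : E × E →ₗ[ℝ] ℝ := (innerₛₗ ℝ v).comp (LinearMap.fst ℝ E E - LinearMap.snd ℝ E E)
  have hφ : ∀ z : E × E, φ z = inner ℝ v (z.1 - z.2) := fun z => by simp [φ]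
  have hvv : inner ℝ v v = (1 : ℝ) := by rw [real_inner_self_eq_norm_sq, hv, one_pow]
  have hφ0 : φ ≠ 0 := by
    intro h
    have h1 := hφ (v, 0)
    rw [h] at h1
    simp [hv] at h1
  have hk := Module.Dual.finrank_ker_add_one_of_ne_zero hφ0
  have hdim : Module.finrank ℝ (E × E) = 2 * d := by
    rw [Module.finrank_prod]
    simp [E]
    ring
  rw [hdim] at hk
  let e : EuclideanSpace ℝ (Fin (2 * d - 1)) ≃ₗ[ℝ] LinearMap.ker φ :=
    LinearEquiv.ofFinrankEq _ _ (by
      rw [finrank_euclideanSpace_fin]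
      omega)
  let z0 : E × E := (t • v, 0)
  have hz0 : φ z0 = t := by rw [hφ]; simp [z0, inner_smul_right, hv]
  refine ⟨((LinearMap.ker φ).subtype.comp e.toLinearMap).toAffineMap + AffineMap.const ℝ _ z0, ?_, ?_⟩
  · intro z
    rw [← hφ]
    simp only [AffineMap.coe_add, Pi.add_apply, LinearMap.coe_toAffineMap, LinearMap.comp_apply,
      AffineMap.const_apply, map_add, hz0]
    have : φ ((LinearMap.ker φ).subtype (e.toLinearMap z)) = 0 := (e z).2
    rw [this, zero_add]
  · intro x y hxy
    have hm : ((x, y) : E × E) - z0 ∈ LinearMap.ker φ := by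
      rw [LinearMap.mem_ker, map_sub, hz0, hφ, hxy, sub_self]
    refine ⟨e.symm ⟨_, hm⟩, ?_⟩
    simp

lemma dir_net (d : ℕ) (δ : ℝ) (hδ0 : 0 < δ) (hδ1 : δ < 1) :
    ∃ N : Finset (EuclideanSpace ℝ (Fin d)), (∀ v ∈ N, ‖v‖ = 1) ∧
      ∀ u : EuclideanSpace ℝ (Fin d), 1 - δ / 2 < ‖u‖ → ∃ v ∈ N, 1 - δ ≤ inner ℝ v u := by
  have hr0 : 0 < 1 - δ / 2 := by linarith
  have hr : (1 - δ) / (1 - δ / 2) < 1 := by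
    rw [div_lt_one hr0]; linarith
  obtain ⟨N, hN1, hN2⟩ := (isCompact_sphere (0 : EuclideanSpace ℝ (Fin d)) 1).elim_nhds_subcover
    (fun v => {u | (1 - δ) / (1 - δ / 2) < inner ℝ v u}) (by
      intro v hv
      have hv' : ‖v‖ = 1 := by simpa using hv
      refine (isOpen_lt continuous_const (by fun_prop)).mem_nhds ?_
      change _ < inner ℝ v v
      rw [real_inner_self_eq_norm_sq, hv', one_pow]
      exact hr)
  refine ⟨N, fun v hv => by simpa using hN1 v hv, fun u hu => ?_⟩
  have hu0 : 0 < ‖u‖ := hr0.trans hu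
  have hm : (‖u‖⁻¹ • u) ∈ Metric.sphere (0 : EuclideanSpace ℝ (Fin d)) 1 := by
    simp [norm_smul, hu0.ne']
  obtain ⟨v, hv, hvu⟩ := Set.mem_iUnion₂.1 (hN2 hm)
  refine ⟨v, hv, ?_⟩
  have hvu' : (1 - δ) / (1 - δ / 2) < inner ℝ v (‖u‖⁻¹ • u) := hvu
  rw [inner_smul_right, div_lt_iff₀ hr0, inv_mul_eq_div, div_mul_eq_mul_div, lt_div_iff₀ hu0] at hvu'
  have h1 : (1 - δ) * (1 - δ / 2) ≤ (1 - δ) * ‖u‖ := by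
    apply mul_le_mul_of_nonneg_left hu.le; linarith
  nlinarith

lemma exists_far {d : ℕ} {S : Set (EuclideanSpace ℝ (Fin d))} (h : 1 ≤ Metric.diam S) {r : ℝ}
    (hr0 : 0 ≤ r) (hr : r < 1) : ∃ x ∈ S, ∃ y ∈ S, r < ‖x - y‖ := by
  by_contra! hc
  have : Metric.diam S ≤ r := Metric.diam_le_of_forall_dist_le hr0 fun x hx y hy => by
    rw [dist_eq_norm]; exact hc x hx y hy
  linarith

lemma embed_of_card {J : Type} (s : Finset J) (m : ℕ) (h : m ≤ s.card) :
    ∃ g : Fin m ↪ J, ∀ j, g j ∈ s := by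
  have : Nonempty (Fin m ↪ s) := Function.Embedding.nonempty_of_card_le (by simpa using h)
  obtain ⟨g⟩ := this
  exact ⟨g.trans (Function.Embedding.subtype _), fun j => (g j).2⟩

/-- Any `p * q` tuple of sets has `2 * d` indices with a common far pair. -/
lemma tuple_far {d p q : ℕ} (hd : 0 < d) (hq : 2 * d ≤ q) (hpq : q ≤ p) {r : ℝ} (hr0 : 0 ≤ r)
    (hr : r < 1) (F : Finset (Set (EuclideanSpace ℝ (Fin d))))
    (hF : ∀ A ∈ F, 1 ≤ Metric.diam A)
    (h : ∀ P ⊆ F, P.card = p → ∃ Q ⊆ P, Q.card = q ∧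
          1 ≤ Metric.diam (⋂₀ (Q : Set (Set (EuclideanSpace ℝ (Fin d))))))
    (i : Fin (p * q) → F) :
    ∃ g : Fin (2 * d - 1 + 1) ↪ Fin (p * q), ∃ x y, r < ‖x - y‖ ∧
      ∀ j, x ∈ (i (g j)).1 ∧ y ∈ (i (g j)).1 := by
  classical
  have e : 2 * d - 1 + 1 = 2 * d := by omega
  rw [e]
  let I : Finset (Set (EuclideanSpace ℝ (Fin d))) := Finset.univ.image fun j => (i j).1
  have hIF : I ⊆ F := by
    intro A hA
    obtain ⟨j, _, rfl⟩ := Finset.mem_image.1 hA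
    exact (i j).2
  by_cases hc : p ≤ I.card
  · obtain ⟨P, hPI, hP⟩ := Finset.exists_subset_card_eq hc
    obtain ⟨Q, hQP, hQ, hdiam⟩ := h P (hPI.trans hIF) hP
    obtain ⟨x, hx, y, hy, hxy⟩ := exists_far hdiam hr0 hr
    obtain ⟨g, hg⟩ := embed_of_card Q (2 * d) (by omega)
    have hpre : ∀ j, ∃ k, (i k).1 = g j := by
      intro j
      obtain ⟨k, _, hk⟩ := Finset.mem_image.1 (hPI (hQP (hg j)))
      exact ⟨k, hk⟩
    choose k hk using hpre
    refine ⟨⟨k, fun a b hab => g.injective ?_⟩, x, y, hxy, fun j => ?_⟩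
    · rw [← hk, ← hk, hab]
    · change x ∈ (i (k j)).1 ∧ y ∈ (i (k j)).1
      rw [hk]
      exact ⟨hx _ (hg j), hy _ (hg j)⟩
  · have hpq0 : 0 < p * q := Nat.mul_pos (by omega) (by omega)
    obtain ⟨A, hA, hfib⟩ := Finset.exists_le_card_fiber_of_mul_le_card_of_maps_to
      (s := (Finset.univ : Finset (Fin (p * q)))) (t := I) (f := fun j => (i j).1) (n := q)
      (fun j hj => Finset.mem_image_of_mem _ hj)
      ⟨(i ⟨0, hpq0⟩).1, Finset.mem_image_of_mem _ (Finset.mem_univ _)⟩ (by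
        rw [Finset.card_univ, Fintype.card_fin]
        exact Nat.mul_le_mul_right _ (by omega))
    obtain ⟨x, hx, y, hy, hxy⟩ := exists_far (hF A (hIF hA)) hr0 hr
    obtain ⟨g, hg⟩ := embed_of_card _ (2 * d) (hq.trans hfib)
    refine ⟨g, x, y, hxy, fun j => ?_⟩
    have : (i (g j)).1 = A := by simpa using hg j
    rw [this]
    exact ⟨hx, hy⟩

end PQDiam

/-- **(p,q) theorem for diameter.**  For positive integers `p ≥ q ≥ 2d` and `0 < δ < 1`,
there is a `c = c(p,q,d,δ)` such that for any finite family `𝓕` of at least `p` compact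
convex sets in `ℝ^d`, each of diameter at least one, if among every `p` sets of `𝓕` there
are `q` whose intersection has diameter at least one, then there exist `c` convex sets,
each of diameter at least `1 - δ`, such that every set of `𝓕` contains one of them. -/
theorem pq_theorem_for_diameter (d p q : ℕ) (hd : 0 < d) (hq : 2 * d ≤ q) (hpq : q ≤ p)
    (δ : ℝ) (hδ0 : 0 < δ) (hδ1 : δ < 1) :
    ∃ c : ℕ, 0 < c ∧
      ∀ F : Finset (Set (EuclideanSpace ℝ (Fin d))),
        p ≤ F.card →
        (∀ A ∈ F, IsCompact A ∧ Convex ℝ A ∧ 1 ≤ Metric.diam A) →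
        (∀ P ⊆ F, P.card = p → ∃ Q ⊆ P, Q.card = q ∧
          1 ≤ Metric.diam (⋂₀ (Q : Set (Set (EuclideanSpace ℝ (Fin d)))))) →
        ∃ K : Fin c → Set (EuclideanSpace ℝ (Fin d)),
          (∀ i, Convex ℝ (K i) ∧ 1 - δ ≤ Metric.diam (K i)) ∧
          ∀ A ∈ F, ∃ i, K i ⊆ A := by
  classical
  obtain ⟨N, hN1, hN2⟩ := PQDiam.dir_net d δ hδ0 hδ1
  choose L hL1 hL2 using fun v : N => PQDiam.param hd v.1 (hN1 v.1 v.2) (1 - δ)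
  obtain ⟨c, hc0, hc⟩ := PQDiam.core (EuclideanSpace ℝ (Fin (2 * d - 1))) (D := 2 * d - 1)
    (by simp) N (Fin (p * q))
  by_cases hNe : Nonempty N
  swap
  · refine ⟨1, one_pos, fun F hFp hF h => ?_⟩
    exfalso
    obtain ⟨A, hA⟩ : F.Nonempty := Finset.card_pos.1 (by omega)
    obtain ⟨x, hx, y, hy, hxy⟩ := PQDiam.exists_far (hF A hA).2.2 (r := 1 - δ / 2)
      (by linarith) (by linarith)
    obtain ⟨v, hv, _⟩ := hN2 (x - y) hxy
    exact hNe ⟨⟨v, hv⟩⟩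
  refine ⟨Fintype.card (N × Fin c), ?_, fun F hFp hF h => ?_⟩
  · have : Nonempty (Fin c) := ⟨⟨0, hc0⟩⟩
    exact Fintype.card_pos
  have hFn : F.Nonempty := Finset.card_pos.1 (by omega)
  have : Nonempty F := hFn.to_subtype
  have hcont : ∀ v, Continuous (L v) := fun v => (L v).continuous_of_finiteDimensional
  obtain ⟨M, hM⟩ := hc F (fun v A => L v ⁻¹' (A.1 ×ˢ A.1))
    (fun v A => ((hF A.1 A.2).1.isClosed.prod (hF A.1 A.2).1.isClosed).preimage (hcont v))
    (fun v A => ((hF A.1 A.2).2.1.prod (hF A.1 A.2).2.1).affine_preimage (L v)) (by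
      intro i
      obtain ⟨g, x, y, hxy, hg⟩ := PQDiam.tuple_far hd hq hpq (r := 1 - δ / 2) (by linarith)
        (by linarith) F (fun A hA => (hF A hA).2.2) h i
      obtain ⟨v, hv, hvu⟩ := hN2 (x - y) hxy
      set s := inner ℝ v (x - y) with hs
      have hs0 : 0 < s := by linarith
      have ht0 : 0 ≤ (1 - δ) / s := div_nonneg (by linarith) hs0.le
      have ht1 : (1 - δ) / s ≤ 1 := (div_le_one hs0).2 hvu
      obtain ⟨z, hz⟩ := hL2 ⟨v, hv⟩ (y + ((1 - δ) / s) • (x - y)) y (by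
        rw [add_sub_cancel_left, inner_smul_right, ← hs]
        field_simp)
      refine ⟨⟨v, hv⟩, g, z, Set.mem_iInter.2 fun j => ?_⟩
      rw [Set.mem_preimage, hz]
      refine ⟨?_, (hg j).2⟩
      exact (hF _ (i (g j)).2).2.1.add_smul_sub_mem (hg j).2 (hg j).1 ⟨ht0, ht1⟩)
  let eqv := (Fintype.equivFin (N × Fin c)).symm
  refine ⟨fun k => segment ℝ (L (eqv k).1 (M (eqv k).1 (eqv k).2)).1
    (L (eqv k).1 (M (eqv k).1 (eqv k).2)).2, fun k => ⟨convex_segment _ _, ?_⟩, fun A hA => ?_⟩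
  · set z := L (eqv k).1 (M (eqv k).1 (eqv k).2) with hz
    have h1 : inner ℝ (eqv k).1.1 (z.1 - z.2) = 1 - δ := hL1 _ _
    have h2 := real_inner_le_norm (eqv k).1.1 (z.1 - z.2)
    rw [h1, hN1 _ (eqv k).1.2, one_mul, ← dist_eq_norm] at h2
    refine h2.trans (Metric.dist_le_diam_of_mem ?_ (left_mem_segment _ _ _)
      (right_mem_segment _ _ _))
    dsimp only
    rw [← convexHull_pair]
    exact ((Set.toFinite _).isCompact_convexHull ℝ).isBounded
  · obtain ⟨v, j, hvj⟩ := hM ⟨A, hA⟩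
    refine ⟨eqv.symm (v, j), ?_⟩
    simp only [Equiv.apply_symm_apply]
    exact (hF A hA).2.1.segment_subset hvj.1 hvj.2
end

section
/- Let d be a positive integer and 0 < δ < 1. There exists a positive integer r = r(d,δ) such that: for any finite family 𝓕 of at least 2d compact convex sets in ℝ^d, if the intersection of every 2d of them has diameter at least one, then 𝓕 can be partitioned into at most r parts such that the intersection of each part has diameter at least 1 − δ. -/
section
set_option linter.unusedSectionVars false
open scoped Classical
variable {V : Type*} [NormedAddCommGroup V] [InnerProductSpace ℝ V] [FiniteDimensional ℝ V]

noncomputable def minPt (S : Set V) : V :=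
  if h : ∃ x ∈ S, ∀ y ∈ S, ‖x‖ ≤ ‖y‖ then h.choose else 0

theorem minPt_spec {S : Set V} (hS : IsClosed S) (hne : S.Nonempty) :
    minPt S ∈ S ∧ ∀ y ∈ S, ‖minPt S‖ ≤ ‖y‖ := by
  have h : ∃ x ∈ S, ∀ y ∈ S, ‖x‖ ≤ ‖y‖ := by
    obtain ⟨x, hx, hx2⟩ := hS.exists_infDist_eq_dist hne (0 : V)
    refine ⟨x, hx, fun y hy => ?_⟩
    have := Metric.infDist_le_dist_of_mem (x := (0 : V)) hy
    rw [hx2] at this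
    simpa using this
  unfold minPt
  rw [dif_pos h]
  exact h.choose_spec

theorem min_unique {S : Set V} (hS : Convex ℝ S) {x y : V} (hx : x ∈ S) (hy : y ∈ S)
    (h : ∀ z ∈ S, ‖x‖ ≤ ‖z‖) (hxy : ‖y‖ ≤ ‖x‖) : y = x := by
  have hm : (1 / 2 : ℝ) • x + (1 / 2 : ℝ) • y ∈ S :=
    hS hx hy (by norm_num) (by norm_num) (by norm_num)
  have h1 := h _ hm
  rw [← smul_add, norm_smul] at h1
  have h2 := parallelogram_law_with_norm ℝ x y
  have h3 : ‖x - y‖ = 0 := by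
    norm_num at h1
    have := norm_nonneg x
    have := norm_nonneg y
    have : ‖x - y‖ * ‖x - y‖ ≤ 0 := by nlinarith
    nlinarith [norm_nonneg (x - y)]
  rw [norm_eq_zero, sub_eq_zero] at h3
  exact h3.symm

theorem key_helly {D : ℕ} (hD : Module.finrank ℝ V = D) (S : Fin (D + 1) → Set V)
    (hc : ∀ j, IsClosed (S j)) (hv : ∀ j, Convex ℝ (S j)) (hne : (⋂ j, S j).Nonempty) :
    ∃ j, minPt (⋂ k, S (Fin.succAbove j k)) ∈ S j := by
  by_contra hcon
  push Not at hcon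
  have hcl : IsClosed (⋂ j, S j) := isClosed_iInter hc
  obtain ⟨hx, hxmin⟩ := minPt_spec hcl hne
  set x := minPt (⋂ j, S j) with hxdef
  let F : Option (Fin (D + 1)) → Set V := fun o => o.elim (Metric.ball 0 ‖x‖) S
  have hF : (⋂ i ∈ (Finset.univ : Finset (Option (Fin (D + 1)))), F i).Nonempty := by
    apply Convex.helly_theorem' (𝕜 := ℝ)
    · rintro (_ | j) _
      · exact convex_ball _ _
      · exact hv j
    · intro I _ hI
      have : ∃ o, o ∉ I := by
        by_contra hall
        push Not at hall
        have : I = Finset.univ := Finset.eq_univ_iff_forall.2 hall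
        rw [this, Finset.card_univ, hD] at hI
        simp at hI
      obtain ⟨o, ho⟩ := this
      rcases o with _ | j
      · refine ⟨x, ?_⟩
        simp only [Set.mem_iInter] at hx ⊢
        rintro (_ | k) hk
        · exact absurd hk ho
        · exact hx k
      · have hxT : x ∈ ⋂ k, S (Fin.succAbove j k) := by
          simp only [Set.mem_iInter] at hx ⊢
          exact fun k => hx _
        obtain ⟨hy, hymin⟩ := minPt_spec (isClosed_iInter fun k => hc (Fin.succAbove j k)) ⟨x, hxT⟩
        have hyj := hcon j
        set y := minPt (⋂ k, S (Fin.succAbove j k))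
        refine ⟨y, ?_⟩
        simp only [Set.mem_iInter] at hy ⊢
        rintro (_ | k) hk
        · simp only [F, Option.elim, mem_ball_zero_iff]
          by_contra hlt
          push Not at hlt
          apply hyj
          have := min_unique (convex_iInter fun k => hv (Fin.succAbove j k))
            (by simpa using hy) hxT hymin hlt
          rw [← this]
          exact Set.mem_iInter.1 hx j
        · have : k ≠ j := by rintro rfl; exact ho hk
          obtain ⟨l, rfl⟩ := Fin.exists_succAbove_eq this
          exact hy l
  obtain ⟨z, hz⟩ := hF
  simp only [Set.mem_iInter] at hz
  have h0 := hz none (Finset.mem_univ _)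
  simp only [F, Option.elim, mem_ball_zero_iff] at h0
  have := hxmin z (Set.mem_iInter.2 fun j => hz (some j) (Finset.mem_univ _))
  linarith

/-- Weighted fractional Helly. -/
theorem frac_helly {D : ℕ} (hD : Module.finrank ℝ V = D) {ι γ : Type*} [Fintype ι] [Fintype γ]
    [Nonempty γ] (w : ι → ℝ) (hw : ∀ i, 0 ≤ w i) (hw1 : ∑ i, w i = 1)
    (K : γ → ι → Set V) (hc : ∀ v i, IsClosed (K v i)) (hv : ∀ v i, Convex ℝ (K v i))
    (β : ℝ) (hβ : β ≤ ∑ f : Fin (D + 1) → ι,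
      (∏ j, w (f j)) * (if ∃ v, (⋂ j, K v (f j)).Nonempty then 1 else 0)) :
    ∃ v x, β / (Fintype.card γ * (D + 1)) ≤ ∑ i, w i * (if x ∈ K v i then 1 else 0) := by
  by_contra hcon
  push Not at hcon
  set a := β / (Fintype.card γ * (D + 1)) with ha
  let g : γ → (Fin D → ι) → V := fun v f => minPt (⋂ k, K v (f k))
  have hpt : ∀ f : Fin (D + 1) → ι,
      (∏ j, w (f j)) * (if ∃ v, (⋂ j, K v (f j)).Nonempty then (1 : ℝ) else 0) ≤
      ∑ v : γ, ∑ j : Fin (D + 1), (∏ j, w (f j)) *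
        (if g v (fun k => f (Fin.succAbove j k)) ∈ K v (f j) then 1 else 0) := by
    intro f
    have hp : 0 ≤ ∏ j, w (f j) := Finset.prod_nonneg fun j _ => hw _
    have hterm : ∀ v j, 0 ≤ (∏ j, w (f j)) *
        (if g v (fun k => f (Fin.succAbove j k)) ∈ K v (f j) then (1 : ℝ) else 0) := by
      intro v j
      apply mul_nonneg hp
      split_ifs <;> norm_num
    split_ifs with h
    · obtain ⟨v, hvn⟩ := h
      obtain ⟨j, hj⟩ := key_helly hD (fun j => K v (f j)) (fun j => hc _ _) (fun j => hv _ _) hvn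
      calc _ = (∏ j, w (f j)) *
        (if g v (fun k => f (Fin.succAbove j k)) ∈ K v (f j) then (1 : ℝ) else 0) := by
              rw [if_pos hj]
        _ ≤ ∑ j : Fin (D + 1), (∏ j, w (f j)) *
        (if g v (fun k => f (Fin.succAbove j k)) ∈ K v (f j) then 1 else 0) :=
            Finset.single_le_sum (fun j _ => hterm v j) (Finset.mem_univ j)
        _ ≤ _ := Finset.single_le_sum (f := fun v => ∑ j : Fin (D + 1), (∏ j, w (f j)) *
        (if g v (fun k => f (Fin.succAbove j k)) ∈ K v (f j) then (1 : ℝ) else 0))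
            (fun v _ => Finset.sum_nonneg fun j _ => hterm v j) (Finset.mem_univ v)
    · rw [mul_zero]
      exact Finset.sum_nonneg fun v _ => Finset.sum_nonneg fun j _ => hterm v j
  have hW : ∑ f : Fin D → ι, ∏ j, w (f j) = 1 := by
    rw [← Fintype.sum_pow, hw1, one_pow]
  have hlt : ∀ v (j : Fin (D + 1)), ∑ f : Fin (D + 1) → ι, (∏ j, w (f j)) *
        (if g v (fun k => f (Fin.succAbove j k)) ∈ K v (f j) then (1 : ℝ) else 0) < a := by
    intro v j
    rw [← (Fin.insertNthEquiv (fun _ => ι) j).sum_comp, Fintype.sum_prod_type, Finset.sum_comm]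
    calc _ = ∑ f : Fin D → ι, (∏ k, w (f k)) * ∑ i, w i * (if g v f ∈ K v i then (1 : ℝ) else 0) := by
          refine Finset.sum_congr rfl fun f _ => ?_
          rw [Finset.mul_sum]
          refine Finset.sum_congr rfl fun i _ => ?_
          rw [Fin.prod_univ_succAbove _ j]
          simp only [Fin.insertNthEquiv_apply, Fin.insertNth_apply_same,
            Fin.insertNth_apply_succAbove]
          ring
      _ < ∑ f : Fin D → ι, (∏ k, w (f k)) * a := by
          apply Finset.sum_lt_sum
          · intro f _
            exact mul_le_mul_of_nonneg_left (hcon _ _).le (Finset.prod_nonneg fun j _ => hw _)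
          · by_contra hno
            push Not at hno
            have : ∀ f : Fin D → ι, (∏ k, w (f k)) = 0 := by
              intro f
              by_contra hne
              have hpos : 0 < ∏ k, w (f k) :=
                lt_of_le_of_ne (Finset.prod_nonneg fun j _ => hw _) (Ne.symm hne)
              have := mul_lt_mul_of_pos_left (hcon v (g v f)) hpos
              linarith [hno f (Finset.mem_univ f)]
            simp [this] at hW
      _ = a := by rw [← Finset.sum_mul, hW, one_mul]
  have h2 : β < Fintype.card γ * (D + 1) * a := by
    calc β ≤ _ := hβ
      _ ≤ ∑ f : Fin (D + 1) → ι, ∑ v : γ, ∑ j : Fin (D + 1), (∏ j, w (f j)) *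
        (if g v (fun k => f (Fin.succAbove j k)) ∈ K v (f j) then 1 else 0) :=
          Finset.sum_le_sum fun f _ => hpt f
      _ = ∑ v : γ, ∑ j : Fin (D + 1), ∑ f : Fin (D + 1) → ι, (∏ j, w (f j)) *
        (if g v (fun k => f (Fin.succAbove j k)) ∈ K v (f j) then 1 else 0) := by
          rw [Finset.sum_comm]
          refine Finset.sum_congr rfl fun v _ => ?_
          rw [Finset.sum_comm]
      _ < ∑ v : γ, ∑ j : Fin (D + 1), a :=
          Finset.sum_lt_sum_of_nonempty Finset.univ_nonempty fun v _ =>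
            Finset.sum_lt_sum_of_nonempty Finset.univ_nonempty fun j _ => hlt v j
      _ = _ := by simp; ring
  have : (Fintype.card γ * (D + 1) : ℝ) ≠ 0 := by
    have : (0 : ℝ) < Fintype.card γ := by exact_mod_cast Fintype.card_pos
    positivity
  rw [ha, mul_div_cancel₀ _ this] at h2
  exact lt_irrefl _ h2

theorem weak_tverberg (k : ℕ) : ∃ (I : Type) (_ : Fintype I), ∀ y : I → V,
    ∃ (c : I → ℕ) (z : V), ∀ a < 2 ^ k, z ∈ convexHull ℝ (y '' {i | c i = a}) := by
  induction k with
  | zero =>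
    refine ⟨Unit, inferInstance, fun y => ⟨fun _ => 0, y (), fun a ha => ?_⟩⟩
    apply subset_convexHull
    refine ⟨(), ?_, rfl⟩
    simp at ha
    simp [ha]
  | succ k ih =>
    obtain ⟨I, hI, h⟩ := ih
    refine ⟨I × Fin (Module.finrank ℝ V + 2), inferInstance, fun y => ?_⟩
    have hr : ∀ i : I, ∃ (R : Set (Fin (Module.finrank ℝ V + 2))) (p : V),
        p ∈ convexHull ℝ ((fun j => y (i, j)) '' R) ∧
        p ∈ convexHull ℝ ((fun j => y (i, j)) '' Rᶜ) := by
      intro i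
      have hna : ¬ AffineIndependent ℝ (fun j => y (i, j)) := by
        rw [← finrank_vectorSpan_le_iff_not_affineIndependent ℝ _
          (n := Module.finrank ℝ V) (by simp)]
        exact Submodule.finrank_le _
      obtain ⟨R, p, hp⟩ := Convex.radon_partition hna
      exact ⟨R, p, hp.1, hp.2⟩
    choose R p hp1 hp2 using hr
    obtain ⟨c, z, hz⟩ := h p
    refine ⟨fun ij => if ij.2 ∈ R ij.1 then c ij.1 else c ij.1 + 2 ^ k, z, fun a ha => ?_⟩
    by_cases hak : a < 2 ^ k
    · refine convexHull_min ?_ (convex_convexHull ℝ _) (hz a hak)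
      rintro _ ⟨i, hi, rfl⟩
      refine convexHull_mono ?_ (hp1 i)
      rintro _ ⟨j, hj, rfl⟩
      refine ⟨(i, j), ?_, rfl⟩
      simp only [Set.mem_ofPred_eq] at hi ⊢
      rw [if_pos hj, hi]
    · have ha' : a - 2 ^ k < 2 ^ k := by rw [pow_succ] at ha; omega
      refine convexHull_min ?_ (convex_convexHull ℝ _) (hz _ ha')
      rintro _ ⟨i, hi, rfl⟩
      refine convexHull_mono ?_ (hp2 i)
      rintro _ ⟨j, hj, rfl⟩
      refine ⟨(i, j), ?_, rfl⟩
      simp only [Set.mem_ofPred_eq] at hi ⊢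
      rw [if_neg hj, hi]
      omega

theorem selection (V : Type*) [NormedAddCommGroup V] [InnerProductSpace ℝ V]
    [FiniteDimensional ℝ V] : ∃ (I : Type) (_ : Fintype I) (c : ℝ), 0 < c ∧
    ∀ (P : Type) [Fintype P] (q : P → ℝ) (x : P → V), (∀ p, 0 ≤ q p) → ∑ p, q p = 1 →
    ∃ z : V, c ≤ ∑ f : I → P, (∏ j, q (f j)) *
      (if z ∈ convexHull ℝ (Set.range (x ∘ f)) then 1 else 0) := by
  set D := Module.finrank ℝ V with hD
  obtain ⟨I, hI, h⟩ := weak_tverberg (V := V) (D + 1)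
  set M : ℝ := (Fintype.card (I → Fin (D + 1)) : ℝ) with hM
  have hMpos : 0 < M := by
    rw [hM]; exact_mod_cast Fintype.card_pos
  refine ⟨I, hI, (1 / M) / (Fintype.card Unit * (D + 1)), by positivity, ?_⟩
  intro P _ q x hq hq1
  let good : (Fin (D + 1) → I → P) → Prop := fun F =>
    ∃ _v : Unit, (⋂ j, convexHull ℝ (Set.range (x ∘ F j))).Nonempty
  let W : (Fin (D + 1) → I → P) → ℝ := fun F => ∏ a, ∏ i, q (F a i)
  let σ : (I → Fin (D + 1)) → (Fin (D + 1) → I → P) → (Fin (D + 1) → I → P) :=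
    fun c F a i => F (Equiv.swap 0 (c i) a) i
  have hσ : ∀ c, Function.Involutive (σ c) := by
    intro c F
    funext a i
    simp [σ]
  have hσW : ∀ c F, W (σ c F) = W F := by
    intro c F
    simp only [W, σ]
    rw [Finset.prod_comm, Finset.prod_comm (f := fun a i => q (F a i))]
    refine Finset.prod_congr rfl fun i _ => ?_
    exact Equiv.prod_comp (Equiv.swap 0 (c i)) (fun a => q (F a i))
  have hgood : ∀ F, ∃ c, good (σ c F) := by
    intro F
    obtain ⟨c, z, hz⟩ := h (fun i => x (F 0 i))
    refine ⟨fun i => if hc : c i < D + 1 then ⟨c i, hc⟩ else 0, (), z, ?_⟩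
    rw [Set.mem_iInter]
    intro a
    have ha : (a : ℕ) < 2 ^ (D + 1) := a.2.trans Nat.lt_two_pow_self
    refine convexHull_mono ?_ (hz a ha)
    rintro _ ⟨i, hi, rfl⟩
    refine ⟨i, ?_⟩
    simp only [Set.mem_ofPred_eq] at hi
    have haD : (a : ℕ) ≤ D := by omega
    simp [σ, hi, haD]
  have hW0 : ∀ F, 0 ≤ W F := fun F => Finset.prod_nonneg fun a _ => Finset.prod_nonneg fun i _ => hq _
  have hw1 : ∑ f : I → P, ∏ i, q (f i) = 1 := by
    rw [← Fintype.piFinset_univ, Finset.sum_prod_piFinset]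
    simp [hq1]
  have hWsum : ∑ F, W F = 1 := by
    simp only [W]
    rw [← Fintype.sum_pow (fun f : I → P => ∏ i, q (f i)), hw1, one_pow]
  have hmain : 1 / M ≤ ∑ F, W F * (if good F then 1 else 0) := by
    rw [div_le_iff₀ hMpos]
    calc (1 : ℝ) = ∑ F, W F := hWsum.symm
      _ ≤ ∑ F, ∑ c, W F * (if good (σ c F) then 1 else 0) := by
          refine Finset.sum_le_sum fun F _ => ?_
          obtain ⟨c, hc⟩ := hgood F
          calc W F = W F * (if good (σ c F) then 1 else 0) := by rw [if_pos hc, mul_one]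
            _ ≤ _ := Finset.single_le_sum
              (f := fun c => W F * (if good (σ c F) then (1 : ℝ) else 0))
              (fun c _ => mul_nonneg (hW0 F) (by split_ifs <;> norm_num)) (Finset.mem_univ c)
      _ = ∑ c : I → Fin (D + 1), ∑ F, W F * (if good F then 1 else 0) := by
          rw [Finset.sum_comm]
          refine Finset.sum_congr rfl fun c _ => ?_
          rw [← Equiv.sum_comp (Function.Involutive.toPerm (σ c) (hσ c))
            (fun F => W F * (if good F then (1 : ℝ) else 0))]
          refine Finset.sum_congr rfl fun F _ => ?_
          simp only [Function.Involutive.coe_toPerm, hσW]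
          by_cases hgc : good (σ c F) <;> simp [hgc]
      _ = _ := by
          rw [Finset.sum_const, nsmul_eq_mul, mul_comm, Finset.card_univ]
  obtain ⟨_, z, hz⟩ := frac_helly hD.symm (γ := Unit) (fun f : I → P => ∏ i, q (f i))
    (fun f => Finset.prod_nonneg fun i _ => hq _) hw1
    (fun _ f => convexHull ℝ (Set.range (x ∘ f)))
    (fun _ f => ((Set.finite_range _).isCompact_convexHull ℝ).isClosed)
    (fun _ f => convex_convexHull ℝ _) (1 / M) hmain
  exact ⟨z, hz⟩

theorem weak_net (V : Type*) [NormedAddCommGroup V] [InnerProductSpace ℝ V]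
    [FiniteDimensional ℝ V] (ε : ℝ) (hε : 0 < ε) : ∃ R : ℕ,
    ∀ (P : Type) [Fintype P] (q : P → ℝ) (x : P → V), (∀ p, 0 ≤ q p) → ∑ p, q p ≤ 1 →
    ∃ Z : Finset V, Z.card ≤ R ∧ ∀ C : Set V, Convex ℝ C →
      ε ≤ ∑ p, q p * (if x p ∈ C then 1 else 0) → ∃ z ∈ Z, z ∈ C := by
  obtain ⟨I, hI, c, hc, hsel⟩ := selection V
  set c' := c * ε ^ (Fintype.card I) with hc'
  have hc'pos : 0 < c' := by positivity
  obtain ⟨R, hR⟩ := exists_nat_gt (1 / c')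
  refine ⟨R, ?_⟩
  intro P _ q x hq hq1
  let Φ : Finset V → ℝ := fun Z => ∑ f : I → P, (∏ j, q (f j)) *
    (if ∃ z ∈ Z, z ∈ convexHull ℝ (Set.range (x ∘ f)) then 1 else 0)
  have hW0 : ∀ f : I → P, 0 ≤ ∏ j, q (f j) := fun f => Finset.prod_nonneg fun i _ => hq _
  have hΦ : ∀ Z, Φ Z ≤ 1 := by
    intro Z
    calc Φ Z ≤ ∑ f : I → P, ∏ j, q (f j) := by
          refine Finset.sum_le_sum fun f _ => ?_
          split_ifs <;> simp [hW0 f]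
      _ = (∑ p, q p) ^ Fintype.card I := by
          rw [← Fintype.piFinset_univ, Finset.sum_prod_piFinset]
          simp
      _ ≤ 1 := pow_le_one₀ (Finset.sum_nonneg fun p _ => hq p) hq1
  by_contra hcon
  push Not at hcon
  have hind : ∀ n : ℕ, n ≤ R → ∃ Z : Finset V, Z.card ≤ n ∧ n * c' ≤ Φ Z := by
    intro n
    induction n with
    | zero =>
      intro _
      refine ⟨∅, by simp, ?_⟩
      simp [Φ]
    | succ n ih =>
      intro hn
      obtain ⟨Z, hZ, hZΦ⟩ := ih (by omega)
      obtain ⟨C, hC, hCε, hCZ⟩ := hcon Z (by omega)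
      set m := ∑ p, q p * (if x p ∈ C then (1 : ℝ) else 0) with hm
      have hmpos : 0 < m := lt_of_lt_of_le hε hCε
      obtain ⟨z, hz⟩ := hsel P (fun p => q p * (if x p ∈ C then (1 : ℝ) else 0) / m) x
        (fun p => div_nonneg (mul_nonneg (hq p) (by split_ifs <;> norm_num)) hmpos.le)
        (by rw [← Finset.sum_div, ← hm, div_self hmpos.ne'])
      refine ⟨insert z Z, (Finset.card_insert_le _ _).trans (by omega), ?_⟩
      have hstep : Φ Z + ∑ f : I → P, (∏ j, (q (f j) * (if x (f j) ∈ C then (1 : ℝ) else 0))) *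
          (if z ∈ convexHull ℝ (Set.range (x ∘ f)) then 1 else 0) ≤ Φ (insert z Z) := by
        simp only [Φ]
        rw [← Finset.sum_add_distrib]
        refine Finset.sum_le_sum fun f _ => ?_
        by_cases hf : ∀ j, x (f j) ∈ C
        · have hno : ¬ ∃ z ∈ Z, z ∈ convexHull ℝ (Set.range (x ∘ f)) := by
            rintro ⟨y, hy, hy2⟩
            apply hCZ y hy
            refine convexHull_min ?_ hC hy2
            rintro _ ⟨j, rfl⟩
            exact hf j
          rw [if_neg hno]
          simp only [hf, if_true, mul_one, mul_zero, zero_add]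
          apply mul_le_mul_of_nonneg_left _ (hW0 f)
          by_cases hzf : z ∈ convexHull ℝ (Set.range (x ∘ f))
          · rw [if_pos hzf, if_pos ⟨z, by simp, hzf⟩]
          · rw [if_neg hzf]; split_ifs <;> norm_num
        · push Not at hf
          obtain ⟨j, hj⟩ := hf
          have hp0 : (∏ j, (q (f j) * (if x (f j) ∈ C then (1 : ℝ) else 0))) = 0 :=
            Finset.prod_eq_zero (Finset.mem_univ j) (by simp [hj])
          rw [hp0, zero_mul, add_zero]
          apply mul_le_mul_of_nonneg_left _ (hW0 f)
          by_cases hzf : ∃ z ∈ Z, z ∈ convexHull ℝ (Set.range (x ∘ f))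
          · obtain ⟨y, hy, hy2⟩ := hzf
            rw [if_pos ⟨y, hy, hy2⟩, if_pos ⟨y, by simp [hy], hy2⟩]
          · rw [if_neg hzf]; split_ifs <;> norm_num
      have hgain : c' ≤ ∑ f : I → P, (∏ j, (q (f j) * (if x (f j) ∈ C then (1 : ℝ) else 0))) *
          (if z ∈ convexHull ℝ (Set.range (x ∘ f)) then 1 else 0) := by
        calc c' = c * ε ^ (Fintype.card I) := hc'
          _ ≤ c * m ^ (Fintype.card I) := by gcongr
          _ ≤ _ * m ^ (Fintype.card I) := mul_le_mul_of_nonneg_right hz (by positivity)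
          _ = _ := by
            rw [Finset.sum_mul]
            refine Finset.sum_congr rfl fun f _ => ?_
            rw [Finset.prod_div_distrib, Finset.prod_const, Finset.card_univ]
            have : m ^ (Fintype.card I) ≠ 0 := (pow_pos hmpos _).ne'
            field_simp
      push_cast
      linarith
  obtain ⟨Z, -, hZ⟩ := hind R le_rfl
  rw [div_lt_iff₀ hc'pos] at hR
  linarith [hΦ Z]

theorem minimax {ι P : Type*} [Fintype ι] [Fintype P] [Nonempty P] (M : ι → P → ℝ) (α : ℝ)
    (h : ∀ w : ι → ℝ, (∀ i, 0 ≤ w i) → ∑ i, w i = 1 → ∃ p, α ≤ ∑ i, w i * M i p) :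
    ∃ q : P → ℝ, (∀ p, 0 ≤ q p) ∧ ∑ p, q p = 1 ∧ ∀ i, α ≤ ∑ p, q p * M i p := by
  by_contra hcon
  push Not at hcon
  let L : (P → ℝ) →ₗ[ℝ] (ι → ℝ) :=
    { toFun := fun q i => ∑ p, q p * M i p
      map_add' := by
        intro a b; funext i; simp [add_mul, Finset.sum_add_distrib]
      map_smul' := by
        intro a b; funext i; simp [Finset.mul_sum, mul_assoc] }
  have hLc : Continuous L := LinearMap.continuous_of_finiteDimensional L
  have hdisj : Disjoint (L '' stdSimplex ℝ P) {y : ι → ℝ | ∀ i, α ≤ y i} := by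
    rw [Set.disjoint_left]
    rintro _ ⟨q, hq, rfl⟩ hy
    obtain ⟨i, hi⟩ := hcon q hq.1 hq.2
    exact absurd (hy i) (not_le.2 hi)
  obtain ⟨f, u, v, hfu, huv, hfv⟩ := geometric_hahn_banach_compact_closed
    ((convex_stdSimplex ℝ P).linear_image L) ((isCompact_stdSimplex ℝ P).image hLc)
    (by
      intro a ha b hb s t hs ht hst i
      have h1 := mul_le_mul_of_nonneg_left (ha i) hs
      have h2 := mul_le_mul_of_nonneg_left (hb i) ht
      have h3 : α = s * α + t * α := by rw [← add_mul, hst, one_mul]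
      simp only [Pi.add_apply, Pi.smul_apply, smul_eq_mul]
      linarith)
    (by
      rw [Set.ofPred_forall]
      exact isClosed_iInter fun i => isClosed_le continuous_const (continuous_apply i)) hdisj
  let w : ι → ℝ := fun i => f (Pi.single i 1)
  have hf : ∀ y, f y = ∑ i, w i * y i := by
    intro y
    conv_lhs => rw [← Finset.univ_sum_single y]
    rw [map_sum]
    refine Finset.sum_congr rfl fun i _ => ?_
    have : (Pi.single i (y i) : ι → ℝ) = y i • Pi.single i 1 := by
      rw [← Pi.single_smul]; simp
    rw [this, map_smul, smul_eq_mul, mul_comm]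
  have hw : ∀ i, 0 ≤ w i := by
    intro i
    by_contra hneg
    push Not at hneg
    set A := f (fun _ => α) with hA
    have hAv : v < A := hfv _ (fun _ => le_rfl)
    have := hfv ((fun _ => α) + ((A - v) / (- w i)) • Pi.single i 1) (by
      intro j
      have h1 : 0 ≤ (A - v) / (- w i) := div_nonneg (by linarith) (by linarith)
      have h2 : (0 : ℝ) ≤ (Pi.single i 1 : ι → ℝ) j := by
        by_cases hij : j = i
        · subst hij; simp
        · simp [hij]
      simp only [Pi.add_apply, Pi.smul_apply, smul_eq_mul]
      nlinarith [mul_nonneg h1 h2])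
    rw [map_add, map_smul, smul_eq_mul] at this
    change v < A + (A - v) / (- w i) * w i at this
    have h3 : (A - v) / (- w i) * w i = -(A - v) := by
      have := hneg.ne
      field_simp
    rw [h3] at this
    linarith
  have hvert : ∀ p, f (fun i => M i p) < u := by
    intro p
    apply hfu
    refine ⟨Pi.single p 1, single_mem_stdSimplex ℝ p, ?_⟩
    funext i
    simp [L, Pi.single_apply]
  have hα := hfv (fun _ => α) (fun _ => le_rfl)
  rw [hf, ← Finset.sum_mul] at hα
  set S := ∑ i, w i with hS
  have hS0 : 0 ≤ S := Finset.sum_nonneg fun i _ => hw i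
  rcases hS0.eq_or_lt with h0 | hpos
  · have hz : ∀ i, w i = 0 := by
      intro i
      exact (Finset.sum_eq_zero_iff_of_nonneg (fun i _ => hw i)).1 h0.symm i (Finset.mem_univ i)
    obtain ⟨p⟩ := ‹Nonempty P›
    have := hvert p
    rw [hf] at this
    simp [hz] at this
    rw [← h0] at hα
    linarith
  · obtain ⟨p, hp⟩ := h (fun i => w i / S) (fun i => div_nonneg (hw i) hS0)
      (by rw [← Finset.sum_div, div_self hpos.ne'])
    have h1 := hvert p
    rw [hf] at h1
    have h2 : ∑ i, w i / S * M i p = (∑ i, w i * M i p) / S := by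
      rw [Finset.sum_div]
      refine Finset.sum_congr rfl fun i _ => by ring
    rw [h2, le_div_iff₀ hpos] at hp
    linarith

theorem color_pq (V : Type*) [NormedAddCommGroup V] [InnerProductSpace ℝ V]
    [FiniteDimensional ℝ V] {D : ℕ} (hD : Module.finrank ℝ V = D) (γ : Type) [Fintype γ]
    [Nonempty γ] : ∃ R : ℕ, ∀ (ι : Type) [Fintype ι] (K : γ → ι → Set V),
      (∀ v i, IsClosed (K v i)) → (∀ v i, Convex ℝ (K v i)) →
      (∀ f : Fin (D + 1) → ι, ∃ v, (⋂ j, K v (f j)).Nonempty) →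
      ∃ Z : Finset (γ × V), Z.card ≤ R ∧ ∀ i, ∃ z ∈ Z, z.2 ∈ K z.1 i := by
  have hγ : (0 : ℝ) < Fintype.card γ := by exact_mod_cast Fintype.card_pos
  set α : ℝ := 1 / (Fintype.card γ * (D + 1)) with hα
  have hαpos : 0 < α := by positivity
  obtain ⟨R, hR⟩ := weak_net V (α / Fintype.card γ) (by positivity)
  refine ⟨Fintype.card γ * R, ?_⟩
  intro ι _ K hc hv hK
  let P := {S : Finset ι // ∃ z : γ × V, ∀ i ∈ S, z.2 ∈ K z.1 i}
  have : Nonempty P := ⟨⟨∅, Classical.arbitrary _, by simp⟩⟩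
  obtain ⟨q, hq0, hq1, hq⟩ := minimax (P := P) (fun (i : ι) p => if i ∈ p.1 then (1 : ℝ) else 0) α
    (by
      intro w hw hw1
      obtain ⟨v, x, hx⟩ := frac_helly hD w hw hw1 K hc hv 1 (by
        simp only [hK, if_true, mul_one]
        rw [← Fintype.sum_pow, hw1, one_pow])
      refine ⟨⟨Finset.univ.filter fun i => x ∈ K v i, (v, x), by simp⟩, ?_⟩
      calc α ≤ _ := hx
        _ = _ := by simp)
  choose y hy using fun p : P => p.2
  have hnet : ∀ v : γ, ∃ Z : Finset V, Z.card ≤ R ∧ ∀ C : Set V, Convex ℝ C →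
      α / Fintype.card γ ≤ ∑ p, (q p * if (y p).1 = v then 1 else 0) *
        (if (y p).2 ∈ C then 1 else 0) → ∃ z ∈ Z, z ∈ C := by
    intro v
    refine hR P (fun p => q p * if (y p).1 = v then 1 else 0) (fun p => (y p).2) ?_ ?_
    · intro p
      exact mul_nonneg (hq0 p) (by split_ifs <;> norm_num)
    · refine le_trans (Finset.sum_le_sum fun p _ => ?_) hq1.le
      by_cases hyv : (y p).1 = v <;> simp [hyv, hq0 p]
  choose Z hZ hZ2 using hnet
  refine ⟨Finset.univ.biUnion fun v => (Z v).image fun z => (v, z), ?_, ?_⟩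
  · refine (Finset.card_biUnion_le_card_mul _ _ R fun v _ => ?_).trans (by simp)
    exact Finset.card_image_le.trans (hZ v)
  · intro i
    have : ∃ v, α / Fintype.card γ ≤ ∑ p, (q p * if (y p).1 = v then 1 else 0) *
        (if (y p).2 ∈ K v i then 1 else 0) := by
      by_contra hno
      push Not at hno
      have h1 : ∑ v : γ, ∑ p, (q p * if (y p).1 = v then 1 else 0) *
        (if (y p).2 ∈ K v i then (1 : ℝ) else 0) < ∑ v : γ, α / Fintype.card γ :=
        Finset.sum_lt_sum_of_nonempty Finset.univ_nonempty fun v _ => hno v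
      rw [Finset.sum_const, nsmul_eq_mul, Finset.card_univ, mul_div_cancel₀ _ hγ.ne',
        Finset.sum_comm] at h1
      refine absurd h1 (not_lt.2 ((hq i).trans (Finset.sum_le_sum fun p _ => ?_)))
      have h2 : ∑ v : γ, (q p * if (y p).1 = v then 1 else 0) *
        (if (y p).2 ∈ K v i then (1 : ℝ) else 0) =
          q p * (if (y p).2 ∈ K (y p).1 i then (1 : ℝ) else 0) := by
        rw [Finset.sum_eq_single (y p).1]
        · simp
        · intro b _ hb
          simp [hb.symm]
        · simp
      rw [h2]
      apply mul_le_mul_of_nonneg_left _ (hq0 p)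
      by_cases hip : i ∈ p.1
      · rw [if_pos hip, if_pos (hy p i hip)]
      · rw [if_neg hip]; split_ifs <;> norm_num
    obtain ⟨v, hvv⟩ := this
    obtain ⟨z, hz, hzK⟩ := hZ2 v (K v i) (hv v i) hvv
    exact ⟨(v, z), by simp [hz], hzK⟩

theorem hyper_param {E : Type*} [NormedAddCommGroup E] [InnerProductSpace ℝ E]
    [FiniteDimensional ℝ E] {D : ℕ} (hE : 2 * Module.finrank ℝ E = D + 1) (v : E) (hv : ‖v‖ = 1)
    (t : ℝ) : ∃ φ : EuclideanSpace ℝ (Fin D) →ᵃ[ℝ] E × E,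
      ∀ ab : E × E, ab ∈ Set.range φ ↔ inner ℝ v (ab.1 - ab.2) = t := by
  let ℓ : (E × E) →ₗ[ℝ] ℝ :=
    (innerₛₗ ℝ v).comp (LinearMap.fst ℝ E E - LinearMap.snd ℝ E E)
  have hℓ : ∀ ab : E × E, ℓ ab = inner ℝ v (ab.1 - ab.2) := fun ab => by simp [ℓ]
  have hvv : (inner ℝ v v : ℝ) = 1 := by rw [real_inner_self_eq_norm_sq, hv]; norm_num
  have hsurj : LinearMap.range ℓ = ⊤ := by
    rw [LinearMap.range_eq_top]
    intro s
    refine ⟨(s • v, 0), ?_⟩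
    rw [hℓ]
    simp [inner_smul_right, hv]
  have hker : Module.finrank ℝ (LinearMap.ker ℓ) = D := by
    have h1 := LinearMap.finrank_range_add_finrank_ker ℓ
    rw [hsurj, finrank_top, Module.finrank_self, Module.finrank_prod] at h1
    omega
  let e : EuclideanSpace ℝ (Fin D) ≃ₗ[ℝ] LinearMap.ker ℓ :=
    LinearEquiv.ofFinrankEq _ _ (by simp [hker])
  let L : EuclideanSpace ℝ (Fin D) →ₗ[ℝ] E × E := (LinearMap.ker ℓ).subtype.comp e.toLinearMap
  let φ : EuclideanSpace ℝ (Fin D) →ᵃ[ℝ] E × E :=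
    L.toAffineMap + AffineMap.const ℝ _ ((t • v, 0) : E × E)
  have hφ : ∀ x, φ x = (e x : E × E) + (t • v, 0) := fun x => rfl
  refine ⟨φ, fun ab => ⟨?_, fun h => ?_⟩⟩
  · rintro ⟨x, rfl⟩
    rw [← hℓ, hφ, map_add, LinearMap.mem_ker.1 (e x).2, hℓ]
    simp [inner_smul_right, hv]
  · have hm : ab - (t • v, 0) ∈ LinearMap.ker ℓ := by
      rw [LinearMap.mem_ker, map_sub, hℓ, hℓ, h]
      simp [inner_smul_right, hv]
    refine ⟨e.symm ⟨_, hm⟩, ?_⟩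
    rw [hφ]
    simp

theorem exists_net (E : Type) [NormedAddCommGroup E] [InnerProductSpace ℝ E]
    [FiniteDimensional ℝ E] (η : ℝ) (hη : 0 < η) : ∃ T : Finset E, (∀ v ∈ T, ‖v‖ = 1) ∧
      ∀ x : E, x ≠ 0 → ∃ v ∈ T, (1 - η) * ‖x‖ ≤ inner ℝ v x := by
  obtain ⟨t, hts, htf, hcov⟩ :=
    (isCompact_sphere (0 : E) 1).finite_cover_balls hη
  refine ⟨htf.toFinset, fun v hv => by simpa using hts (htf.mem_toFinset.1 hv), fun x hx => ?_⟩
  have hxn : 0 < ‖x‖ := norm_pos_iff.2 hx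
  set u := ‖x‖⁻¹ • x with hu
  have hun : ‖u‖ = 1 := by rw [hu, norm_smul, norm_inv, norm_norm, inv_mul_cancel₀ hxn.ne']
  have := hcov (show u ∈ Metric.sphere (0 : E) 1 by simpa using hun)
  simp only [Set.mem_iUnion] at this
  obtain ⟨v, hv, huv⟩ := this
  refine ⟨v, htf.mem_toFinset.2 hv, ?_⟩
  rw [mem_ball_iff_norm] at huv
  have hxu : x = ‖x‖ • u := by rw [hu, smul_smul, mul_inv_cancel₀ hxn.ne', one_smul]
  have h1 : 1 - η ≤ inner ℝ v u := by
    have h2 : inner ℝ v u = (1 : ℝ) - inner ℝ (u - v) u := by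
      rw [inner_sub_left, real_inner_self_eq_norm_sq, hun]; ring
    have h3 := real_inner_le_norm (u - v) u
    rw [hun, mul_one] at h3
    linarith
  calc (1 - η) * ‖x‖ ≤ inner ℝ v u * ‖x‖ := by gcongr
    _ = inner ℝ v (‖x‖ • u) := by rw [inner_smul_right v u ‖x‖, mul_comm]
    _ = _ := by rw [← hxu]

theorem exists_far {X : Type*} [PseudoMetricSpace X] (S : Set X) (s t : ℝ) (ht : 0 ≤ t) (hst : t < s)
    (h : s ≤ Metric.diam S) : ∃ a ∈ S, ∃ b ∈ S, t < dist a b := by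
  by_contra hcon
  push Not at hcon
  have := Metric.diam_le_of_forall_dist_le ht hcon
  linarith

end

/-- If the intersection of every `2d` members of a finite family of compact convex sets in
`ℝ^d` has diameter at least one, then the family can be partitioned into at most `r = r(d,δ)`
parts so that the intersection of each part has diameter at least `1 - δ`. -/
theorem partition_into_parts_with_large_diameter (d : ℕ) (hd : 0 < d)
    (δ : ℝ) (hδ0 : 0 < δ) (hδ1 : δ < 1) :
    ∃ r : ℕ, 0 < r ∧
      ∀ F : Finset (Set (EuclideanSpace ℝ (Fin d))),
        2 * d ≤ F.card →
        (∀ A ∈ F, IsCompact A ∧ Convex ℝ A) →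
        (∀ G ⊆ F, G.card = 2 * d →
          1 ≤ Metric.diam (⋂₀ (G : Set (Set (EuclideanSpace ℝ (Fin d)))))) →
        ∃ (k : ℕ) (P : Fin k → Finset (Set (EuclideanSpace ℝ (Fin d)))),
          k ≤ r ∧
          (∀ i, P i ⊆ F ∧ (P i).Nonempty) ∧
          (∀ A ∈ F, ∃! i, A ∈ P i) ∧
          (∀ i, 1 - δ ≤ Metric.diam (⋂₀ (P i : Set (Set (EuclideanSpace ℝ (Fin d)))))) := by
  obtain ⟨D, hD⟩ : ∃ D, 2 * d = D + 1 := ⟨2 * d - 1, by omega⟩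
  obtain ⟨T, hT1, hT⟩ := exists_net (EuclideanSpace ℝ (Fin d)) (δ / 2) (by linarith)
  have hTne : Nonempty T := by
    have : Nonempty (Fin d) := ⟨⟨0, hd⟩⟩
    obtain ⟨x, hx⟩ := exists_ne (0 : EuclideanSpace ℝ (Fin d))
    obtain ⟨v, hv, -⟩ := hT x hx
    exact ⟨⟨v, hv⟩⟩
  have hpar := fun v : T => hyper_param (E := EuclideanSpace ℝ (Fin d)) (D := D) (by simpa using hD)
    v.1 (hT1 v.1 v.2) (1 - δ)
  choose φ hφ using hpar
  obtain ⟨R, hR⟩ := color_pq (EuclideanSpace ℝ (Fin D)) (D := D) (by simp) T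
  refine ⟨R + 1, by omega, ?_⟩
  intro F hF hFc hFd
  obtain ⟨Z, hZR, hZ⟩ := hR {A // A ∈ F} (fun v A => (φ v) ⁻¹' (A.1 ×ˢ A.1))
    (by
      intro v A
      have hc := (hFc A.1 A.2).1.isClosed
      exact (hc.prod hc).preimage (φ v).continuous_of_finiteDimensional)
    (by
      intro v A
      have hc := (hFc A.1 A.2).2
      exact (hc.prod hc).affine_preimage (φ v))
    (by
      intro f
      classical
      obtain ⟨G, hG1, hG2, hG3⟩ := Finset.exists_subsuperset_card_eq
        (s := Finset.univ.image fun j => (f j).1) (t := F) (n := 2 * d)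
        (by
          intro A hA
          obtain ⟨j, -, rfl⟩ := Finset.mem_image.1 hA
          exact (f j).2)
        (by
          refine Finset.card_image_le.trans ?_
          simp [hD])
        hF
      obtain ⟨a, ha, b, hb, hab⟩ := exists_far _ 1 (1 - δ / 2) (by linarith) (by linarith)
        (hFd G hG2 hG3)
      have hne : a - b ≠ 0 := by
        rw [sub_ne_zero]
        rintro rfl
        rw [dist_self] at hab
        linarith
      obtain ⟨v, hv, hvab⟩ := hT (a - b) hne
      rw [dist_eq_norm] at hab
      set w := inner ℝ v (a - b) with hw
      have hwδ : 1 - δ ≤ w := by nlinarith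
      have hw0 : 0 < w := by linarith
      set s := (1 - δ) / w with hs
      have hs0 : 0 ≤ s := div_nonneg (by linarith) hw0.le
      have hs1 : s ≤ 1 := by rw [hs, div_le_one hw0]; exact hwδ
      have hmem : (a, a + s • (b - a)) ∈ Set.range (φ ⟨v, hv⟩) := by
        rw [hφ]
        have : a - (a + s • (b - a)) = s • (a - b) := by
          rw [← neg_sub a b, smul_neg]; abel
        simp only [this]
        rw [inner_smul_right, ← hw, hs, div_mul_cancel₀ _ hw0.ne']
      obtain ⟨x, hx⟩ := hmem
      refine ⟨⟨v, hv⟩, x, ?_⟩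
      rw [Set.mem_iInter]
      intro j
      have hj : (f j).1 ∈ G := hG1 (Finset.mem_image_of_mem (fun j => (f j).1) (Finset.mem_univ j))
      have ha' := ha (f j).1 hj
      have hb' := hb (f j).1 hj
      rw [Set.mem_preimage, hx]
      exact ⟨ha', (hFc _ (f j).2).2.add_smul_sub_mem ha' hb' ⟨hs0, hs1⟩⟩)
  classical
  choose g hgZ hg using hZ
  let W : Finset (T × EuclideanSpace ℝ (Fin D)) := Finset.univ.image g
  have hWZ : W ⊆ Z := by
    intro z hz
    obtain ⟨A, -, rfl⟩ := Finset.mem_image.1 hz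
    exact hgZ A
  let P : Fin W.card → Finset (Set (EuclideanSpace ℝ (Fin d))) := fun i =>
    (Finset.univ.filter fun A => g A = (W.equivFin.symm i).1).image Subtype.val
  have hPmem : ∀ i A, A ∈ P i ↔ ∃ h : A ∈ F, g ⟨A, h⟩ = (W.equivFin.symm i).1 := by
    intro i A
    simp [P]
  have hPne : ∀ i, (P i).Nonempty := by
    intro i
    obtain ⟨A, -, hA⟩ := Finset.mem_image.1 (W.equivFin.symm i).2
    exact ⟨A.1, (hPmem i A.1).2 ⟨A.2, hA⟩⟩
  refine ⟨W.card, P, (Finset.card_le_card hWZ).trans (by omega), fun i => ⟨?_, hPne i⟩, ?_, ?_⟩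
  · intro A hA
    exact ((hPmem i A).1 hA).1
  · intro A hA
    have hgW : g ⟨A, hA⟩ ∈ W := Finset.mem_image_of_mem g (Finset.mem_univ _)
    refine ⟨W.equivFin ⟨_, hgW⟩, (hPmem _ _).2 ⟨hA, by simp⟩, ?_⟩
    intro i hi
    obtain ⟨_, hi⟩ := (hPmem _ _).1 hi
    rw [← W.equivFin.symm_apply_eq]
    exact Subtype.ext hi.symm
  · intro i
    set z := (W.equivFin.symm i).1 with hz
    have hab := (hφ z.1 (φ z.1 z.2)).1 ⟨z.2, rfl⟩
    set ab := φ z.1 z.2 with habdef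
    have hin : ∀ A ∈ P i, ab.1 ∈ A ∧ ab.2 ∈ A := by
      intro A hA
      obtain ⟨hAF, hgA⟩ := (hPmem _ _).1 hA
      have := hg ⟨A, hAF⟩
      rw [hgA, ← hz] at this
      exact this
    obtain ⟨A, hA⟩ := hPne i
    have hbd : Bornology.IsBounded (⋂₀ (P i : Set (Set (EuclideanSpace ℝ (Fin d))))) :=
      (hFc A ((hPmem _ _).1 hA).1).1.isBounded.subset (Set.sInter_subset_of_mem hA)
    have hd1 := Metric.dist_le_diam_of_mem hbd (x := ab.1) (y := ab.2)
      (fun A hA => (hin A hA).1) (fun A hA => (hin A hA).2)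
    have h2 := real_inner_le_norm z.1.1 (ab.1 - ab.2)
    rw [hT1 _ z.1.2, one_mul, hab, ← dist_eq_norm] at h2
    exact h2.trans hd1
end

section
/- Let S₁, S₂, …, S_{2d} be finite sets of points in ℝ^d and let x, y ∈ ℝ^d be two points such that {x, y} ⊆ conv(S_i) for every 1 ≤ i ≤ 2d. Then there is a choice of points s₁ ∈ S₁, s₂ ∈ S₂, …, s_{2d} ∈ S_{2d} such that {x, y} ⊆ conv{s₁, s₂, …, s_{2d}}. -/
theorem cc_inner_of_nearest {E : Type*} [NormedAddCommGroup E] [InnerProductSpace ℝ E]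
    {K : Set E} (hK : Convex ℝ K) {u v : E} (hv : v ∈ K)
    (h : ∀ w ∈ K, ‖u - v‖ ≤ ‖u - w‖) : ∀ w ∈ K, inner ℝ (u - v) (w - v) ≤ 0 := by
  refine (norm_eq_iInf_iff_real_inner_le_zero hK hv).1 ?_
  have : Nonempty K := ⟨⟨v, hv⟩⟩
  apply le_antisymm
  · exact le_ciInf fun w => h w w.2
  · exact ciInf_le (f := fun w : K => ‖u - w‖)
      ⟨0, by rintro _ ⟨w, rfl⟩; exact norm_nonneg _⟩ ⟨v, hv⟩

/-- A nearest point of a nonempty finite union of convex hulls of finite sets. -/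
theorem cc_exists_nearest {E : Type*} [NormedAddCommGroup E] [InnerProductSpace ℝ E]
    {α : Type*} {P : Set α} (hP : P.Finite) (hne : P.Nonempty) (F : α → Set E)
    (hF : ∀ s, (F s).Finite) (hFne : ∀ s, (F s).Nonempty) (x : E) :
    ∃ s ∈ P, ∃ z ∈ convexHull ℝ (F s), ∀ t ∈ P, ∀ w ∈ convexHull ℝ (F t),
      ‖x - z‖ ≤ ‖x - w‖ := by
  have hc : IsCompact (⋃ s ∈ P, convexHull ℝ (F s)) :=
    hP.isCompact_biUnion fun s _ => (hF s).isCompact_convexHull (𝕜 := ℝ)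
  have hn : (⋃ s ∈ P, convexHull ℝ (F s)).Nonempty := by
    obtain ⟨s, hs⟩ := hne
    obtain ⟨a, ha⟩ := hFne s
    exact ⟨a, Set.mem_biUnion hs (subset_convexHull ℝ _ ha)⟩
  obtain ⟨z, hz, hmin⟩ := hc.exists_isMinOn hn
    (f := fun w => ‖x - w‖) (by fun_prop)
  simp only [Set.mem_iUnion, exists_prop] at hz
  obtain ⟨s, hs, hzs⟩ := hz
  exact ⟨s, hs, z, hzs, fun t ht w hw => hmin (Set.mem_biUnion ht hw)⟩

/-- Reduction to at most `finrank` points. -/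
theorem cc_reduce {E : Type*} [NormedAddCommGroup E] [InnerProductSpace ℝ E]
    [FiniteDimensional ℝ E] {A : Set E} {x z : E} (hz : z ∈ convexHull ℝ A)
    (hne : x - z ≠ 0) (h : ∀ w ∈ A, inner ℝ (x - z) (w - z) ≤ 0) :
    ∃ T : Finset E, (T : Set E) ⊆ A ∧ z ∈ convexHull ℝ (T : Set E) ∧
      T.card ≤ Module.finrank ℝ E := by
  classical
  obtain ⟨κ, _, a, c, haA, haff, hc, hsum, hcz⟩ := eq_pos_convex_span_of_mem_convexHull hz
  have hmem : ∀ i, a i ∈ A := fun i => haA ⟨i, rfl⟩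
  have h0 : ∑ i, c i * inner ℝ (x - z) (a i - z) = 0 := by
    have : ∑ i, c i * inner ℝ (x - z) (a i - z)
        = inner ℝ (x - z) (∑ i, c i • (a i - z)) := by
      rw [inner_sum]; simp only [inner_smul_right]
    rw [this]
    simp only [smul_sub, Finset.sum_sub_distrib, hcz, ← Finset.sum_smul, hsum, one_smul,
      sub_self, inner_zero_right]
  have heq : ∀ i, inner ℝ (x - z) (a i - z) = (0 : ℝ) := by
    intro i
    have := (Finset.sum_eq_zero_iff_of_nonpos (s := Finset.univ)
      (f := fun i => c i * inner ℝ (x - z) (a i - z))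
      (fun i _ => mul_nonpos_of_nonneg_of_nonpos (hc i).le (h _ (hmem i)))).1 h0 i
      (Finset.mem_univ i)
    exact (mul_eq_zero.1 this).resolve_left (hc i).ne'
  have hle : vectorSpan ℝ (Set.range a) ≤ (ℝ ∙ (x - z))ᗮ := by
    rw [vectorSpan_def, Submodule.span_le]
    rintro _ ⟨_, ⟨i, rfl⟩, _, ⟨j, rfl⟩, rfl⟩
    simp only [SetLike.mem_coe, Submodule.mem_orthogonal_singleton_iff_inner_right, vsub_eq_sub]
    have : a i - a j = (a i - z) - (a j - z) := by abel
    rw [this, inner_sub_right, heq, heq, sub_zero]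
  have hfr : Module.finrank ℝ (ℝ ∙ (x - z)) + Module.finrank ℝ ((ℝ ∙ (x - z))ᗮ : Submodule ℝ E)
      = Module.finrank ℝ E := Submodule.finrank_add_finrank_orthogonal _
  rw [finrank_span_singleton hne] at hfr
  have h1 := haff.card_le_finrank_succ
  have h2 := Submodule.finrank_mono hle
  refine ⟨Finset.univ.image a, ?_, ?_, ?_⟩
  · simpa using haA
  · rw [← hcz]
    refine (convex_convexHull ℝ _).sum_mem (fun i _ => (hc i).le) hsum fun i _ => ?_
    exact subset_convexHull ℝ _ (by simp)
  · exact (Finset.card_image_le).trans (by rw [Finset.card_univ]; omega)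

/-- Bárány's colourful Carathéodory theorem, with one prescribed point. -/
theorem cc_strong {E : Type*} [NormedAddCommGroup E] [InnerProductSpace ℝ E]
    [FiniteDimensional ℝ E] {d : ℕ} (hd : 0 < d) (hE : Module.finrank ℝ E = d)
    (S : Fin d → Finset E) (x p : E) (hx : ∀ i, x ∈ convexHull ℝ (S i : Set E)) :
    ∃ s : Fin d → E, (∀ i, s i ∈ S i) ∧ x ∈ convexHull ℝ (insert p (Set.range s)) := by
  classical
  have : Nonempty (Fin d) := ⟨⟨0, hd⟩⟩
  by_contra! hcon
  set P : Set (Fin d → E) := {s | ∀ i, s i ∈ S i} with hPdef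
  have hPf : P.Finite := by
    have := Set.Finite.pi' (t := fun i => (S i : Set E)) (fun i => (S i).finite_toSet)
    simpa [hPdef] using this
  have hPne : P.Nonempty := by
    have : ∀ i, ∃ a, a ∈ S i := fun i => by
      have := convexHull_nonempty_iff.1 ⟨x, hx i⟩
      exact this
    choose f hf using this
    exact ⟨f, hf⟩
  obtain ⟨s₀, hs₀, z₀, hz₀, hmin₀⟩ := cc_exists_nearest hPf hPne (fun s => Set.range s)
    (fun s => Set.finite_range s) (fun s => Set.range_nonempty s) x
  have hδ : 0 < ‖x - z₀‖ := by
    rw [norm_pos_iff, sub_ne_zero]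
    rintro rfl
    exact hcon s₀ hs₀ (convexHull_mono (Set.subset_insert _ _) hz₀)
  obtain ⟨ε, hε, hε1, hεδ⟩ : ∃ ε : ℝ, 0 < ε ∧ ε ≤ 1 ∧ ε * ‖p - x‖ < ‖x - z₀‖ := by
    refine ⟨min 1 (‖x - z₀‖ / (‖p - x‖ + 1)), by positivity, min_le_left _ _, ?_⟩
    have h1 : 0 < ‖p - x‖ + 1 := by positivity
    calc _ ≤ ‖x - z₀‖ / (‖p - x‖ + 1) * ‖p - x‖ := by gcongr; exact min_le_right _ _
      _ < ‖x - z₀‖ / (‖p - x‖ + 1) * (‖p - x‖ + 1) := by gcongr; linarith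
      _ = _ := by field_simp
  set q : E := x + ε • (p - x) with hq
  obtain ⟨s, hs, z, hz, hmin⟩ := cc_exists_nearest hPf hPne (fun s => insert q (Set.range s))
    (fun s => (Set.finite_range s).insert q) (fun s => Set.insert_nonempty _ _) x
  have hxz : x - z ≠ 0 := by
    rw [sub_ne_zero]
    rintro rfl
    apply hcon s hs
    rw [convexHull_insert (Set.range_nonempty s), convexJoin_singleton_left] at hz ⊢
    simp only [Set.mem_iUnion, exists_prop] at hz ⊢
    obtain ⟨b, hb, α, β, hα, hβ, hαβ, heq⟩ := hz
    have hpos : 0 < α * ε + β := by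
      rcases hα.eq_or_lt with h | h
      · rw [← h] at hαβ ⊢; linarith
      · positivity
    refine ⟨b, hb, α * ε / (α * ε + β), β / (α * ε + β), by positivity, by positivity,
      by field_simp, ?_⟩
    have hα' : α = 1 - β := by linarith
    have h2 : (α * ε) • p + β • b = (α * ε + β) • x := by
      have : (α * ε) • p + β • b = (α • q + β • b) + (α * ε - α) • x := by
        rw [hq]; module
      rw [this, heq, hα']; module
    rw [div_eq_inv_mul, div_eq_inv_mul, mul_smul _ (α * ε), mul_smul _ β, ← smul_add, h2, smul_smul,
      inv_mul_cancel₀ hpos.ne', one_smul]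
  have hzδ : ‖x - z‖ < ‖x - z₀‖ := by
    refine (hmin s hs q (subset_convexHull ℝ _ (Set.mem_insert _ _))).trans_lt ?_
    rw [hq, sub_add_cancel_left, norm_neg, norm_smul, Real.norm_of_nonneg hε.le]
    exact hεδ
  have hin := cc_inner_of_nearest (convex_convexHull ℝ _) hz (hmin s hs)
  obtain ⟨T, hTA, hzT, hTc⟩ := cc_reduce hz hxz
    (fun w hw => hin w (subset_convexHull ℝ _ hw))
  have hqT : q ∈ T := by
    by_contra hqT
    have : (T : Set E) ⊆ Set.range s := by
      intro w hw
      rcases hTA hw with rfl | h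
      · exact absurd hw hqT
      · exact h
    exact absurd (hmin₀ s hs z (convexHull_mono this hzT)) (not_le.2 hzδ)
  have hpre : ∀ w ∈ T.erase q, ∃ i, s i = w := by
    intro w hw
    rw [Finset.mem_erase] at hw
    exact (hTA hw.2).resolve_left hw.1
  choose! g hg using hpre
  obtain ⟨i, hi⟩ : ∃ i, i ∉ (T.erase q).image g := by
    by_contra! hall
    have h1 : (Finset.univ : Finset (Fin d)).card ≤ ((T.erase q).image g).card :=
      Finset.card_le_card fun i _ => hall i
    have h2 := Finset.card_image_le (s := T.erase q) (f := g)
    have h3 := Finset.card_erase_lt_of_mem hqT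
    rw [Finset.card_univ, Fintype.card_fin] at h1
    omega
  obtain ⟨b, hb, hbin⟩ : ∃ b ∈ S i, 0 ≤ inner ℝ (x - z) (b - x) := by
    by_contra! hneg
    have hconv : Convex ℝ {b : E | inner ℝ (x - z) (b - x) < 0} := by
      have : {b : E | inner ℝ (x - z) (b - x) < 0}
          = {b : E | (innerₗ E (x - z)) b < inner ℝ (x - z) x} := by
        ext b; rw [Set.mem_ofPred_eq, Set.mem_ofPred_eq, inner_sub_right, sub_neg, innerₗ_apply_apply]
      rw [this]
      exact convex_halfSpace_lt (innerₗ E (x - z)).isLinear _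
    have : x ∈ {b : E | inner ℝ (x - z) (b - x) < 0} :=
      convexHull_min (s := (S i : Set E)) (fun b hb => hneg b hb) hconv (hx i)
    rw [Set.mem_ofPred_eq, sub_self, inner_zero_right] at this
    exact lt_irrefl _ this
  have hs' : Function.update s i b ∈ P := by
    intro j
    by_cases hj : j = i
    · subst hj; simpa using hb
    · simpa [hj] using hs j
  have hz' : z ∈ convexHull ℝ (insert q (Set.range (Function.update s i b))) := by
    refine convexHull_mono ?_ hzT
    intro w hw
    by_cases hwq : w = q
    · exact Or.inl hwq
    · have hw' : w ∈ T.erase q := Finset.mem_erase.2 ⟨hwq, hw⟩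
      refine Or.inr ⟨g w, ?_⟩
      have : g w ≠ i := by
        rintro rfl
        exact hi (Finset.mem_image_of_mem g hw')
      rw [Function.update_of_ne this, hg w hw']
  have hin' := cc_inner_of_nearest (convex_convexHull ℝ _) hz' (hmin _ hs') b
    (subset_convexHull ℝ _ (Or.inr ⟨i, by simp⟩))
  have hdec : b - z = (b - x) + (x - z) := by abel
  rw [hdec, inner_add_right] at hin'
  have := real_inner_self_pos.2 hxz
  linarith

theorem cc_join {E : Type*} [AddCommGroup E] [Module ℝ E] {C : Set E} (hC : Convex ℝ C)
    {x y a b : E} (ha : a ∈ C) (hb : b ∈ C) (hxy : x ≠ y)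
    (h1 : x ∈ segment ℝ y a) (h2 : y ∈ segment ℝ x b) : x ∈ C := by
  obtain ⟨α, β, hα, hβ, hαβ, e1⟩ := h1
  obtain ⟨γ, δ, hγ, hδ, hγδ, e2⟩ := h2
  have hβ0 : 0 < β := by
    rcases hβ.eq_or_lt with h | h
    · exfalso
      have : α = 1 := by linarith
      rw [← h, this] at e1
      simp at e1
      exact hxy e1.symm
    · exact h
  have hα' : α = 1 - β := by linarith
  have hγ' : γ = 1 - δ := by linarith
  have hpos : 0 < α * δ + β := by positivity
  have h3 : (α * δ) • b + β • a = (α * δ + β) • x := by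
    have e3 : x = α • (γ • x + δ • b) + β • a := by rw [e2, e1]
    have : (α * δ) • b + β • a = (α • (γ • x + δ • b) + β • a) - (α * γ) • x := by module
    rw [this, ← e3, hα', hγ']; module
  have h4 : (α * δ / (α * δ + β)) • b + (β / (α * δ + β)) • a = x := by
    rw [div_eq_inv_mul, div_eq_inv_mul, mul_smul _ (α * δ), mul_smul _ β, ← smul_add, h3, smul_smul,
      inv_mul_cancel₀ hpos.ne', one_smul]
  rw [← h4]
  exact hC hb ha (by positivity) (by positivity) (by field_simp)


/-- **Colourful Carathéodory theorem for two points.**  Given `2d` finite sets of points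
`S₁, …, S_{2d}` in `ℝ^d` and two points `x, y` with `{x, y} ⊆ conv(Sᵢ)` for every `i`,
there is a choice `s₁ ∈ S₁, …, s_{2d} ∈ S_{2d}` with `{x, y} ⊆ conv{s₁, …, s_{2d}}`. -/
theorem colourful_caratheodory_two_points (d : ℕ) (hd : 0 < d)
    (S : Fin (2 * d) → Finset (EuclideanSpace ℝ (Fin d)))
    (x y : EuclideanSpace ℝ (Fin d))
    (hxy : ∀ i, ({x, y} : Set (EuclideanSpace ℝ (Fin d))) ⊆
      convexHull ℝ (S i : Set (EuclideanSpace ℝ (Fin d)))) :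
    ∃ s : Fin (2 * d) → EuclideanSpace ℝ (Fin d),
      (∀ i, s i ∈ S i) ∧
      ({x, y} : Set (EuclideanSpace ℝ (Fin d))) ⊆ convexHull ℝ (Set.range s) := by
  classical
  have hfr : Module.finrank ℝ (EuclideanSpace ℝ (Fin d)) = d := by simp
  have hx : ∀ i, x ∈ convexHull ℝ (S i : Set (EuclideanSpace ℝ (Fin d))) :=
    fun i => hxy i (by simp)
  have hy : ∀ i, y ∈ convexHull ℝ (S i : Set (EuclideanSpace ℝ (Fin d))) :=
    fun i => hxy i (by simp)
  let l : Fin d → Fin (2 * d) := fun i => ⟨i, by omega⟩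
  let r : Fin d → Fin (2 * d) := fun i => ⟨d + i, by omega⟩
  have : Nonempty (Fin d) := ⟨⟨0, hd⟩⟩
  have glue : ∀ s₁ s₂ : Fin d → EuclideanSpace ℝ (Fin d), (∀ i, s₁ i ∈ S (l i)) →
      (∀ i, s₂ i ∈ S (r i)) → ∃ s : Fin (2 * d) → EuclideanSpace ℝ (Fin d),
      (∀ i, s i ∈ S i) ∧ Set.range s₁ ⊆ Set.range s ∧ Set.range s₂ ⊆ Set.range s := by
    intro s₁ s₂ h₁ h₂
    refine ⟨fun k => if h : (k : ℕ) < d then s₁ ⟨k, h⟩ else s₂ ⟨k - d, by omega⟩, ?_, ?_, ?_⟩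
    · intro k
      by_cases h : (k : ℕ) < d
      · simp only [h, dite_true]; exact h₁ ⟨k, h⟩
      · simp only [h, dite_false]
        have := h₂ ⟨k - d, by omega⟩
        have e : r ⟨k - d, by omega⟩ = k := by ext; simp only [r]; omega
        rwa [e] at this
    · rintro _ ⟨i, rfl⟩
      exact ⟨l i, by simp [l]⟩
    · rintro _ ⟨i, rfl⟩
      exact ⟨r i, by simp [r]⟩
  by_cases hne : x = y
  · subst hne
    have : ∀ i, ∃ a, a ∈ S (r i) := fun i => by
      have := convexHull_nonempty_iff.1 ⟨x, hx (r i)⟩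
      exact this
    choose s₂ h₂ using this
    obtain ⟨s₁, h₁, hm⟩ := cc_strong hd hfr (fun i => S (l i)) x (s₂ ⟨0, hd⟩) fun i => hx _
    obtain ⟨s, hs, hl, hr⟩ := glue s₁ s₂ h₁ h₂
    refine ⟨s, hs, ?_⟩
    have := convexHull_mono (𝕜 := ℝ) (Set.insert_subset (hr ⟨_, rfl⟩) hl) hm
    simpa using this
  · obtain ⟨s₁, h₁, hm₁⟩ := cc_strong hd hfr (fun i => S (l i)) x y fun i => hx _
    obtain ⟨s₂, h₂, hm₂⟩ := cc_strong hd hfr (fun i => S (r i)) y x fun i => hy _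
    obtain ⟨s, hs, hl, hr⟩ := glue s₁ s₂ h₁ h₂
    refine ⟨s, hs, ?_⟩
    rw [convexHull_insert (Set.range_nonempty _), convexJoin_singleton_left] at hm₁ hm₂
    simp only [Set.mem_iUnion, exists_prop] at hm₁ hm₂
    obtain ⟨a, ha, ha'⟩ := hm₁
    obtain ⟨b, hb, hb'⟩ := hm₂
    have haC := convexHull_mono (𝕜 := ℝ) hl ha
    have hbC := convexHull_mono (𝕜 := ℝ) hr hb
    have hC := convex_convexHull ℝ (Set.range s)
    rintro w (rfl | rfl)
    · exact cc_join hC haC hbC hne ha' hb'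
    · exact cc_join hC hbC haC (Ne.symm hne) hb' ha'
end

section
/- Let d be a positive integer and 0 < δ < 1. There exists a positive integer n′ = n′(d,δ) such that: for any n′ finite nonempty families 𝓕₁, 𝓕₂, …, 𝓕_{n′} of compact convex sets in ℝ^d, considered as colour classes, if the intersection of every colourful choice F₁ ∈ 𝓕₁, …, F_{n′} ∈ 𝓕_{n′} has diameter at least one, then there is a colour class 𝓕_i such that the intersection of all sets of 𝓕_i has diameter at least 1 − δ. -/
theorem colourful_helly_aux {V : Type*} [NormedAddCommGroup V] [InnerProductSpace ℝ V]
    [FiniteDimensional ℝ V] {ι : Type*} [Fintype ι]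
    (hcard : Fintype.card ι = Module.finrank ℝ V + 1)
    (F : ι → Finset (Set V)) (hne : ∀ i, (F i).Nonempty)
    (hF : ∀ i, ∀ A ∈ F i, IsClosed A ∧ Convex ℝ A)
    (hc : ∀ c : ι → Set V, (∀ i, c i ∈ F i) → (⋂ i, c i).Nonempty) :
    ∃ i, (⋂₀ (F i : Set (Set V))).Nonempty := by
  classical
  have : ProperSpace V := FiniteDimensional.proper_real V
  have : Nonempty ι := Fintype.card_pos_iff.1 (by omega)
  have : ∀ i, Nonempty (F i) := fun i => (hne i).to_subtype
  let S : ι → (ι → Set V) → Set V := fun j c => ⋂ i, ⋂ (_ : i ≠ j), c i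
  have hScl : ∀ j (c : ι → Set V), (∀ i, c i ∈ F i) → IsClosed (S j c) := fun j c h =>
    isClosed_iInter fun i => isClosed_iInter fun _ => (hF i _ (h i)).1
  have hScv : ∀ j (c : ι → Set V), (∀ i, c i ∈ F i) → Convex ℝ (S j c) := fun j c h =>
    convex_iInter fun i => convex_iInter fun _ => (hF i _ (h i)).2
  have hsub : ∀ j (c : ι → Set V), (⋂ i, c i) ⊆ S j c := fun j c x hx =>
    Set.mem_iInter.2 fun i => Set.mem_iInter.2 fun _ => Set.mem_iInter.1 hx i
  have hSne : ∀ j (c : ι → Set V), (∀ i, c i ∈ F i) → (S j c).Nonempty := fun j c h =>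
    (hc c h).mono (hsub j c)
  obtain ⟨⟨j, c₀⟩, hmax⟩ := Finite.exists_max
    (fun p : ι × (∀ i, F i) => Metric.infDist 0 (S p.1 fun i => (p.2 i : Set V)))
  set c : ι → Set V := fun i => (c₀ i : Set V) with hcdef
  have hcF : ∀ i, c i ∈ F i := fun i => (c₀ i).2
  have hmax' : ∀ k (c' : ι → Set V), (∀ i, c' i ∈ F i) →
      Metric.infDist 0 (S k c') ≤ Metric.infDist 0 (S j c) := fun k c' h =>
    hmax (k, fun i => ⟨c' i, h i⟩)
  obtain ⟨p, hp, hpd⟩ := (hScl j c hcF).exists_infDist_eq_dist (hSne j c hcF) 0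
  refine ⟨j, p, ?_⟩
  intro A hA
  have hA' : A ∈ F j := hA
  let c' := Function.update c j A
  have hc'F : ∀ i, c' i ∈ F i := by
    intro i
    by_cases h : i = j
    · subst h; simpa [c'] using hA'
    · simp only [c', Function.update_of_ne h]; exact hcF i
  have hKsub : (⋂ i, c' i) ⊆ S j c := by
    intro x hx
    refine Set.mem_iInter.2 fun i => Set.mem_iInter.2 fun h => ?_
    have := Set.mem_iInter.1 hx i
    simpa [c', h] using this
  have hKcl : IsClosed (⋂ i, c' i) := isClosed_iInter fun i => (hF i _ (hc'F i)).1
  obtain ⟨q, hq, hqd⟩ := hKcl.exists_infDist_eq_dist (hc c' hc'F) 0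
  rw [dist_zero_left] at hpd hqd
  have hqp : ‖q‖ ≤ ‖p‖ := by
    by_contra! hlt
    let G : Option ι → Set V := fun o => o.elim (Metric.ball 0 ‖q‖) c'
    have hG : ∀ o, Convex ℝ (G o) := by
      rintro (_ | i)
      · exact convex_ball _ _
      · exact (hF i _ (hc'F i)).2
    have := Convex.helly_theorem' (𝕜 := ℝ) (F := G) (s := Finset.univ) (fun o _ => hG o) (by
      intro I _ hI
      by_cases hn : none ∈ I
      · have hk : ∃ k, some k ∉ I := by
          by_contra! hall
          have : I = Finset.univ := by
            ext o; cases o <;> simp [hn, hall]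
          rw [this, Finset.card_univ, Fintype.card_option] at hI
          omega
        obtain ⟨k, hk⟩ := hk
        obtain ⟨x, hx, hxd⟩ := (hScl k c' hc'F).exists_infDist_eq_dist (hSne k c' hc'F) 0
        rw [dist_zero_left] at hxd
        have h1 := hmax' k c' hc'F
        refine ⟨x, Set.mem_iInter₂.2 ?_⟩
        rintro (_ | i) hi
        · simp only [G, Option.elim, mem_ball_zero_iff]
          linarith
        · exact Set.mem_iInter₂.1 hx i (by rintro rfl; exact hk hi)
      · refine ⟨q, Set.mem_iInter₂.2 ?_⟩
        rintro (_ | i) hi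
        · exact absurd hi hn
        · exact Set.mem_iInter.1 hq i)
    obtain ⟨x, hx⟩ := this
    have hx' := fun o => Set.mem_iInter₂.1 hx o (Finset.mem_univ o)
    have h0 : ‖x‖ < ‖q‖ := by simpa [G] using hx' none
    have h1 : x ∈ ⋂ i, c' i := Set.mem_iInter.2 fun i => hx' (some i)
    have h2 := Metric.infDist_le_dist_of_mem (x := (0 : V)) h1
    rw [dist_zero_left] at h2
    linarith
  have hpq : p = q := by
    by_contra hne'
    have hqS := hKsub hq
    have hle : ∀ x ∈ S j c, ‖p‖ ≤ ‖x‖ := by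
      intro x hx
      have h2 := Metric.infDist_le_dist_of_mem (x := (0 : V)) hx
      rw [dist_zero_left] at h2
      linarith
    have heq : ‖p‖ = ‖q‖ := le_antisymm (hle q hqS) hqp
    have hm := hle _ ((hScv j c hcF).midpoint_mem hp hqS)
    have := (norm_midpoint_lt_iff heq).2 hne'
    rw [midpoint_eq_smul_add] at hm
    norm_num at this hm
    linarith
  rw [hpq]
  simpa [c'] using Set.mem_iInter.1 hq j


/-- **Colourful Helly theorem for the diameter.**  There is `n' = n'(d, δ)` such that for any
`n'` finite nonempty colour classes of compact convex sets in `ℝ^d`, if the intersection of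
every colourful choice has diameter at least one, then some colour class has intersection of
diameter at least `1 - δ`. -/
theorem colourful_helly_for_diameter (d : ℕ) (hd : 0 < d)
    (δ : ℝ) (hδ0 : 0 < δ) (hδ1 : δ < 1) :
    ∃ n' : ℕ, 0 < n' ∧
      ∀ F : Fin n' → Finset (Set (EuclideanSpace ℝ (Fin d))),
        (∀ i, (F i).Nonempty) →
        (∀ i, ∀ A ∈ F i, IsCompact A ∧ Convex ℝ A) →
        (∀ choice : Fin n' → Set (EuclideanSpace ℝ (Fin d)),
          (∀ i, choice i ∈ F i) → 1 ≤ Metric.diam (⋂ i, choice i)) →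
        ∃ i, 1 - δ ≤ Metric.diam (⋂₀ (F i : Set (Set (EuclideanSpace ℝ (Fin d))))) := by
  classical
  let E := EuclideanSpace ℝ (Fin d)
  let V := WithLp 2 (E × E)
  obtain ⟨t, ht, htfin, htcov⟩ := finite_cover_balls_of_compact
    (isCompact_closedBall (0 : E) 1) (half_pos hδ0)
  have : Fintype t := htfin.fintype
  have : Nonempty t := by
    have := htcov (Metric.mem_closedBall_self zero_le_one)
    simp only [Set.mem_iUnion] at this
    obtain ⟨x, hx, _⟩ := this
    exact ⟨⟨x, hx⟩⟩
  let J := Fin (Module.finrank ℝ V + 1)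
  refine ⟨Fintype.card (t × J), Fintype.card_pos, ?_⟩
  intro F hne hF hch
  let e : Fin (Fintype.card (t × J)) ≃ t × J := (Fintype.equivFin _).symm
  by_contra! hcon
  let W : E → Set E → Set V := fun u A =>
    {z | z.fst ∈ A ∧ z.snd ∈ A ∧ 1 - δ ≤ inner ℝ u (z.snd - z.fst)}
  have key : ∀ u : t, ∃ c : J → Set E, (∀ k, c k ∈ F (e.symm (u, k))) ∧
      ¬ ∃ x y, (∀ k, x ∈ c k ∧ y ∈ c k) ∧ 1 - δ ≤ inner ℝ (u : E) (y - x) := by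
    intro u
    by_contra! hu
    obtain ⟨k, z, hz⟩ := colourful_helly_aux (V := V) (ι := J) (by simp [J])
      (fun k => (F (e.symm (u, k))).image (W u)) (fun k => (hne _).image _)
      (by
        intro k B hB
        obtain ⟨A, hA, rfl⟩ := Finset.mem_image.1 hB
        obtain ⟨hAc, hAv⟩ := hF _ A hA
        have hf : Continuous fun z : V => z.fst := by fun_prop
        have hs : Continuous fun z : V => z.snd := by fun_prop
        constructor
        · have h3 : IsClosed {z : V | 1 - δ ≤ inner ℝ (u : E) (z.snd - z.fst)} :=
            isClosed_le continuous_const (Continuous.inner continuous_const (hs.sub hf))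
          exact (hAc.isClosed.preimage hf).inter ((hAc.isClosed.preimage hs).inter h3)
        · rintro z ⟨h1, h2, h3⟩ w ⟨g1, g2, g3⟩ a b ha hb hab
          refine ⟨hAv h1 g1 ha hb hab, hAv h2 g2 ha hb hab, ?_⟩
          have : (a • z + b • w).snd - (a • z + b • w).fst
              = a • (z.snd - z.fst) + b • (w.snd - w.fst) := by
            change (a • z.snd + b • w.snd) - (a • z.fst + b • w.fst) = _
            module
          rw [this, inner_add_right, real_inner_smul_right, real_inner_smul_right]
          have hb' : b = 1 - a := by linarith
          subst hb'
          nlinarith)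
      (by
        intro c hc
        have : ∀ k, ∃ A, A ∈ F (e.symm (u, k)) ∧ W u A = c k := fun k => by
          simpa using hc k
        choose A hA hAc using this
        obtain ⟨x, y, hxy, hin⟩ := hu A hA
        refine ⟨WithLp.toLp 2 (x, y), Set.mem_iInter.2 fun k => ?_⟩
        rw [← hAc k]
        exact ⟨(hxy k).1, (hxy k).2, hin⟩)
    have hz' : ∀ A ∈ F (e.symm (u, k)), z ∈ W u A := fun A hA =>
      hz _ (by simpa using ⟨A, hA, rfl⟩)
    obtain ⟨A₀, hA₀⟩ := hne (e.symm (u, k))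
    have hbd : Bornology.IsBounded
        (⋂₀ (F (e.symm (u, k)) : Set (Set (EuclideanSpace ℝ (Fin d))))) :=
      (hF _ A₀ hA₀).1.isBounded.subset (Set.sInter_subset_of_mem hA₀)
    have hd1 := Metric.dist_le_diam_of_mem hbd (x := z.snd) (y := z.fst)
      (fun A hA => (hz' A hA).2.1) (fun A hA => (hz' A hA).1)
    have hlt := hcon (e.symm (u, k))
    have hin := (hz' A₀ hA₀).2.2
    have hcs := real_inner_le_norm (u : E) (z.snd - z.fst)
    have hu1 : ‖(u : E)‖ ≤ 1 := by simpa using ht u.2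
    rw [dist_eq_norm] at hd1
    have := mul_le_mul_of_nonneg_right hu1 (norm_nonneg (z.snd - z.fst))
    linarith
  choose c hcF hcn using key
  have hdiam := hch (fun i => c (e i).1 (e i).2) (fun i => by
    simpa using hcF (e i).1 (e i).2)
  have hex : ∃ x ∈ (⋂ i, c (e i).1 (e i).2), ∃ y ∈ (⋂ i, c (e i).1 (e i).2),
      1 - δ / 2 < dist x y := by
    by_contra! h
    have := Metric.diam_le_of_forall_dist_le (by linarith) h
    linarith
  obtain ⟨x, hx, y, hy, hxy⟩ := hex
  set r := ‖y - x‖ with hr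
  rw [dist_comm, dist_eq_norm, ← hr] at hxy
  have hr0 : 0 < r := by linarith
  have hv : (r⁻¹ • (y - x) : E) ∈ Metric.closedBall (0 : E) 1 := by
    rw [mem_closedBall_zero_iff, norm_smul, norm_inv, ← hr, Real.norm_of_nonneg hr0.le,
      inv_mul_cancel₀ hr0.ne']
  have hv' := htcov hv
  simp only [Set.mem_iUnion] at hv'
  obtain ⟨u, hu, huv⟩ := hv'
  rw [Metric.mem_ball, dist_eq_norm] at huv
  refine hcn ⟨u, hu⟩ ⟨x, y, ?_, ?_⟩
  · intro k
    have h1 := Set.mem_iInter.1 hx (e.symm (⟨u, hu⟩, k))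
    have h2 := Set.mem_iInter.1 hy (e.symm (⟨u, hu⟩, k))
    simp only [Equiv.apply_symm_apply] at h1 h2
    exact ⟨h1, h2⟩
  · have h1 := real_inner_le_norm (r⁻¹ • (y - x) - u) (y - x)
    rw [inner_sub_left, real_inner_smul_left, real_inner_self_eq_norm_sq, ← hr] at h1
    have h2 : r⁻¹ * r ^ 2 = r := by field_simp
    rw [h2] at h1
    have h3 := mul_le_mul_of_nonneg_right huv.le hr0.le
    show 1 - δ ≤ inner ℝ u (y - x)
    nlinarith
end

section
/- For every positive integer d ≥ 2 there is a constant C_d > 0 such that for every 0 < δ < 1, the colourful Helly theorem for diameter holds with n′ = ⌈C_d · δ^{−(d−1)/2}⌉ colour classes; that is, for any n′ finite nonempty families 𝓕₁, …, 𝓕_{n′} of compact convex sets in ℝ^d, if the intersection of every colourful choice F₁ ∈ 𝓕₁, …, F_{n′} ∈ 𝓕_{n′} has diameter at least one, then some colour class 𝓕_i satisfies diam(∩𝓕_i) ≥ 1 − δ. -/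
open Module in
/-- Uniqueness of the point of minimal norm in a convex set. -/
lemma chd_min_unique {V : Type*} [NormedAddCommGroup V] [InnerProductSpace ℝ V] (K : Set V)
    (hK : Convex ℝ K) (p q : V) (hp : p ∈ K) (hq : q ∈ K)
    (hmin : ∀ r ∈ K, ‖p‖ ≤ ‖r‖) (hqp : ‖q‖ ≤ ‖p‖) : q = p := by
  have h1 := hmin q hq
  have h2 : ‖p‖ = ‖q‖ := le_antisymm h1 hqp
  by_contra h
  have h3 := hmin _ (hK.midpoint_mem hp hq)
  have := (norm_midpoint_lt_iff h2).2 (fun e => h e.symm)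
  rw [midpoint_eq_smul_add] at h3
  simp at this h3
  linarith

/-- Existence of a point of minimal norm in a closed set. -/
lemma chd_min_exists {V : Type*} [NormedAddCommGroup V] [ProperSpace V] (K : Set V)
    (hK : IsClosed K) (hne : K.Nonempty) :
    ∃ p ∈ K, ‖p‖ = Metric.infDist 0 K ∧ ∀ r ∈ K, ‖p‖ ≤ ‖r‖ := by
  obtain ⟨p, hp, h⟩ := hK.exists_infDist_eq_dist hne (0 : V)
  rw [dist_zero_left] at h
  refine ⟨p, hp, h.symm, fun r hr => ?_⟩
  rw [← h]
  simpa using Metric.infDist_le_dist_of_mem (x := (0 : V)) hr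

open Module in
/-- Colourful Helly theorem for finite families of closed convex sets. -/
lemma chd_colourful {V ι α : Type*} [NormedAddCommGroup V] [InnerProductSpace ℝ V]
    [FiniteDimensional ℝ V] [Fintype ι] [DecidableEq ι] (hι : Fintype.card ι = finrank ℝ V + 1)
    (F : ι → Finset α) (hF : ∀ i, (F i).Nonempty) (S : α → Set V)
    (hS : ∀ i, ∀ a ∈ F i, IsClosed (S a) ∧ Convex ℝ (S a))
    (hc : ∀ c : ι → α, (∀ i, c i ∈ F i) → ∃ x, ∀ i, x ∈ S (c i)) :
    ∃ i, ∃ x, ∀ a ∈ F i, x ∈ S a := by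
  classical
  have : ProperSpace V := FiniteDimensional.proper_real V
  let K : ι → (ι → α) → Set V := fun k c => {x | ∀ i, i ≠ k → x ∈ S (c i)}
  have Kcl : ∀ k c, (∀ i, c i ∈ F i) → IsClosed (K k c) := by
    intro k c h
    simp only [K, Set.ofPred_forall]
    exact isClosed_iInter fun i => isClosed_iInter fun _ => (hS i _ (h i)).1
  have Kcv : ∀ k c, (∀ i, c i ∈ F i) → Convex ℝ (K k c) := by
    intro k c h
    simp only [K, Set.ofPred_forall]
    exact convex_iInter fun i => convex_iInter fun _ => (hS i _ (h i)).2
  have Kne : ∀ k c, (∀ i, c i ∈ F i) → (K k c).Nonempty := by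
    intro k c h
    obtain ⟨x, hx⟩ := hc c h
    exact ⟨x, fun i _ => hx i⟩
  have : Nonempty ι := Fintype.card_pos_iff.1 (by omega)
  obtain ⟨⟨k, c⟩, hkc, hmax⟩ := Finset.exists_max_image
    ((Finset.univ : Finset ι) ×ˢ Fintype.piFinset F) (fun z => Metric.infDist 0 (K z.1 z.2))
    (by
      exact Finset.univ_nonempty.product (Fintype.piFinset_nonempty.2 hF))
  simp only [Finset.mem_product, Finset.mem_univ, true_and, Fintype.mem_piFinset] at hkc hmax
  obtain ⟨p, hpK, hpd, hpm⟩ := chd_min_exists _ (Kcl k c hkc) (Kne k c hkc)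
  refine ⟨k, p, fun a ha => ?_⟩
  by_contra hpa
  set c' := Function.update c k a with hc'
  have hc'F : ∀ i, c' i ∈ F i := by
    intro i
    by_cases hik : i = k
    · subst hik; simpa [c'] using ha
    · simpa [c', hik] using hkc i
  let K' : Set V := {x | ∀ i, x ∈ S (c' i)}
  have K'cl : IsClosed K' := by
    simp only [K', Set.ofPred_forall]
    exact isClosed_iInter fun i => (hS i _ (hc'F i)).1
  obtain ⟨q, hqK, hqd, hqm⟩ := chd_min_exists K' K'cl (hc c' hc'F)
  have hqk : q ∈ K k c := by
    intro i hi
    have := hqK i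
    simpa [c', hi] using this
  have hlt : ‖p‖ < ‖q‖ := by
    by_contra hle
    push Not at hle
    have := chd_min_unique _ (Kcv k c hkc) p q hpK hqk hpm hle
    subst this
    apply hpa
    have := hqK k
    simpa [c'] using this
  let G : Option ι → Set V := fun o => o.elim (Metric.ball 0 ‖q‖) (fun i => S (c' i))
  have hG : (⋂ o ∈ (Finset.univ : Finset (Option ι)), G o).Nonempty := by
    apply Convex.helly_theorem (𝕜 := ℝ)
    · simp [hι]
    · rintro (_ | i) _
      · exact convex_ball _ _
      · exact (hS i _ (hc'F i)).2
    · intro I _ hI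
      obtain ⟨o, ho⟩ : ∃ o, o ∉ I := by
        by_contra h
        push Not at h
        have : I = Finset.univ := Finset.eq_univ_iff_forall.2 h
        rw [this] at hI
        simp [hι] at hI
      suffices ∃ x, ∀ o', o' ≠ o → x ∈ G o' by
        obtain ⟨x, hx⟩ := this
        refine ⟨x, ?_⟩
        simp only [Set.mem_iInter]
        intro o' ho'
        exact hx o' (fun e => ho (e ▸ ho'))
      rcases o with _ | j
      · refine ⟨q, ?_⟩
        rintro (_ | i) hi
        · exact absurd rfl hi
        · exact hqK i
      · by_cases hjk : j = k
        · refine ⟨p, ?_⟩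
          rintro (_ | i) hi
          · simpa [G] using hlt
          · have hik : i ≠ k := fun e => hi (by rw [e, hjk])
            have := hpK i hik
            simpa [G, c', hik] using this
        · obtain ⟨r, hrK, hrd, _⟩ := chd_min_exists _ (Kcl j c' hc'F) (Kne j c' hc'F)
          refine ⟨r, ?_⟩
          rintro (_ | i) hi
          · have := hmax (j, c') hc'F
            simp only at this
            have : ‖r‖ < ‖q‖ := by rw [hrd]; linarith
            simpa [G] using this
          · exact hrK i (fun e => hi (by rw [e]))
  obtain ⟨x, hx⟩ := hG
  simp only [Finset.mem_univ, Set.iInter_true, Set.mem_iInter] at hx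
  have h1 := hx none
  have h2 := hqm x (fun i => hx (some i))
  simp [G] at h1
  linarith

open Module in
/-- Colourful Helly theorem for the width in a given direction. -/
lemma chd_width {E ι : Type*} [NormedAddCommGroup E] [InnerProductSpace ℝ E]
    [FiniteDimensional ℝ E] [Fintype ι] [DecidableEq ι]
    (hι : Fintype.card ι = 2 * finrank ℝ E + 1)
    (F : ι → Finset (Set E)) (hF : ∀ i, (F i).Nonempty)
    (hS : ∀ i, ∀ A ∈ F i, IsCompact A ∧ Convex ℝ A) (u : E) (w : ℝ)
    (hno : ∀ i, ∀ x ∈ ⋂₀ (F i : Set (Set E)), ∀ y ∈ ⋂₀ (F i : Set (Set E)), inner ℝ u (y - x) < w) :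
    ∃ c : ι → Set E, (∀ i, c i ∈ F i) ∧
      ∀ x ∈ ⋂ i, c i, ∀ y ∈ ⋂ i, c i, inner ℝ u (y - x) < w := by
  by_contra hcon
  push Not at hcon
  let S : Set E → Set (WithLp 2 (E × E)) := fun A =>
    {z | z.fst ∈ A ∧ z.snd ∈ A ∧ w ≤ inner ℝ u (z.snd - z.fst)}
  have hfr : finrank ℝ (WithLp 2 (E × E)) = 2 * finrank ℝ E := by
    rw [LinearEquiv.finrank_eq (WithLp.linearEquiv 2 ℝ (E × E)), finrank_prod]; ring
  obtain ⟨i, z, hz⟩ := chd_colourful (V := WithLp 2 (E × E)) (by rw [hι, hfr]) F hF S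
    (by
      intro i A hA
      obtain ⟨h1, h2⟩ := hS i A hA
      constructor
      · have a1 : IsClosed {z : WithLp 2 (E × E) | z.fst ∈ A} :=
          h1.isClosed.preimage (by fun_prop : Continuous fun z : WithLp 2 (E × E) => z.fst)
        have a2 : IsClosed {z : WithLp 2 (E × E) | z.snd ∈ A} :=
          h1.isClosed.preimage (by fun_prop : Continuous fun z : WithLp 2 (E × E) => z.snd)
        have a3 : IsClosed {z : WithLp 2 (E × E) | w ≤ inner ℝ u (z.snd - z.fst)} :=
          isClosed_le (by fun_prop) (by fun_prop)
        exact a1.inter (a2.inter a3)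
      · rintro z ⟨z1, z2, z3⟩ y ⟨y1, y2, y3⟩ a b ha hb hab
        refine ⟨h2 z1 y1 ha hb hab, h2 z2 y2 ha hb hab, ?_⟩
        simp only [WithLp.add_snd, WithLp.smul_snd, WithLp.add_fst, WithLp.smul_fst]
        have : a • z.snd + b • y.snd - (a • z.fst + b • y.fst)
            = a • (z.snd - z.fst) + b • (y.snd - y.fst) := by module
        rw [this, inner_add_right, inner_smul_right, inner_smul_right]
        have e : w = a * w + b * w := by rw [← add_mul, hab, one_mul]
        rw [e]
        exact add_le_add (mul_le_mul_of_nonneg_left z3 ha) (mul_le_mul_of_nonneg_left y3 hb))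
    (by
      intro c hc
      obtain ⟨x, hx, y, hy, hxy⟩ := hcon c hc
      rw [Set.mem_iInter] at hx hy
      exact ⟨WithLp.toLp 2 (x, y), fun i => ⟨hx i, hy i, hxy⟩⟩)
  obtain ⟨A, hA⟩ := hF i
  have := hno i z.fst (fun B hB => (hz B hB).1) z.snd (fun B hB => (hz B hB).2.1)
  have := (hz A hA).2.2
  linarith

/-- The explicit directions: integer points on the boundary of the cube `[-k, k]^(n+1)`. -/
noncomputable def chdDir (n k : ℕ) (t : Fin (n + 1) × Bool × (Fin n → Fin (2 * k + 1))) :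
    EuclideanSpace ℝ (Fin (n + 1)) :=
  WithLp.toLp 2 (Fin.insertNth (α := fun _ => ℝ) t.1 (if t.2.1 then (k : ℝ) else -(k : ℝ))
    (fun j => ((t.2.2 j : ℕ) : ℝ) - k))

lemma chd_round (k : ℕ) (x : ℝ) (h1 : -1 ≤ x) (h2 : x ≤ 1) :
    ∃ m : Fin (2 * k + 1), |((m : ℕ) : ℝ) - k - k * x| ≤ 1 := by
  have hk : (0 : ℝ) ≤ k := Nat.cast_nonneg k
  have h0 : 0 ≤ (k : ℝ) * x + k := by nlinarith
  have hf := Nat.floor_le h0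
  have hf' := Nat.lt_floor_add_one ((k : ℝ) * x + k)
  refine ⟨⟨⌊(k : ℝ) * x + k⌋₊, ?_⟩, ?_⟩
  · have : ((⌊(k : ℝ) * x + k⌋₊ : ℕ) : ℝ) ≤ ((2 * k : ℕ) : ℝ) := by push_cast; nlinarith
    have := Nat.cast_le.1 this
    omega
  · rw [abs_le]
    constructor <;> simp only <;> linarith

lemma chd_coord_le (n : ℕ) (x : EuclideanSpace ℝ (Fin n)) (i : Fin n) : |x i| ≤ ‖x‖ := by
  simpa using PiLp.norm_apply_le x i

lemma chd_dir_norm (n k : ℕ) (t) : (k : ℝ) ≤ ‖chdDir n k t‖ := by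
  refine le_trans ?_ (chd_coord_le _ _ t.1)
  simp only [chdDir, Fin.insertNth_apply_same]
  split_ifs <;> simp

lemma chd_net (n k : ℕ) (δ : ℝ) (hk : 0 < k) (hkδ : (n + 1 : ℝ) / k ^ 2 ≤ 2 * δ)
    (v : EuclideanSpace ℝ (Fin (n + 1))) :
    ∃ t, (1 - δ) * ‖chdDir n k t‖ * ‖v‖ ≤ inner ℝ (chdDir n k t) v := by
  obtain ⟨i, -, hi⟩ := Finset.exists_max_image (Finset.univ : Finset (Fin (n + 1)))
    (fun j => |v j|) Finset.univ_nonempty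
  have hkR : (0 : ℝ) < k := Nat.cast_pos.2 hk
  by_cases hvi : v i = 0
  · have : v = 0 := by
      ext j
      have := hi j (Finset.mem_univ j)
      rw [hvi, abs_zero] at this
      simpa using this
    refine ⟨(i, true, fun _ => 0), ?_⟩
    rw [this]; simp
  have hm : 0 < |v i| := abs_pos.2 hvi
  set m := |v i| with hmdef
  have hr : ∀ j : Fin n, ∃ a : Fin (2 * k + 1),
      |((a : ℕ) : ℝ) - k - k * (v (i.succAbove j) / m)| ≤ 1 := by
    intro j
    have := abs_le.1 (hi (i.succAbove j) (Finset.mem_univ _))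
    apply chd_round
    · rw [le_div_iff₀ hm]; linarith
    · rw [div_le_iff₀ hm]; linarith
  choose f hf using hr
  refine ⟨(i, decide (0 < v i), f), ?_⟩
  set u := chdDir n k (i, decide (0 < v i), f) with hu
  have hku : (k : ℝ) ≤ ‖u‖ := chd_dir_norm n k _
  set w : EuclideanSpace ℝ (Fin (n + 1)) := ((k : ℝ) / m) • v with hw
  have hui : u i = w i := by
    simp only [hu, chdDir, Fin.insertNth_apply_same, hw, PiLp.smul_apply, smul_eq_mul]
    by_cases h : 0 < v i
    · have : m = v i := abs_of_pos h
      simp [h]; rw [this]; field_simp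
    · have h' : v i < 0 := lt_of_le_of_ne (not_lt.1 h) hvi
      have : m = - v i := abs_of_neg h'
      simp [h]; rw [this]; field_simp
  have hkw : (k : ℝ) ≤ ‖w‖ := by
    have := chd_coord_le _ w i
    refine le_trans (le_of_eq ?_) this
    simp only [hw, PiLp.smul_apply, smul_eq_mul, abs_mul, ← hmdef, abs_div]
    rw [abs_of_pos hm, abs_of_pos hkR]; field_simp
  have hdist : ‖u - w‖ ^ 2 ≤ n + 1 := by
    rw [EuclideanSpace.real_norm_sq_eq]
    have : ∀ j ∈ (Finset.univ : Finset (Fin (n + 1))), ((u - w) j) ^ 2 ≤ 1 := by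
      intro j _
      rw [sq_le_one_iff_abs_le_one]
      rcases Fin.eq_self_or_eq_succAbove i j with h | ⟨j', h⟩
      · subst h; simp [hui]
      · subst h
        have := hf j'
        simp only [PiLp.sub_apply, hu, chdDir, Fin.insertNth_apply_succAbove, hw, PiLp.smul_apply,
          smul_eq_mul]
        have e : ((f j' : ℕ) : ℝ) - k - k / m * v (i.succAbove j')
            = ((f j' : ℕ) : ℝ) - k - k * (v (i.succAbove j') / m) := by ring
        rw [e]
        exact this
    refine (Finset.sum_le_sum this).trans ?_
    simp
  have hinner : (1 - δ) * ‖u‖ * ‖w‖ ≤ inner ℝ u w := by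
    have e := norm_sub_sq_real u w
    have h1 : (n + 1 : ℝ) ≤ 2 * δ * k ^ 2 := by
      rwa [div_le_iff₀ (by positivity)] at hkδ
    have hδ : 0 ≤ δ := by
      have : 0 ≤ (n + 1 : ℝ) / k ^ 2 := by positivity
      linarith
    have h2 : (k : ℝ) ^ 2 ≤ ‖u‖ * ‖w‖ := by
      rw [sq]; exact mul_le_mul hku hkw hkR.le (norm_nonneg _)
    have h3 := mul_le_mul_of_nonneg_left h2 hδ
    nlinarith [sq_nonneg (‖u‖ - ‖w‖)]
  have hc : 0 < (k : ℝ) / m := by positivity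
  rw [hw, norm_smul, inner_smul_right, Real.norm_of_nonneg hc.le] at hinner
  have : (k : ℝ) / m * ((1 - δ) * ‖u‖ * ‖v‖) ≤ (k : ℝ) / m * inner ℝ u v := by linarith
  exact le_of_mul_le_mul_left this hc

lemma chd_diam {E : Type*} [MetricSpace E] (L : Set E) (hL : IsCompact L)
    (h : 1 ≤ Metric.diam L) : ∃ x ∈ L, ∃ y ∈ L, 1 ≤ dist y x := by
  have hne : L.Nonempty := by
    rw [Set.nonempty_iff_ne_empty]
    rintro rfl
    simp at h
    linarith
  obtain ⟨⟨x, y⟩, ⟨hx, hy⟩, hmax⟩ := (hL.prod hL).exists_isMaxOn (hne.prod hne)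
    (f := fun z : E × E => dist z.2 z.1) (by fun_prop)
  refine ⟨x, hx, y, hy, h.trans ?_⟩
  apply Metric.diam_le_of_forall_dist_le dist_nonneg
  intro a ha b hb
  have : (b, a) ∈ L ×ˢ L := ⟨hb, ha⟩
  exact hmax this


/-- **Colourful Helly theorem for the diameter with the asymptotically optimal number of colour
classes.**  For every `d ≥ 2` there is `C_d > 0` such that for every `0 < δ < 1` the colourful
Helly theorem for the diameter holds with `n' = ⌈C_d · δ^{-(d-1)/2}⌉` colour classes. -/
theorem colourful_helly_for_diameter_optimal (d : ℕ) (hd : 2 ≤ d) :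
    ∃ C : ℝ, 0 < C ∧
      ∀ δ : ℝ, 0 < δ → δ < 1 →
        ∀ F : Fin (⌈C * δ ^ (-(((d : ℝ) - 1) / 2))⌉₊) →
            Finset (Set (EuclideanSpace ℝ (Fin d))),
          (∀ i, (F i).Nonempty) →
          (∀ i, ∀ A ∈ F i, IsCompact A ∧ Convex ℝ A) →
          (∀ choice : Fin (⌈C * δ ^ (-(((d : ℝ) - 1) / 2))⌉₊) → Set (EuclideanSpace ℝ (Fin d)),
            (∀ i, choice i ∈ F i) → 1 ≤ Metric.diam (⋂ i, choice i)) →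
          ∃ i, 1 - δ ≤ Metric.diam (⋂₀ (F i : Set (Set (EuclideanSpace ℝ (Fin d))))) := by
  obtain ⟨n, rfl⟩ : ∃ n, d = n + 1 := ⟨d - 1, by omega⟩
  set B : ℝ := 2 * √((n : ℝ) + 1) + 3 with hB
  have hB0 : 0 < B := by positivity
  refine ⟨(2 * (n + 1) + 1) * ((n + 1) * 2) * B ^ n, by positivity, ?_⟩
  intro δ hδ hδ1
  generalize hN : ⌈((2 * (n + 1) + 1) * ((n + 1) * 2) * B ^ n : ℝ) *
    δ ^ (-((((n + 1 : ℕ) : ℝ) - 1) / 2))⌉₊ = N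
  intro F hF hS hch
  by_contra hcon
  push Not at hcon
  -- the grid size
  set k : ℕ := ⌈√(((n : ℝ) + 1) / δ)⌉₊ with hk
  have hsq : 0 < √(((n : ℝ) + 1) / δ) := Real.sqrt_pos.2 (by positivity)
  have hk0 : 0 < k := Nat.ceil_pos.2 hsq
  have hkR : (0 : ℝ) < k := Nat.cast_pos.2 hk0
  have hkδ : ((n : ℝ) + 1) / k ^ 2 ≤ 2 * δ := by
    have h1 : √(((n : ℝ) + 1) / δ) ≤ k := Nat.le_ceil _
    have h2 : ((n : ℝ) + 1) / δ ≤ k ^ 2 := by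
      rw [← Real.sq_sqrt (show (0 : ℝ) ≤ ((n : ℝ) + 1) / δ by positivity)]
      exact pow_le_pow_left₀ hsq.le h1 2
    rw [div_le_iff₀ hδ] at h2
    rw [div_le_iff₀ (by positivity)]
    nlinarith
  let T := Fin (n + 1) × Bool × (Fin n → Fin (2 * k + 1))
  -- enough colours
  have hcard : Fintype.card (T × Fin (2 * (n + 1) + 1)) ≤ Fintype.card (Fin N) := by
    have h1 : (k : ℝ) ≤ √(((n : ℝ) + 1) / δ) + 1 := (Nat.ceil_lt_add_one hsq.le).le
    have hs : 1 ≤ (√δ)⁻¹ := by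
      rw [one_le_inv₀ (Real.sqrt_pos.2 hδ)]
      exact Real.sqrt_le_one.2 hδ1.le
    have h2 : ((2 * k + 1 : ℕ) : ℝ) ≤ B * (√δ)⁻¹ := by
      rw [Real.sqrt_div (by positivity), div_eq_mul_inv] at h1
      push_cast
      rw [hB]
      nlinarith
    have h3 : (((2 * k + 1 : ℕ) : ℝ)) ^ n ≤ B ^ n * δ ^ (-((((n + 1 : ℕ) : ℝ) - 1) / 2)) := by
      have e : δ ^ (-((((n + 1 : ℕ) : ℝ) - 1) / 2)) = ((√δ)⁻¹) ^ n := by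
        rw [Real.sqrt_eq_rpow, ← Real.rpow_neg hδ.le, ← Real.rpow_natCast, ← Real.rpow_mul hδ.le]
        congr 1
        push_cast
        ring
      rw [e, ← mul_pow]
      exact pow_le_pow_left₀ (by positivity) h2 n
    have h4 := Nat.le_ceil (((2 * (n + 1) + 1) * ((n + 1) * 2) * B ^ n : ℝ) *
      δ ^ (-((((n + 1 : ℕ) : ℝ) - 1) / 2)))
    rw [hN] at h4
    simp only [T, Fintype.card_prod, Fintype.card_fin, Fintype.card_bool, Fintype.card_fun]
    rw [← Nat.cast_le (α := ℝ)]
    refine le_trans ?_ h4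
    have h5 := mul_le_mul_of_nonneg_left h3
      (show (0 : ℝ) ≤ (2 * (n + 1) + 1) * ((n + 1) * 2) by positivity)
    push_cast at h5 ⊢
    linarith
  obtain ⟨φ⟩ := Function.Embedding.nonempty_of_card_le hcard
  -- bad choices for each direction
  have hbad : ∀ t : T, ∃ c : Fin (2 * (n + 1) + 1) → Set (EuclideanSpace ℝ (Fin (n + 1))),
      (∀ s, c s ∈ F (φ (t, s))) ∧ ∀ x ∈ ⋂ s, c s, ∀ y ∈ ⋂ s, c s,
        inner ℝ (chdDir n k t) (y - x) < (1 - δ) * ‖chdDir n k t‖ := by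
    intro t
    apply chd_width (by simp) (fun s => F (φ (t, s))) (fun s => hF _) (fun s => hS _)
    intro s x hx y hy
    have hu : 0 < ‖chdDir n k t‖ := lt_of_lt_of_le hkR (chd_dir_norm n k t)
    have hb : Bornology.IsBounded
        (⋂₀ (F (φ (t, s)) : Set (Set (EuclideanSpace ℝ (Fin (n + 1)))))) := by
      obtain ⟨A, hA⟩ := hF (φ (t, s))
      exact (hS _ A hA).1.isBounded.subset (Set.sInter_subset_of_mem hA)
    have h1 : ‖y - x‖ < 1 - δ := by
      rw [← dist_eq_norm]
      exact (Metric.dist_le_diam_of_mem hb hy hx).trans_lt (hcon _)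
    refine (real_inner_le_norm _ _).trans_lt ?_
    rw [mul_comm]
    exact mul_lt_mul_of_pos_right h1 hu
  choose c hcF hc using hbad
  choose g hg using hF
  classical
  let ch : Fin N → Set (EuclideanSpace ℝ (Fin (n + 1))) := fun i =>
    if h : ∃ z, φ z = i then c h.choose.1 h.choose.2 else g i
  have hchφ : ∀ t s, ch (φ (t, s)) = c t s := by
    intro t s
    have h : ∃ z, φ z = φ (t, s) := ⟨_, rfl⟩
    have e : h.choose = (t, s) := φ.injective h.choose_spec
    simp only [ch, dif_pos h]
    rw [e]
  have hchF : ∀ i, ch i ∈ F i := by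
    intro i
    by_cases h : ∃ z, φ z = i
    · obtain ⟨⟨t, s⟩, rfl⟩ := h
      rw [hchφ]
      exact hcF t s
    · simp only [ch, dif_neg h]
      exact hg i
  have hLc : IsCompact (⋂ i, ch i) := by
    let i0 : Fin N := φ ((0, true, fun _ => 0), 0)
    exact (hS i0 _ (hchF i0)).1.of_isClosed_subset
      (isClosed_iInter fun i => (hS i _ (hchF i)).1.isClosed) (Set.iInter_subset _ _)
  obtain ⟨x, hx, y, hy, hxy⟩ := chd_diam _ hLc (hch ch hchF)
  obtain ⟨t, ht⟩ := chd_net n k δ hk0 hkδ (y - x)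
  rw [Set.mem_iInter] at hx hy
  have h1 := hc t x (Set.mem_iInter.2 fun s => hchφ t s ▸ hx _) y
    (Set.mem_iInter.2 fun s => hchφ t s ▸ hy _)
  rw [dist_eq_norm] at hxy
  have h2 : 0 ≤ (1 - δ) * ‖chdDir n k t‖ := mul_nonneg (by linarith) (norm_nonneg _)
  have h3 := mul_le_mul_of_nonneg_left hxy h2
  linarith
end

section
/- Let α > 0, 0 < δ < 1, and let d be a positive integer. Then there is a constant β > 0 depending only on α, d and δ such that: for any finite family 𝓕 of n compact convex sets in ℝ^d (n ≥ 2d), if the intersection of at least α·C(n,2d) of the 2d-element subfamilies of 𝓕 has diameter at least one, then there is a subfamily 𝓕′ ⊆ 𝓕 of cardinality at least βn whose intersection has diameter at least 1 − δ. -/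
/-- `p` is a point of smallest norm in the intersection of the sets `L i`, `i ∈ J`. -/
def IsMinPt {ι V : Type*} [NormedAddCommGroup V] (L : ι → Set V) (J : Finset ι) (p : V) : Prop :=
  (∀ i ∈ J, p ∈ L i) ∧ ∀ x, (∀ i ∈ J, x ∈ L i) → ‖p‖ ≤ ‖x‖

theorem IsMinPt.unique {ι V : Type*} [NormedAddCommGroup V] [InnerProductSpace ℝ V]
    {L : ι → Set V} (hc : ∀ i, Convex ℝ (L i)) {J : Finset ι} {p q : V}
    (hp : IsMinPt L J p) (hq : IsMinPt L J q) : p = q := by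
  by_contra hne
  have hn : ‖p‖ = ‖q‖ := le_antisymm (hp.2 q hq.1) (hq.2 p hp.1)
  have h1 := (norm_midpoint_lt_iff hn).2 hne
  have h2 := hp.2 ((1 / 2 : ℝ) • (p + q)) (fun i hi => by
    rw [smul_add]
    exact hc i (hp.1 i hi) (hq.1 i hi) (by norm_num) (by norm_num) (by norm_num))
  linarith

theorem exists_minPt {ι V : Type*} [NormedAddCommGroup V] [InnerProductSpace ℝ V]
    [FiniteDimensional ℝ V] {L : ι → Set V} (hcl : ∀ i, IsClosed (L i)) (G : Finset ι)
    (hne : ∃ x, ∀ i ∈ G, x ∈ L i) : ∃ p, IsMinPt L G p := by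
  have hC : IsClosed (⋂ i ∈ G, L i) := isClosed_biInter fun i _ => hcl i
  obtain ⟨x, hx⟩ := hne
  have : ProperSpace V := FiniteDimensional.proper ℝ V
  obtain ⟨y, hy, hd⟩ := hC.exists_infDist_eq_dist ⟨x, by simpa using hx⟩ (0 : V)
  refine ⟨y, by simpa using hy, fun z hz => ?_⟩
  have := Metric.infDist_le_dist_of_mem (x := (0 : V)) (s := ⋂ i ∈ G, L i) (y := z)
    (by simpa using hz)
  rw [hd] at this
  simpa using this

theorem exists_base {ι V : Type*} [NormedAddCommGroup V] [InnerProductSpace ℝ V]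
    [FiniteDimensional ℝ V] {L : ι → Set V} (hcl : ∀ i, IsClosed (L i))
    (hc : ∀ i, Convex ℝ (L i)) (G : Finset ι) (hG : G.card = Module.finrank ℝ V + 1)
    (hne : ∃ x, ∀ i ∈ G, x ∈ L i) :
    ∃ J ⊆ G, J.card = Module.finrank ℝ V ∧ ∃ p, IsMinPt L J p ∧ ∀ i ∈ G, p ∈ L i := by
  classical
  obtain ⟨p, hp⟩ := exists_minPt hcl G hne
  let F : Option ι → Set V := fun o => o.elim (Metric.ball 0 ‖p‖) L
  have hempty : ¬ (⋂ i ∈ Finset.insertNone G, F i).Nonempty := by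
    rintro ⟨x, hx⟩
    rw [Set.mem_iInter₂] at hx
    have h0 := hx none (by simp)
    have h1 := hp.2 x (fun i hi => hx (some i) (by simpa using hi))
    simp [F] at h0
    linarith
  have : ∃ I ⊆ Finset.insertNone G, I.card = Module.finrank ℝ V + 1 ∧
      ¬ (⋂ i ∈ I, F i).Nonempty := by
    by_contra hcon
    push Not at hcon
    apply hempty
    refine Convex.helly_theorem (𝕜 := ℝ) (by simp [hG]) ?_ ?_
    · rintro (_ | i) _
      · exact convex_ball _ _
      · exact hc i
    · intro I hI hIc
      exact hcon I hI hIc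
  obtain ⟨I, hIs, hIc, hIe⟩ := this
  have hsome : ∀ i, some i ∈ I → i ∈ G := fun i hi => by simpa using hIs hi
  have hnone : none ∈ I := by
    by_contra hn
    apply hIe
    refine ⟨p, ?_⟩
    rw [Set.mem_iInter₂]
    rintro (_ | i) hi
    · exact absurd hi hn
    · exact hp.1 i (hsome i hi)
  have hJG : I.eraseNone ⊆ G := fun i hi => hsome i (by simpa using hi)
  refine ⟨I.eraseNone, hJG, ?_, p, ⟨fun i hi => hp.1 i (hJG hi), fun x hx => ?_⟩, hp.1⟩
  · have := Finset.insertNone_eraseNone I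
    have h2 := congrArg Finset.card this
    rw [Finset.card_insertNone] at h2
    have h3 : (insert none I).card = I.card := by rw [Finset.insert_eq_of_mem hnone]
    omega
  · by_contra hlt
    push Not at hlt
    apply hIe
    refine ⟨x, ?_⟩
    rw [Set.mem_iInter₂]
    rintro (_ | i) hi
    · simpa [F] using hlt
    · exact hx i (by simpa using hi)

/-- Fractional Helly theorem. -/
theorem fractional_helly {ι V : Type*} [NormedAddCommGroup V] [InnerProductSpace ℝ V]
    [FiniteDimensional ℝ V] {L : ι → Set V} (hcl : ∀ i, IsClosed (L i))
    (hc : ∀ i, Convex ℝ (L i)) (m : ℕ) (hm : Module.finrank ℝ V = m)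
    (F : Finset ι) (hF : m + 1 ≤ F.card) (S : Finset (Finset ι))
    (hS : ∀ G ∈ S, G ⊆ F ∧ G.card = m + 1 ∧ ∃ x, ∀ i ∈ G, x ∈ L i)
    (a : ℝ) (ha : 0 < a) (hcard : a * (F.card.choose (m + 1) : ℝ) ≤ S.card) :
    ∃ p, ∃ F' ⊆ F, a / (m + 1) ^ 2 * F.card ≤ F'.card ∧ ∀ i ∈ F', p ∈ L i := by
  classical
  have key : ∀ G : Finset ι, ∃ J : Finset ι, G ∈ S → J ⊆ G ∧ J.card = m ∧
      ∃ p, IsMinPt L J p ∧ ∀ i ∈ G, p ∈ L i := by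
    intro G
    by_cases hG : G ∈ S
    · obtain ⟨h1, h2, h3⟩ := hS G hG
      obtain ⟨J, hJ⟩ := exists_base hcl hc G (by omega) h3
      exact ⟨J, fun _ => by rw [hm] at hJ; exact hJ⟩
    · exact ⟨∅, fun h => absurd h hG⟩
  choose f hf using key
  have hchoose := Nat.choose_succ_right_eq F.card m
  have hpos1 : 0 < F.card.choose m := Nat.choose_pos (by omega)
  have hcast : ((F.card.choose (m + 1) : ℕ) : ℝ) * (m + 1) =
      (F.card.choose m : ℝ) * ((F.card : ℝ) - m) := by
    have := congrArg (Nat.cast (R := ℝ)) hchoose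
    push_cast [Nat.cast_sub (by omega : m ≤ F.card)] at this
    exact this
  have hm1 : (0 : ℝ) < (m : ℝ) + 1 := by positivity
  obtain ⟨J, hJ, hb⟩ := Finset.exists_le_card_fiber_of_nsmul_le_card_of_maps_to
    (s := S) (t := F.powersetCard m) (f := f) (b := a * ((F.card : ℝ) - m) / (m + 1))
    (fun G hG => Finset.mem_powersetCard.2
      ⟨(hf G hG).1.trans (hS G hG).1, (hf G hG).2.1⟩)
    (Finset.powersetCard_nonempty.2 (by omega))
    (by
      refine le_trans (le_of_eq ?_) hcard
      rw [Finset.card_powersetCard, nsmul_eq_mul]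
      field_simp
      linarith)
  have hFr : (m : ℝ) + 1 ≤ F.card := by exact_mod_cast hF
  have hfrac : a / (m + 1) ^ 2 * F.card ≤ a * ((F.card : ℝ) - m) / (m + 1) := by
    rw [div_mul_eq_mul_div, div_le_div_iff₀ (by positivity) hm1]
    have : (F.card : ℝ) ≤ ((F.card : ℝ) - m) * (m + 1) := by nlinarith [Nat.cast_nonneg (α := ℝ) m]
    nlinarith [mul_le_mul_of_nonneg_left this (mul_pos ha hm1).le]
  have hbpos : 0 < a * ((F.card : ℝ) - m) / (m + 1) := by
    apply div_pos (mul_pos ha (by linarith)) hm1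
  have hfib : (S.filter fun G => f G = J).Nonempty := by
    rw [← Finset.card_pos]
    exact_mod_cast hbpos.trans_le hb
  obtain ⟨G0, hG0⟩ := hfib
  rw [Finset.mem_filter] at hG0
  obtain ⟨p, hp, -⟩ := (hf G0 hG0.1).2.2
  rw [hG0.2] at hp
  refine ⟨p, F.filter fun i => p ∈ L i, Finset.filter_subset _ _, ?_, fun i hi =>
    (Finset.mem_filter.1 hi).2⟩
  refine hfrac.trans (hb.trans ?_)
  norm_cast
  refine le_trans (Finset.card_le_card (t := (F.filter fun i => p ∈ L i).image
    fun i => insert i J) ?_) Finset.card_image_le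
  intro G hG
  rw [Finset.mem_filter] at hG
  obtain ⟨hGS, rfl⟩ := hG
  obtain ⟨h1, h2, q, hq, hqG⟩ := hf G hGS
  obtain rfl := hp.unique hc hq
  obtain ⟨i, hi, hieq⟩ : ∃ i, i ∉ f G ∧ insert i (f G) = G := by
    have : (G \ f G).card = 1 := by
      rw [Finset.card_sdiff_of_subset h1, h2, (hS G hGS).2.1]; omega
    obtain ⟨i, hi⟩ := Finset.card_eq_one.1 this
    have hi' : i ∈ G \ f G := by simp [hi]
    rw [Finset.mem_sdiff] at hi'
    refine ⟨i, hi'.2, ?_⟩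
    rw [Finset.insert_eq, ← hi, Finset.sdiff_union_of_subset h1]
  have hiG : i ∈ G := hieq ▸ Finset.mem_insert_self _ _
  rw [Finset.mem_image]
  exact ⟨i, Finset.mem_filter.2 ⟨(hS G hGS).1 hiG, hqG i hiG⟩, hieq⟩

/-- A finite net of directions. -/
theorem exists_net_s9 (d : ℕ) (ε : ℝ) (hε : 0 < ε) :
    ∃ N : Finset (EuclideanSpace ℝ (Fin d)), (∀ u ∈ N, ‖u‖ = 1) ∧
      ∀ z, z ≠ 0 → ∃ u ∈ N, (1 - ε) * ‖z‖ ≤ inner ℝ z u := by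
  obtain ⟨t, hts, htf, hcov⟩ := finite_cover_balls_of_compact
    (isCompact_sphere (0 : EuclideanSpace ℝ (Fin d)) 1) hε
  refine ⟨htf.toFinset, fun u hu => by simpa using hts (by simpa using hu), fun z hz => ?_⟩
  have hz0 : 0 < ‖z‖ := norm_pos_iff.2 hz
  have hmem : ‖z‖⁻¹ • z ∈ Metric.sphere (0 : EuclideanSpace ℝ (Fin d)) 1 := by
    simp [norm_smul, hz0.ne']
  have := hcov hmem
  simp only [Set.mem_iUnion, Metric.mem_ball] at this
  obtain ⟨u, hu, hdist⟩ := this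
  refine ⟨u, by simpa using hu, ?_⟩
  set v := ‖z‖⁻¹ • z with hv
  have hzv : z = ‖z‖ • v := by rw [hv, smul_smul, mul_inv_cancel₀ hz0.ne', one_smul]
  have hv1 : ‖v‖ = 1 := by simpa using hmem
  have h1 : inner ℝ v (v - u) ≤ ‖v‖ * ‖v - u‖ := real_inner_le_norm _ _
  rw [inner_sub_right, real_inner_self_eq_norm_sq, hv1] at h1
  rw [dist_eq_norm] at hdist
  have h2 : 1 - ε ≤ inner ℝ v u := by linarith
  have h3 : inner ℝ z u = ‖z‖ * inner ℝ v u := by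
    conv_lhs => rw [hzv]
    rw [real_inner_smul_left]
  rw [h3]
  nlinarith

/-- A convex set with two points far apart has a pair at prescribed width `c` in some direction
of the net. -/
theorem exists_pair {d : ℕ} {K : Set (EuclideanSpace ℝ (Fin d))} (hK : Convex ℝ K)
    {δ : ℝ} (hδ0 : 0 < δ) (hδ1 : δ < 1) (hdiam : 1 ≤ Metric.diam K)
    {N : Finset (EuclideanSpace ℝ (Fin d))}
    (hN : ∀ z, z ≠ 0 → ∃ u ∈ N, (1 - δ / 2) * ‖z‖ ≤ inner ℝ z u) :
    ∃ u ∈ N, ∃ x ∈ K, ∃ y ∈ K, inner ℝ (x - y) u = 1 - δ := by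
  obtain ⟨x, hx, y, hy, hxy⟩ : ∃ x ∈ K, ∃ y ∈ K, 1 - δ / 2 < dist x y := by
    by_contra hcon
    push Not at hcon
    have := Metric.diam_le_of_forall_dist_le (by linarith) hcon
    linarith
  rw [dist_eq_norm] at hxy
  obtain ⟨u, hu, h⟩ := hN (x - y) (norm_pos_iff.1 (by linarith))
  have hge : 1 - δ ≤ inner ℝ (x - y) u := by nlinarith
  set s : ℝ := inner ℝ (x - y) u with hs
  have hs0 : 0 < s := by linarith
  refine ⟨u, hu, x, hx, (1 - (1 - δ) / s) • x + ((1 - δ) / s) • y,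
    hK hx hy ?_ (div_nonneg (by linarith) hs0.le) (by ring), ?_⟩
  · rw [sub_nonneg, div_le_one hs0]; exact hge
  · have : x - ((1 - (1 - δ) / s) • x + ((1 - δ) / s) • y) = ((1 - δ) / s) • (x - y) := by
      module
    rw [this, real_inner_smul_left, ← hs]
    field_simp


/-- **Fractional Helly theorem for the diameter.**  For `α > 0`, `0 < δ < 1` and a positive
integer `d`, there is `β > 0` depending only on `α`, `d`, `δ` such that: for any finite family
`𝓕` of `n ≥ 2d` compact convex sets in `ℝ^d`, if at least `α · C(n, 2d)` of the `2d`-element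
subfamilies have intersection of diameter at least one, then some subfamily of cardinality at
least `β n` has intersection of diameter at least `1 - δ`. -/
theorem fractional_helly_for_diameter (α : ℝ) (hα : 0 < α)
    (δ : ℝ) (hδ0 : 0 < δ) (hδ1 : δ < 1) (d : ℕ) (hd : 0 < d) :
    ∃ β : ℝ, 0 < β ∧
      ∀ F : Finset (Set (EuclideanSpace ℝ (Fin d))),
        2 * d ≤ F.card →
        (∀ A ∈ F, IsCompact A ∧ Convex ℝ A) →
        α * (F.card.choose (2 * d) : ℝ) ≤
          ({G : Finset (Set (EuclideanSpace ℝ (Fin d))) |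
            G ⊆ F ∧ G.card = 2 * d ∧
              1 ≤ Metric.diam (⋂₀ (G : Set (Set (EuclideanSpace ℝ (Fin d)))))}.ncard : ℝ) →
        ∃ F' ⊆ F, β * (F.card : ℝ) ≤ (F'.card : ℝ) ∧
          1 - δ ≤ Metric.diam (⋂₀ (F' : Set (Set (EuclideanSpace ℝ (Fin d))))) := by

  classical
  obtain ⟨N, hN1, hN⟩ := exists_net_s9 d (δ / 2) (by linarith)
  have hNne : N.Nonempty := by
    have : Nonempty (Fin d) := ⟨⟨0, hd⟩⟩
    obtain ⟨z, hz⟩ := exists_ne (0 : EuclideanSpace ℝ (Fin d))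
    obtain ⟨u, hu, -⟩ := hN z hz
    exact ⟨u, hu⟩
  have hNpos : (0 : ℝ) < N.card := by exact_mod_cast Finset.card_pos.2 hNne
  refine ⟨α / N.card / (2 * d) ^ 2, by positivity, fun F hF hFc hcount => ?_⟩
  set T : Finset (Finset (Set (EuclideanSpace ℝ (Fin d)))) := (F.powersetCard (2 * d)).filter
    fun G => 1 ≤ Metric.diam (⋂₀ (G : Set (Set (EuclideanSpace ℝ (Fin d))))) with hT
  have hTeq : {G : Finset (Set (EuclideanSpace ℝ (Fin d))) | G ⊆ F ∧ G.card = 2 * d ∧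
      1 ≤ Metric.diam (⋂₀ (G : Set (Set (EuclideanSpace ℝ (Fin d)))))} = (T : Set (Finset (Set (EuclideanSpace ℝ (Fin d))))) := by
    ext G
    simp [hT, Finset.mem_powersetCard, and_assoc]
  rw [hTeq, Set.ncard_coe_finset] at hcount
  have hdir : ∀ G : Finset (Set (EuclideanSpace ℝ (Fin d))), ∃ u : EuclideanSpace ℝ (Fin d), G ∈ T → u ∈ N ∧
      ∃ x y : EuclideanSpace ℝ (Fin d), (∀ A ∈ G, x ∈ A ∧ y ∈ A) ∧ inner ℝ (x - y) u = 1 - δ := by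
    intro G
    by_cases hG : G ∈ T
    · have hG' := hG
      rw [hT, Finset.mem_filter, Finset.mem_powersetCard] at hG'
      have hconv : Convex ℝ (⋂₀ (G : Set (Set (EuclideanSpace ℝ (Fin d))))) :=
        convex_sInter fun A hA => (hFc A (hG'.1.1 hA)).2
      obtain ⟨u, hu, x, hx, y, hy, hxy⟩ := exists_pair hconv hδ0 hδ1 hG'.2 hN
      exact ⟨u, fun _ => ⟨hu, x, y, fun A hA => ⟨hx A hA, hy A hA⟩, hxy⟩⟩
    · exact ⟨0, fun h => absurd h hG⟩
  choose f hf using hdir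
  obtain ⟨u, huN, hub⟩ := Finset.exists_le_card_fiber_of_nsmul_le_card_of_maps_to
    (s := T) (t := N) (f := f) (b := α / N.card * (F.card.choose (2 * d) : ℝ))
    (fun G hG => (hf G hG).1) hNne
    (by
      refine le_trans (le_of_eq ?_) hcount
      rw [nsmul_eq_mul]
      field_simp)
  have hu1 : ‖u‖ = 1 := hN1 u huN
  -- the hyperplane of pairs
  let v : WithLp 2 (EuclideanSpace ℝ (Fin d) × EuclideanSpace ℝ (Fin d)) := WithLp.toLp 2 (u, -u)
  have hv0 : v ≠ 0 := by
    intro h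
    have h2 : u = 0 := congrArg (fun w : WithLp 2 (EuclideanSpace ℝ (Fin d) × EuclideanSpace ℝ (Fin d)) => w.fst) h
    rw [h2] at hu1
    simp at hu1
  have hfin : Module.finrank ℝ (WithLp 2 (EuclideanSpace ℝ (Fin d) × EuclideanSpace ℝ (Fin d))) = (2 * d - 1) + 1 := by
    rw [(WithLp.linearEquiv 2 ℝ (EuclideanSpace ℝ (Fin d) × EuclideanSpace ℝ (Fin d))).finrank_eq, Module.finrank_prod,
      finrank_euclideanSpace_fin]
    omega
  have : Fact (Module.finrank ℝ (WithLp 2 (EuclideanSpace ℝ (Fin d) × EuclideanSpace ℝ (Fin d))) = (2 * d - 1) + 1) := ⟨hfin⟩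
  have hW : Module.finrank ℝ (Submodule.span ℝ {v})ᗮ = 2 * d - 1 :=
    Submodule.finrank_orthogonal_span_singleton hv0
  let W := (Submodule.span ℝ {v})ᗮ
  have hWmem : ∀ w : WithLp 2 (EuclideanSpace ℝ (Fin d) × EuclideanSpace ℝ (Fin d)), w ∈ W ↔ inner ℝ u (w.fst - w.snd) = 0 := by
    intro w
    rw [Submodule.mem_orthogonal_singleton_iff_inner_right, WithLp.prod_inner_apply]
    simp [v, inner_sub_right, ← sub_eq_add_neg]
  let φ : W → EuclideanSpace ℝ (Fin d) := fun w => (1 - δ) • u + (w : WithLp 2 (EuclideanSpace ℝ (Fin d) × EuclideanSpace ℝ (Fin d))).fst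
  let ψ : W → EuclideanSpace ℝ (Fin d) := fun w => (w : WithLp 2 (EuclideanSpace ℝ (Fin d) × EuclideanSpace ℝ (Fin d))).snd
  have hφ : Continuous φ := by fun_prop
  have hψ : Continuous ψ := by fun_prop
  let L : {A // A ∈ F} → Set W := fun A => {w | φ w ∈ A.1 ∧ ψ w ∈ A.1}
  have hLcl : ∀ A, IsClosed (L A) := fun A =>
    ((hFc A.1 A.2).1.isClosed.preimage hφ).inter ((hFc A.1 A.2).1.isClosed.preimage hψ)
  have hLc : ∀ A, Convex ℝ (L A) := by
    intro A w hw w' hw' a b ha hb hab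
    have hA := (hFc A.1 A.2).2
    refine ⟨?_, hA hw.2 hw'.2 ha hb hab⟩
    have := hA hw.1 hw'.1 ha hb hab
    convert this using 1
    have hb' : b = 1 - a := by linarith
    subst hb'
    change (1 - δ) • u + (a • (w : WithLp 2 (EuclideanSpace ℝ (Fin d) × EuclideanSpace ℝ (Fin d))).fst + (1 - a) • (w' : WithLp 2 (EuclideanSpace ℝ (Fin d) × EuclideanSpace ℝ (Fin d))).fst)
      = a • ((1 - δ) • u + (w : WithLp 2 (EuclideanSpace ℝ (Fin d) × EuclideanSpace ℝ (Fin d))).fst) +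
        (1 - a) • ((1 - δ) • u + (w' : WithLp 2 (EuclideanSpace ℝ (Fin d) × EuclideanSpace ℝ (Fin d))).fst)
    module
  have h2d : 2 * d - 1 + 1 = 2 * d := by omega
  have hTF : ∀ G ∈ T, G ⊆ F ∧ G.card = 2 * d := fun G hG =>
    Finset.mem_powersetCard.1 (Finset.mem_filter.1 hG).1
  let g : Finset (Set (EuclideanSpace ℝ (Fin d))) → Finset {A // A ∈ F} := fun G => G.subtype (· ∈ F)
  have hginj : Set.InjOn g (T.filter fun G => f G = u : Finset _) := by
    intro G hG G' hG' h
    have h1 := (hTF G (Finset.mem_filter.1 hG).1).1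
    have h2 := (hTF G' (Finset.mem_filter.1 hG').1).1
    have := congrArg (Finset.map (Function.Embedding.subtype (· ∈ F))) h
    rwa [Finset.subtype_map_of_mem h1, Finset.subtype_map_of_mem h2] at this
  obtain ⟨p, F', -, hF'c, hF'⟩ := fractional_helly hLcl hLc (2 * d - 1) hW F.attach
    (by rw [Finset.card_attach]; omega) ((T.filter fun G => f G = u).image g)
    (by
      intro G' hG'
      obtain ⟨G, hG, rfl⟩ := Finset.mem_image.1 hG'
      obtain ⟨hGT, hGu⟩ := Finset.mem_filter.1 hG
      refine ⟨fun A _ => Finset.mem_attach _ _, ?_, ?_⟩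
      · rw [h2d, ← (hTF G hGT).2, ← Finset.card_map (Function.Embedding.subtype (· ∈ F)),
          Finset.subtype_map_of_mem (hTF G hGT).1]
      · obtain ⟨-, x, y, hxy, hin⟩ := hf G hGT
        rw [hGu] at hin
        refine ⟨⟨WithLp.toLp 2 (x - (1 - δ) • u, y), ?_⟩, ?_⟩
        · rw [hWmem]
          change inner ℝ u (x - (1 - δ) • u - y) = 0
          have : x - (1 - δ) • u - y = (x - y) - (1 - δ) • u := by module
          rw [this, inner_sub_right, real_inner_comm, hin, real_inner_smul_right,
            real_inner_self_eq_norm_sq, hu1]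
          ring
        · intro A hA
          have hA' : A.1 ∈ G := by simpa [g] using hA
          refine ⟨?_, (hxy A.1 hA').2⟩
          change (1 - δ) • u + (x - (1 - δ) • u) ∈ A.1
          rw [add_sub_cancel]
          exact (hxy A.1 hA').1)
    (α / N.card) (by positivity)
    (by rw [Finset.card_attach, h2d, Finset.card_image_of_injOn hginj]; exact hub)
  have h2dr : ((2 * d - 1 : ℕ) : ℝ) + 1 = 2 * d := by exact_mod_cast h2d
  rw [h2dr, Finset.card_attach] at hF'c
  refine ⟨F'.map (Function.Embedding.subtype (· ∈ F)), ?_, ?_, ?_⟩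
  · intro A hA
    obtain ⟨B, -, rfl⟩ := Finset.mem_map.1 hA
    exact B.2
  · rw [Finset.card_map]; exact hF'c
  · have hFpos : (0 : ℝ) < F.card := by
      exact_mod_cast (show 0 < F.card by omega)
    have hdr : (0 : ℝ) < d := by exact_mod_cast hd
    have hF'ne : F'.Nonempty := by
      rw [← Finset.card_pos]
      have : (0 : ℝ) < F'.card := lt_of_lt_of_le (by positivity) hF'c
      exact_mod_cast this
    obtain ⟨B, hB⟩ := hF'ne
    have hbdd : Bornology.IsBounded
        (⋂₀ ((F'.map (Function.Embedding.subtype (· ∈ F)) : Finset (Set (EuclideanSpace ℝ (Fin d)))) : Set (Set (EuclideanSpace ℝ (Fin d))))) :=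
      (hFc B.1 B.2).1.isBounded.subset (Set.sInter_subset_of_mem (by
        rw [Finset.mem_coe]; exact Finset.mem_map_of_mem _ hB))
    have hx : φ p ∈
        ⋂₀ ((F'.map (Function.Embedding.subtype (· ∈ F)) : Finset (Set (EuclideanSpace ℝ (Fin d)))) : Set (Set (EuclideanSpace ℝ (Fin d)))) := by
      intro A hA
      obtain ⟨B, hB, rfl⟩ := Finset.mem_map.1 (Finset.mem_coe.1 hA)
      exact (hF' B hB).1
    have hy : ψ p ∈
        ⋂₀ ((F'.map (Function.Embedding.subtype (· ∈ F)) : Finset (Set (EuclideanSpace ℝ (Fin d)))) : Set (Set (EuclideanSpace ℝ (Fin d)))) := by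
      intro A hA
      obtain ⟨B, hB, rfl⟩ := Finset.mem_map.1 (Finset.mem_coe.1 hA)
      exact (hF' B hB).2
    refine le_trans ?_ (Metric.dist_le_diam_of_mem hbdd hx hy)
    rw [dist_eq_norm]
    have h1 := real_inner_le_norm u (φ p - ψ p)
    have h2 := (hWmem p.1).1 p.2
    have h3 : φ p - ψ p = (1 - δ) • u + (p.1.fst - p.1.snd) := by
      simp only [φ, ψ]; module
    have h4 : inner ℝ u (φ p - ψ p) = 1 - δ := by
      rw [h3, inner_add_right, h2, real_inner_smul_right, real_inner_self_eq_norm_sq, hu1]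
      ring
    rw [h4, hu1] at h1
    linarith
end

section
/- Let d and m be positive integers and 0 < δ < 1. Then there exists a positive integer n = n(d,m,δ) such that: given any family T₁, T₂, …, T_n of n sets in ℝ^d, each of diameter at least one, there is a partition of {T₁,…,T_n} into m parts A₁, A₂, …, A_m such that the intersection ∩_{i=1}^{m} conv(∪A_i) of the convex hulls of the unions of the parts has diameter at least 1 − δ. -/
open Finset Module in
/-- Carathéodory for indexed families. -/
lemma tvd_caratheodory {ι E : Type*} [AddCommGroup E] [Module ℝ E] [FiniteDimensional ℝ E]
    (z : ι → E) (R : Finset ι) (p : E) (hp : p ∈ convexHull ℝ (z '' (R : Set ι))) :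
    ∃ C ⊆ R, #C ≤ finrank ℝ E + 1 ∧ p ∈ convexHull ℝ (z '' (C : Set ι)) := by
  classical
  rw [convexHull_eq_union] at hp
  simp only [Set.mem_iUnion] at hp
  obtain ⟨t, hts, hind, hpt⟩ := hp
  obtain ⟨C, hC, hinj, himg⟩ :=
    Finset.exists_subset_injOn_image_eq_of_surjOn (R : Set ι) t (f := z) hts
  refine ⟨C, by exact_mod_cast hC, ?_, ?_⟩
  · have h1 := hind.card_le_finrank_succ
    have h2 := Submodule.finrank_le (vectorSpan ℝ (Set.range ((↑) : t → E)))
    have h3 : #C = #t := by rw [← himg, Finset.card_image_of_injOn hinj]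
    simp only [Fintype.card_coe] at h1
    omega
  · rw [← himg] at hpt
    simpa using hpt

open Finset Module in
/-- Greedy extraction of disjoint parts all capturing a very deep point. -/
lemma tvd_greedy {ι E : Type*} [DecidableEq ι] [AddCommGroup E] [Module ℝ E]
    [FiniteDimensional ℝ E]
    (z : ι → E) (p : E) (k : ℕ) : ∀ (S : Finset ι),
    (∀ R ⊆ S, #(S \ R) ≤ k * (finrank ℝ E + 1) → p ∈ convexHull ℝ (z '' (R : Set ι))) →
    ∃ f : ι → Fin (k + 1), ∀ i, p ∈ convexHull ℝ (z '' {j | j ∈ S ∧ f j = i}) := by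
  induction k with
  | zero =>
    intro S h
    refine ⟨fun _ => 0, fun i => ?_⟩
    have := h S (Finset.Subset.refl _) (by simp)
    refine convexHull_mono (Set.image_mono ?_) this
    intro j hj
    exact ⟨by simpa using hj, by ext; simp⟩
  | succ k ih =>
    intro S h
    obtain ⟨C, hCS, hCc, hpC⟩ := tvd_caratheodory z S p (h S (Finset.Subset.refl _) (by simp))
    obtain ⟨f, hf⟩ := ih (S \ C) (by
      intro R hR hRc
      refine h R (hR.trans Finset.sdiff_subset) ?_
      have h1 : S \ R ⊆ ((S \ C) \ R) ∪ C := by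
        intro j hj
        simp only [Finset.mem_union, Finset.mem_sdiff] at hj ⊢
        tauto
      have h2 := (Finset.card_le_card h1).trans (Finset.card_union_le _ _)
      rw [Nat.succ_mul]
      omega)
    refine ⟨fun j => if j ∈ C then Fin.last _ else (f j).castSucc, fun i => ?_⟩
    induction i using Fin.lastCases with
    | last =>
      refine convexHull_mono (Set.image_mono ?_) hpC
      intro j hj
      have hj' : j ∈ C := by simpa using hj
      exact ⟨hCS hj', by simp [hj']⟩
    | cast i =>
      refine convexHull_mono (Set.image_mono ?_) (hf i)
      rintro j ⟨hj, hji⟩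
      rw [Finset.mem_sdiff] at hj
      exact ⟨hj.1, by simp [hj.2, hji]⟩

open Finset Module in
/-- A weak form of Tverberg's theorem. -/
lemma tvd_tverberg {ι E : Type*} [AddCommGroup E] [Module ℝ E]
    [FiniteDimensional ℝ E] (z : ι → E) (k : ℕ) (S : Finset ι)
    (hS : (finrank ℝ E + 1) * (k * (finrank ℝ E + 1)) < #S) :
    ∃ (f : ι → Fin (k + 1)) (p : E), ∀ i, p ∈ convexHull ℝ (z '' {j | j ∈ S ∧ f j = i}) := by
  classical
  set K := finrank ℝ E + 1 with hK
  let F : Finset (Finset ι) := {R ∈ S.powerset | #(S \ R) ≤ k * K}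
  have key : (⋂ R ∈ F, convexHull ℝ (z '' (R : Set ι))).Nonempty := by
    refine Convex.helly_theorem' (𝕜 := ℝ) (fun R _ => convex_convexHull ℝ _) ?_
    intro I hI hIc
    have h1 : #(I.biUnion fun R => S \ R) ≤ #I * (k * K) :=
      Finset.card_biUnion_le_card_mul _ _ _ fun R hR => (Finset.mem_filter.1 (hI hR)).2
    have h2 : #I * (k * K) ≤ K * (k * K) := Nat.mul_le_mul_right _ hIc
    obtain ⟨j, hjS, hj⟩ := Finset.exists_mem_notMem_of_card_lt_card (h1.trans h2 |>.trans_lt hS)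
    refine ⟨z j, Set.mem_iInter₂.2 fun R hR => subset_convexHull ℝ _ ⟨j, ?_, rfl⟩⟩
    by_contra hc
    exact hj (Finset.mem_biUnion.2 ⟨R, hR, Finset.mem_sdiff.2 ⟨hjS, by simpa using hc⟩⟩)
  obtain ⟨p, hp⟩ := key
  obtain ⟨f, hf⟩ := tvd_greedy z p k S (by
    intro R hR hc
    exact Set.mem_iInter₂.1 hp R (Finset.mem_filter.2 ⟨Finset.mem_powerset.2 hR, hc⟩))
  exact ⟨f, p, hf⟩

/-- **Tverberg's theorem for the diameter.**  For positive integers `d`, `m` and `0 < δ < 1`,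
there is `n = n(d, m, δ)` such that: given any `n` sets in `ℝ^d`, each of diameter at least
one, they can be partitioned into `m` parts `A₁, …, A_m` so that the intersection
`⋂ᵢ conv(∪ Aᵢ)` has diameter at least `1 - δ`. -/
theorem tverberg_for_diameter (d m : ℕ) (hd : 0 < d) (hm : 0 < m)
    (δ : ℝ) (hδ0 : 0 < δ) (hδ1 : δ < 1) :
    ∃ n : ℕ, 0 < n ∧
      ∀ T : Fin n → Set (EuclideanSpace ℝ (Fin d)),
        (∀ j, 1 ≤ Metric.diam (T j)) →
        ∃ f : Fin n → Fin m,
          1 - δ ≤ Metric.diam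
            (⋂ i : Fin m, convexHull ℝ (⋃ j ∈ {j : Fin n | f j = i}, T j)) := by
  classical
  obtain ⟨k, rfl⟩ : ∃ k, m = k + 1 := ⟨m - 1, by omega⟩
  let V := EuclideanSpace ℝ (Fin d)
  obtain ⟨t, hts, htf, hcov⟩ := finite_cover_balls_of_compact
    (isCompact_sphere (0 : V) 1) (half_pos hδ0)
  lift t to Finset V using htf
  set N := (Module.finrank ℝ (V × V) + 1) * (k * (Module.finrank ℝ (V × V) + 1)) with hN
  refine ⟨t.card * N + 1, Nat.succ_pos _, fun T hT => ?_⟩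
  have hbd : ∀ j, Bornology.IsBounded (T j) := by
    intro j
    by_contra hc
    have := hT j
    rw [Metric.diam_eq_zero_of_unbounded hc] at this
    linarith
  have hxy : ∀ j, ∃ x y : V, ∃ u ∈ t, x ∈ T j ∧ y ∈ T j ∧ 1 - δ ≤ inner ℝ u (y - x) := by
    intro j
    have h1 : ∃ x ∈ T j, ∃ y ∈ T j, 1 - δ / 2 < dist x y := by
      by_contra! hc
      have := Metric.diam_le_of_forall_dist_le (by linarith) hc
      linarith [hT j]
    obtain ⟨x, hx, y, hy, hd⟩ := h1
    rw [dist_comm, dist_eq_norm] at hd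
    set w := y - x with hw
    have hpos : 0 < ‖w‖ := by linarith
    have hsph : (‖w‖⁻¹ • w) ∈ Metric.sphere (0 : V) 1 := by
      rw [mem_sphere_zero_iff_norm, norm_smul, norm_inv, norm_norm, inv_mul_cancel₀ hpos.ne']
    obtain ⟨u, hu, hwu⟩ := Set.mem_iUnion₂.1 (hcov hsph)
    refine ⟨x, y, u, hu, hx, hy, ?_⟩
    set v := ‖w‖⁻¹ • w with hv
    have hvn : ‖v‖ = 1 := mem_sphere_zero_iff_norm.1 hsph
    have hwv : w = ‖w‖ • v := by rw [hv, smul_inv_smul₀ hpos.ne']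
    have h2 : inner ℝ (v - u) v ≤ δ / 2 := by
      have := real_inner_le_norm (v - u) v
      rw [hvn, mul_one] at this
      rw [Metric.mem_ball, dist_eq_norm] at hwu
      linarith
    rw [inner_sub_left, real_inner_self_eq_norm_sq, hvn] at h2
    rw [← hw, hwv, inner_smul_right]
    nlinarith
  choose x y u hut hx hy hin using hxy
  obtain ⟨c, hct, hc⟩ := Finset.exists_lt_card_fiber_of_mul_lt_card_of_maps_to
    (s := Finset.univ) (t := t) (f := u) (n := N) (fun j _ => hut j) (by simp)
  obtain ⟨f, p, hp⟩ := tvd_tverberg (fun j => ((x j, y j) : V × V)) k _ hc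
  refine ⟨f, ?_⟩
  have hall : ∀ i, p.1 ∈ convexHull ℝ (⋃ j ∈ {j | f j = i}, T j) ∧
      p.2 ∈ convexHull ℝ (⋃ j ∈ {j | f j = i}, T j) ∧ 1 - δ ≤ inner ℝ c (p.2 - p.1) := by
    intro i
    set H := convexHull ℝ (⋃ j ∈ {j | f j = i}, T j) with hH
    have hconv : Convex ℝ ((H ×ˢ H) ∩ {q : V × V | 1 - δ ≤ inner ℝ c (q.2 - q.1)}) := by
      refine ((convex_convexHull ℝ _).prod (convex_convexHull ℝ _)).inter
        (convex_halfSpace_ge (f := fun q : V × V => inner ℝ c (q.2 - q.1)) ⟨?_, ?_⟩ _)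
      · intro a b
        simp only [Prod.fst_add, Prod.snd_add, inner_sub_right, inner_add_right]
        ring
      · intro r a
        simp only [Prod.smul_fst, Prod.smul_snd, inner_sub_right, inner_smul_right, smul_eq_mul]
        ring
    have := convexHull_min ?_ hconv (hp i)
    · exact ⟨this.1.1, this.1.2, this.2⟩
    · rintro _ ⟨j, ⟨hj, hji⟩, rfl⟩
      have hjc : u j = c := (Finset.mem_filter.1 hj).2
      refine ⟨⟨subset_convexHull ℝ _ (Set.mem_biUnion hji (hx j)),
        subset_convexHull ℝ _ (Set.mem_biUnion hji (hy j))⟩, ?_⟩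
      rw [← hjc]
      exact hin j
  have hbdd : Bornology.IsBounded
      (⋂ i : Fin (k + 1), convexHull ℝ (⋃ j ∈ {j | f j = i}, T j)) := by
    refine Bornology.IsBounded.subset ?_ (Set.iInter_subset _ 0)
    rw [isBounded_convexHull]
    exact (Bornology.isBounded_biUnion (Set.toFinite _)).2 fun j _ => hbd j
  have hdist := Metric.dist_le_diam_of_mem hbdd (Set.mem_iInter.2 fun i => (hall i).2.1)
    (Set.mem_iInter.2 fun i => (hall i).1)
  refine le_trans ?_ hdist
  have hc1 : ‖c‖ = 1 := mem_sphere_zero_iff_norm.1 (hts hct)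
  have h3 := real_inner_le_norm c (p.2 - p.1)
  rw [hc1, one_mul] at h3
  rw [dist_eq_norm]
  exact (hall 0).2.2.trans h3
end

section
/- Let d be a positive integer and 0 < δ < 1. There is a constant λ = λ(δ,d) > 0 such that: for any finite family 𝓕 of compact sets in ℝ^d, each of diameter at least one, with |𝓕| ≥ 2d, there is a convex set K of diameter at least 1 − δ such that K ⊆ conv(∪A) for at least λ·C(|𝓕|,2d) subsets A ⊆ 𝓕 of cardinality 2d. -/
theorem sel_nearest {V : Type*} [NormedAddCommGroup V] [InnerProductSpace ℝ V]
    {C : Set V} (hC : Convex ℝ C) {p q : V} (hq : q ∈ C) (h : ∀ w ∈ C, dist p q ≤ dist p w) :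
    ∀ w ∈ C, inner ℝ (p - q) (w - q) ≤ 0 := by
  rw [← norm_eq_iInf_iff_real_inner_le_zero hC hq]
  have : Nonempty C := ⟨⟨q, hq⟩⟩
  apply le_antisymm
  · apply le_ciInf
    intro w
    simpa [dist_eq_norm] using h w w.2
  · exact ciInf_le (f := fun w : C => ‖p - w‖) ⟨0, by rintro _ ⟨w, rfl⟩; positivity⟩ ⟨q, hq⟩

theorem sel_colorful {V : Type*} [NormedAddCommGroup V] [InnerProductSpace ℝ V]
    [FiniteDimensional ℝ V] {ι κ : Type*} [Fintype κ] [DecidableEq κ]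
    (hκ : Module.finrank ℝ V + 1 = Fintype.card κ) (z : ι → V) (p : V) (B : κ → Finset ι)
    (hB : ∀ k, p ∈ convexHull ℝ (z '' (B k : Set ι))) :
    ∃ f : κ → ι, (∀ k, f k ∈ B k) ∧ p ∈ convexHull ℝ (Set.range (z ∘ f)) := by
  classical
  have hne : (Fintype.piFinset B).Nonempty := by
    rw [Fintype.piFinset_nonempty]
    intro k
    by_contra hk
    rw [Finset.not_nonempty_iff_eq_empty] at hk
    have := hB k
    simp [hk] at this
  have : Nonempty κ := Fintype.card_pos_iff.1 (by omega)
  obtain ⟨f, hf, hmin⟩ := Finset.exists_min_image (Fintype.piFinset B)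
    (fun f => Metric.infDist p (convexHull ℝ (Set.range (z ∘ f)))) hne
  rw [Fintype.mem_piFinset] at hf
  refine ⟨f, hf, ?_⟩
  have hcomp : IsCompact (convexHull ℝ (Set.range (z ∘ f))) :=
    (Set.finite_range _).isCompact_convexHull (𝕜 := ℝ)
  have hnon : (convexHull ℝ (Set.range (z ∘ f))).Nonempty := by
    simpa using Set.range_nonempty (z ∘ f)
  obtain ⟨q, hq, hqd⟩ := hcomp.exists_infDist_eq_dist hnon p
  by_cases hpq : p = q
  · rwa [hpq]
  exfalso
  have hv : p - q ≠ 0 := sub_ne_zero.2 hpq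
  have hle := sel_nearest (convex_convexHull ℝ _) hq
    (fun w hw => hqd ▸ Metric.infDist_le_dist_of_mem hw)
  -- the nearest point avoids a colour
  obtain ⟨κ', _, y, w, hy, hai, hw, hw1, hwq⟩ := eq_pos_convex_span_of_mem_convexHull hq
  have hz : ∀ i, inner ℝ (p - q) (y i - q) = 0 := by
    have h1 : ∑ i, w i * inner ℝ (p - q) (y i - q) = 0 := by
      have : ∑ i, w i • (y i - q) = 0 := by
        simp only [smul_sub, Finset.sum_sub_distrib, ← Finset.sum_smul, hw1, hwq]
        simp
      have h2 := congrArg (fun x => inner ℝ (p - q) x) this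
      simpa [inner_sum, inner_smul_right] using h2
    have h3 : ∀ i ∈ Finset.univ, w i * inner ℝ (p - q) (y i - q) ≤ 0 := fun i _ =>
      mul_nonpos_of_nonneg_of_nonpos (hw i).le
        (hle _ (subset_convexHull ℝ _ (hy ⟨i, rfl⟩)))
    intro i
    have := (Finset.sum_eq_zero_iff_of_nonpos h3).1 h1 i (Finset.mem_univ i)
    exact (mul_eq_zero.1 this).resolve_left (hw i).ne'
  have hcard : Fintype.card κ' < Fintype.card κ := by
    have h1 := hai.card_le_finrank_succ
    have h2 : vectorSpan ℝ (Set.range y) ≤ (Submodule.span ℝ {p - q})ᗮ := by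
      rw [vectorSpan_def, Submodule.span_le]
      rintro _ ⟨_, ⟨i, rfl⟩, _, ⟨j, rfl⟩, rfl⟩
      rw [SetLike.mem_coe, Submodule.mem_orthogonal_singleton_iff_inner_right]
      have : y i -ᵥ y j = (y i - q) - (y j - q) := by simp
      simp only [this, inner_sub_right _ (y i - q), hz, sub_zero]
    have h3 := Submodule.finrank_mono h2
    have h4 := (Submodule.span ℝ {p - q}).finrank_add_finrank_orthogonal
    rw [finrank_span_singleton hv] at h4
    omega
  choose g hg using fun i => hy (Set.mem_range_self i)
  obtain ⟨k, hk⟩ : ∃ k, ∀ i, g i ≠ k := by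
    by_contra hcon
    push Not at hcon
    exact absurd (Fintype.card_le_of_surjective g hcon) (by omega)
  -- a good point in the unused colour
  obtain ⟨b, hb, hbp⟩ : ∃ b ∈ B k, 0 ≤ inner ℝ (p - q) (z b - p) := by
    by_contra hcon
    push Not at hcon
    have hc : Convex ℝ {x : V | inner ℝ (p - q) x < inner ℝ (p - q) p} :=
      convex_halfSpace_lt (innerₛₗ ℝ (p - q)).isLinear _
    have := convexHull_min (s := z '' (B k : Set ι)) (by
      rintro _ ⟨b, hb, rfl⟩
      have := hcon b hb
      rw [inner_sub_right] at this
      simp only [Set.mem_ofPred_eq]; linarith) hc (hB k)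
    simp at this
  set f' := Function.update f k b with hf'
  have hf'B : f' ∈ Fintype.piFinset B := by
    rw [Fintype.mem_piFinset]
    intro j
    by_cases hj : j = k
    · subst hj; simpa [hf'] using hb
    · simpa [hf', hj] using hf j
  have hm := hmin f' hf'B
  have hq' : q ∈ convexHull ℝ (Set.range (z ∘ f')) := by
    refine mem_convexHull_of_exists_fintype w y (fun i => (hw i).le) hw1 (fun i => ?_) hwq
    refine ⟨g i, ?_⟩
    rw [← hg i]
    simp [hf', hk i]
  have := sel_nearest (convex_convexHull ℝ _) hq'
    (fun w hw => hqd ▸ hm.trans (Metric.infDist_le_dist_of_mem hw)) (z b)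
    (subset_convexHull ℝ _ ⟨k, by simp [hf']⟩)
  have h5 : inner ℝ (p - q) (z b - q) = inner ℝ (p - q) (z b - p) + inner ℝ (p - q) (p - q) := by
    rw [← inner_add_right]; simp
  have h6 : 0 < inner ℝ (p - q) (p - q) := real_inner_self_pos.2 hv
  linarith

theorem sel_carath {V : Type*} [NormedAddCommGroup V] [InnerProductSpace ℝ V]
    [FiniteDimensional ℝ V] {ι : Type*} [DecidableEq ι] (z : ι → V) (p : V) (t : Finset ι)
    (h : p ∈ convexHull ℝ (z '' (t : Set ι))) :
    ∃ b ⊆ t, b.card ≤ Module.finrank ℝ V + 1 ∧ p ∈ convexHull ℝ (z '' (b : Set ι)) := by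
  obtain ⟨κ', _, y, w, hy, hai, hw, hw1, hwq⟩ := eq_pos_convex_span_of_mem_convexHull h
  choose g hg hgy using fun i => hy (Set.mem_range_self i)
  refine ⟨Finset.univ.image g, ?_, ?_, ?_⟩
  · intro x hx
    obtain ⟨i, _, rfl⟩ := Finset.mem_image.1 hx
    exact hg i
  · refine Finset.card_image_le.trans ?_
    have h1 := hai.card_le_finrank_succ
    have := Submodule.finrank_le (vectorSpan ℝ (Set.range y))
    rw [Finset.card_univ]; omega
  · exact mem_convexHull_of_exists_fintype w y (fun i => (hw i).le) hw1
      (fun i => ⟨g i, by simp, hgy i⟩) hwq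

theorem sel_center {V : Type*} [NormedAddCommGroup V] [InnerProductSpace ℝ V]
    [FiniteDimensional ℝ V] {ι : Type*} [DecidableEq ι] (z : ι → V) (s : Finset ι) :
    ∃ p : V, ∀ t ⊆ s, Module.finrank ℝ V * s.card < (Module.finrank ℝ V + 1) * t.card →
      p ∈ convexHull ℝ (z '' (t : Set ι)) := by
  set D := Module.finrank ℝ V with hD
  have := Convex.helly_theorem' (𝕜 := ℝ) (F := fun t : Finset ι => convexHull ℝ (z '' (t : Set ι)))
    (s := s.powerset.filter (fun t => D * s.card < (D + 1) * t.card))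
    (fun i _ => convex_convexHull ℝ _) (by
      intro I hI hIc
      rw [← hD] at hIc
      by_cases hI0 : I = ∅
      · subst hI0; simp
      have hmem : ∀ t ∈ I, t ⊆ s ∧ D * s.card < (D + 1) * t.card := fun t ht => by
        simpa using hI ht
      obtain ⟨x, hx, hxI⟩ : ∃ x ∈ s, ∀ t ∈ I, x ∈ t := by
        by_contra hcon
        push Not at hcon
        have h1 : s ⊆ I.biUnion (fun t => s \ t) := by
          intro x hx
          obtain ⟨t, ht, hxt⟩ := hcon x hx
          simp only [Finset.mem_biUnion, Finset.mem_sdiff]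
          exact ⟨t, ht, hx, hxt⟩
        have h2 := (Finset.card_le_card h1).trans Finset.card_biUnion_le
        have h3 : ∑ t ∈ I, (D + 1) * (s \ t).card < ∑ t ∈ I, s.card := by
          apply Finset.sum_lt_sum_of_nonempty (Finset.nonempty_iff_ne_empty.2 hI0)
          intro t ht
          obtain ⟨h4, h5⟩ := hmem t ht
          have h6 := Finset.card_sdiff_add_card_eq_card h4
          nlinarith
        rw [← Finset.mul_sum, Finset.sum_const, smul_eq_mul] at h3
        nlinarith [Nat.mul_le_mul_right s.card hIc, Nat.mul_le_mul_left (D+1) h2]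
      refine ⟨z x, ?_⟩
      simp only [Set.mem_iInter]
      exact fun t ht => subset_convexHull ℝ _ ⟨x, hxI t ht, rfl⟩)
  obtain ⟨p, hp⟩ := this
  refine ⟨p, fun t ht htc => ?_⟩
  simp only [Set.mem_iInter] at hp
  exact hp t (by simp [ht, htc])

theorem sel_greedy {V : Type*} [NormedAddCommGroup V] [InnerProductSpace ℝ V]
    [FiniteDimensional ℝ V] {ι : Type*} [DecidableEq ι] (z : ι → V) (s : Finset ι) (p : V) (D : ℕ)
    (hD : Module.finrank ℝ V = D)
    (hp : ∀ t ⊆ s, D * s.card < (D + 1) * t.card → p ∈ convexHull ℝ (z '' (t : Set ι)))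
    (r : ℕ) (hr : (D + 1) ^ 2 * r ≤ s.card) :
    ∃ Q : Finset (Finset ι), Q.card = r ∧ (Q : Set (Finset ι)).PairwiseDisjoint id ∧
      ∀ b ∈ Q, b ⊆ s ∧ b.card ≤ D + 1 ∧ p ∈ convexHull ℝ (z '' (b : Set ι)) := by
  induction r with
  | zero => exact ⟨∅, by simp⟩
  | succ r ih =>
    obtain ⟨Q, hQc, hQd, hQ⟩ := ih (by nlinarith)
    have h1 : (Q.biUnion id).card ≤ Q.card * (D + 1) :=
      Finset.card_biUnion_le_card_mul _ _ _ (fun b hb => (hQ b hb).2.1)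
    have h2 : s.card ≤ (s \ Q.biUnion id).card + (Q.biUnion id).card := by
      have := Finset.le_card_sdiff (Q.biUnion id) s
      omega
    obtain ⟨b, hbt, hbc, hbp⟩ := sel_carath z p (s \ Q.biUnion id)
      (hp _ Finset.sdiff_subset (by rw [hQc] at h1; nlinarith))
    rw [hD] at hbc
    have hbne : b.Nonempty := by
      by_contra hk
      rw [Finset.not_nonempty_iff_eq_empty] at hk
      simp [hk] at hbp
    have hdis : ∀ c ∈ Q, Disjoint b c := by
      intro c hc
      rw [Finset.disjoint_left]
      intro x hx hxc
      have := hbt hx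
      simp only [Finset.mem_sdiff, Finset.mem_biUnion, id, not_exists, not_and] at this
      exact this.2 c hc hxc
    have hbQ : b ∉ Q := fun hb => hbne.ne_empty (disjoint_self.1 (hdis b hb))
    refine ⟨insert b Q, by rw [Finset.card_insert_of_notMem hbQ, hQc], ?_, ?_⟩
    · rw [Finset.coe_insert]
      exact hQd.insert (fun c hc _ => hdis c hc)
    · intro c hc
      rcases Finset.mem_insert.1 hc with rfl | hc
      · exact ⟨hbt.trans Finset.sdiff_subset, hbc, hbp⟩
      · exact hQ c hc

theorem sel_first {V : Type*} [NormedAddCommGroup V] [InnerProductSpace ℝ V]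
    [FiniteDimensional ℝ V] {ι : Type*} (z : ι → V) (s : Finset ι) (D : ℕ)
    (hD : Module.finrank ℝ V = D) (r : ℕ) (hr : (D + 1) ^ 2 * r ≤ s.card) :
    ∃ p : V, r.choose (D + 1) ≤
      {T : Finset ι | T ⊆ s ∧ T.card = D + 1 ∧ p ∈ convexHull ℝ (z '' (T : Set ι))}.ncard := by
  classical
  obtain ⟨p, hp⟩ := sel_center z s
  rw [hD] at hp
  obtain ⟨Q, hQc, hQd, hQ⟩ := sel_greedy z s p D hD hp r hr
  refine ⟨p, ?_⟩
  have key : ∀ J ∈ Q.powersetCard (D + 1), ∃ T : Finset ι, (T ⊆ s ∧ T.card = D + 1 ∧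
      p ∈ convexHull ℝ (z '' (T : Set ι))) ∧ Q.filter (fun b => ∃ x ∈ T, x ∈ b) = J := by
    intro J hJ
    obtain ⟨hJQ, hJc⟩ := Finset.mem_powersetCard.1 hJ
    obtain ⟨f, hfB, hfp⟩ := sel_colorful (κ := J) (by rw [hD]; simp [hJc]) z p (fun b => b.1)
      (fun b => (hQ b.1 (hJQ b.2)).2.2)
    have hun : ∀ b ∈ Q, ∀ k : J, f k ∈ b → b = k.1 := by
      intro b hb k hk
      by_contra hne
      have := hQd hb (hJQ k.2) hne
      exact Finset.disjoint_left.1 this hk (hfB k)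
    have hinj : Function.Injective f := by
      intro k l hkl
      apply Subtype.ext
      exact hun k.1 (hJQ k.2) l (hkl ▸ hfB k)
    refine ⟨Finset.univ.image f, ⟨?_, ?_, ?_⟩, ?_⟩
    · intro x hx
      obtain ⟨k, _, rfl⟩ := Finset.mem_image.1 hx
      exact (hQ k.1 (hJQ k.2)).1 (hfB k)
    · rw [Finset.card_image_of_injective _ hinj]; simp [hJc]
    · rw [Set.range_comp] at hfp
      simpa using hfp
    · ext b
      simp only [Finset.mem_filter, Finset.mem_image, Finset.mem_univ, true_and]
      constructor
      · rintro ⟨hb, _, ⟨k, rfl⟩, hk⟩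
        rw [hun b hb k hk]; exact k.2
      · intro hb
        exact ⟨hJQ hb, _, ⟨⟨b, hb⟩, rfl⟩, hfB ⟨b, hb⟩⟩
  choose! T hT hTJ using key
  have hfin : {T : Finset ι | T ⊆ s ∧ T.card = D + 1 ∧
      p ∈ convexHull ℝ (z '' (T : Set ι))}.Finite :=
    s.powerset.finite_toSet.subset (fun T hT => by simpa using hT.1)
  rw [← hQc, ← Finset.card_powersetCard, ← Set.ncard_coe_finset]
  refine Set.ncard_le_ncard_of_injOn T (fun J hJ => hT J hJ) ?_ hfin
  intro J hJ J' hJ' h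
  rw [← hTJ J hJ, ← hTJ J' hJ', h]

theorem sel_numeric (n q : ℕ) (hn : 0 < n) (hq : 0 < q) :
    ∃ lam : ℝ, 0 < lam ∧ ∀ N : ℕ,
      lam * (N.choose n : ℝ) ≤ 1 ∨ lam * (N.choose n : ℝ) ≤ ((N / q).choose n : ℝ) := by
  have hA : (0 : ℝ) < (2 * q * n : ℝ) ^ n := by positivity
  have hB : (0 : ℝ) < 2 ^ (q * n) := by positivity
  refine ⟨min (((2 * q * n : ℝ) ^ n)⁻¹) ((2 ^ (q * n))⁻¹), by positivity, fun N => ?_⟩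
  set r := N / q with hr
  have hNr : N < q * (r + 1) := by
    rw [hr]; exact Nat.lt_mul_div_succ N hq
  by_cases h : r < n
  · left
    have h1 : N ≤ q * n := hNr.le.trans (Nat.mul_le_mul_left q h)
    have h2 : (N.choose n : ℝ) ≤ 2 ^ (q * n) := by
      have : N.choose n ≤ 2 ^ (q * n) :=
        (Nat.choose_le_two_pow N n).trans (Nat.pow_le_pow_right (by norm_num) h1)
      exact_mod_cast this
    calc _ ≤ ((2 : ℝ) ^ (q * n))⁻¹ * (N.choose n : ℝ) := by
          gcongr; exact min_le_right _ _
      _ ≤ ((2 : ℝ) ^ (q * n))⁻¹ * 2 ^ (q * n) := by gcongr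
      _ = 1 := inv_mul_cancel₀ hB.ne'
  · right
    push Not at h
    have h1 : N ≤ 2 * q * n * (r + 1 - n) := by
      obtain ⟨k, h4⟩ := Nat.exists_eq_add_of_le h
      rw [show r + 1 - n = k + 1 by omega]
      have h5 : r ≤ n * (k + 1) := by nlinarith
      have h6 : r + 1 ≤ 2 * (n * (k + 1)) := by nlinarith
      have := Nat.mul_le_mul_left q h6
      nlinarith
    have h2 : (N.choose n : ℝ) ≤ (2 * q * n : ℝ) ^ n * (r.choose n : ℝ) := by
      calc (N.choose n : ℝ) ≤ (N : ℝ) ^ n / n.factorial := Nat.choose_le_pow_div n N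
        _ ≤ ((2 * q * n : ℝ) * ((r + 1 - n : ℕ) : ℝ)) ^ n / n.factorial := by
          gcongr
          exact_mod_cast h1
        _ = (2 * q * n : ℝ) ^ n * (((r + 1 - n : ℕ) : ℝ) ^ n / n.factorial) := by
          rw [mul_pow]; ring
        _ ≤ _ := by
          gcongr
          exact Nat.pow_le_choose n r
    calc _ ≤ ((2 * q * n : ℝ) ^ n)⁻¹ * (N.choose n : ℝ) := by
          gcongr; exact min_le_left _ _
      _ ≤ ((2 * q * n : ℝ) ^ n)⁻¹ * ((2 * q * n : ℝ) ^ n * (r.choose n : ℝ)) := by gcongr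
      _ = _ := by rw [← mul_assoc, inv_mul_cancel₀ hA.ne', one_mul]

theorem sel_cover (d : ℕ) (δ : ℝ) (hδ0 : 0 < δ) :
    ∃ t : Finset (EuclideanSpace ℝ (Fin d)), (∀ u ∈ t, ‖u‖ = 1) ∧
      ∀ e : EuclideanSpace ℝ (Fin d), ‖e‖ = 1 → ∃ u ∈ t, 1 - δ ≤ inner ℝ u e := by
  obtain ⟨t, ht, hcov⟩ := (isCompact_sphere (0 : EuclideanSpace ℝ (Fin d)) 1).elim_nhds_subcover
    (fun u => {e | 1 - δ < inner ℝ u e}) (by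
      intro u hu
      have hu1 : ‖u‖ = 1 := by simpa using hu
      apply IsOpen.mem_nhds
      · exact isOpen_lt continuous_const (by fun_prop)
      · simp [hu1, hδ0])
  refine ⟨t, fun u hu => by simpa using ht u hu, fun e he => ?_⟩
  have := hcov (show e ∈ Metric.sphere 0 1 by simpa using he)
  simp only [Set.mem_iUnion] at this
  obtain ⟨u, hu, h⟩ := this
  exact ⟨u, hu, le_of_lt h⟩

theorem sel_diam_pts {E : Type*} [MetricSpace E] {A : Set E} (hA : IsCompact A)
    (h : 1 ≤ Metric.diam A) : ∃ x ∈ A, ∃ y ∈ A, 1 ≤ dist x y := by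
  have hne : A.Nonempty := by
    by_contra hk
    rw [Set.not_nonempty_iff_eq_empty] at hk
    simp [hk] at h
    linarith
  obtain ⟨⟨x, y⟩, ⟨hx, hy⟩, hmax⟩ := (hA.prod hA).exists_isMaxOn (hne.prod hne)
    (f := fun p : E × E => dist p.1 p.2) (by fun_prop)
  refine ⟨x, hx, y, hy, h.trans ?_⟩
  exact Metric.diam_le_of_forall_dist_le dist_nonneg
    (fun a ha b hb => hmax (show (a, b) ∈ A ×ˢ A from ⟨ha, hb⟩))

theorem sel_diam_segment {E : Type*} [NormedAddCommGroup E] [NormedSpace ℝ E] (a b : E) :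
    dist a b ≤ Metric.diam (segment ℝ a b) := by
  apply Metric.dist_le_diam_of_mem
  · rw [← convexHull_pair, isBounded_convexHull]
    exact (Set.toFinite _).isBounded
  · exact left_mem_segment ℝ a b
  · exact right_mem_segment ℝ a b

theorem sel_large (d : ℕ) (hd : 0 < d) (c : ℝ) (hc : 0 < c)
    (G : Finset (Set (EuclideanSpace ℝ (Fin d)))) (u : EuclideanSpace ℝ (Fin d)) (hu : ‖u‖ = 1)
    (x y : Set (EuclideanSpace ℝ (Fin d)) → EuclideanSpace ℝ (Fin d))
    (hx : ∀ A ∈ G, x A ∈ A) (hy : ∀ A ∈ G, y A ∈ A)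
    (hxy : ∀ A ∈ G, c ≤ inner ℝ u (y A - x A)) (r : ℕ) (hr : (2 * d) ^ 2 * r ≤ G.card) :
    ∃ K : Set (EuclideanSpace ℝ (Fin d)), Convex ℝ K ∧ c ≤ Metric.diam K ∧
      r.choose (2 * d) ≤ {A : Finset (Set (EuclideanSpace ℝ (Fin d))) |
              A ⊆ G ∧ A.card = 2 * d ∧
                K ⊆ convexHull ℝ (⋃₀ (A : Set (Set (EuclideanSpace ℝ (Fin d)))))}.ncard := by
  classical
  have hu0 : u ≠ 0 := by
    intro h; simp [h] at hu
  have huu : inner ℝ u u = (1 : ℝ) := by rw [real_inner_self_eq_norm_sq, hu]; norm_num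
  let W := (Submodule.span ℝ {u})ᗮ
  have hfr : Module.finrank ℝ (EuclideanSpace ℝ (Fin (2 * d - 1))) =
      Module.finrank ℝ (EuclideanSpace ℝ (Fin d) × W) := by
    have h4 := (Submodule.span ℝ {u}).finrank_add_finrank_orthogonal
    rw [finrank_span_singleton hu0] at h4
    simp only [Module.finrank_prod, finrank_euclideanSpace_fin] at h4 ⊢
    change 1 + Module.finrank ℝ W = d at h4
    omega
  let φ := LinearEquiv.ofFinrankEq _ _ hfr
  let y' : Set (EuclideanSpace ℝ (Fin d)) → EuclideanSpace ℝ (Fin d) := fun A =>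
    x A + (c / inner ℝ u (y A - x A)) • (y A - x A)
  have hy'in : ∀ A ∈ G, inner ℝ u (y' A - x A) = c := by
    intro A hA
    have := hxy A hA
    have h0 : inner ℝ u (y A - x A) ≠ 0 := by linarith
    simp only [y', add_sub_cancel_left, inner_smul_right]
    field_simp
  have hy'seg : ∀ A ∈ G, y' A ∈ segment ℝ (x A) (y A) := by
    intro A hA
    have := hxy A hA
    have h0 : 0 < inner ℝ u (y A - x A) := by linarith
    rw [segment_eq_image']
    exact ⟨_, ⟨by positivity, (div_le_one h0).2 this⟩, rfl⟩
  let b : Set (EuclideanSpace ℝ (Fin d)) → W := fun A =>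
    if h : A ∈ G then ⟨y' A - x A - c • u, by
      rw [Submodule.mem_orthogonal_singleton_iff_inner_right, inner_sub_right, hy'in A h,
        inner_smul_right, huu]; ring⟩ else 0
  have hb : ∀ A ∈ G, (b A : EuclideanSpace ℝ (Fin d)) = y' A - x A - c • u := by
    intro A hA
    simp [b, hA]
  obtain ⟨p, hp⟩ := sel_first (fun A => φ.symm (x A, b A)) G (2 * d - 1)
    (by simp) r (by rwa [show 2 * d - 1 + 1 = 2 * d by omega])
  rw [show 2 * d - 1 + 1 = 2 * d by omega] at hp
  let f1 : EuclideanSpace ℝ (Fin (2 * d - 1)) →ₗ[ℝ] EuclideanSpace ℝ (Fin d) :=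
    (LinearMap.fst ℝ _ W).comp φ.toLinearMap
  let f2 : EuclideanSpace ℝ (Fin (2 * d - 1)) →ₗ[ℝ] EuclideanSpace ℝ (Fin d) :=
    (W.subtype.comp (LinearMap.snd ℝ (EuclideanSpace ℝ (Fin d)) W)).comp φ.toLinearMap
  have hf2 : ∀ v, inner ℝ u (f2 v) = 0 := by
    intro v
    exact Submodule.mem_orthogonal_singleton_iff_inner_right.1 (φ v).2.2
  let g : EuclideanSpace ℝ (Fin (2 * d - 1)) →ᵃ[ℝ] EuclideanSpace ℝ (Fin d) :=
    (f1 + f2).toAffineMap + AffineMap.const ℝ _ (c • u)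
  refine ⟨segment ℝ (f1 p) (g p), convex_segment _ _, ?_, hp.trans ?_⟩
  · refine le_trans ?_ (sel_diam_segment _ _)
    rw [dist_comm, dist_eq_norm]
    have h1 : g p - f1 p = f2 p + c • u := by simp [g]; abel
    rw [h1]
    have h2 := real_inner_le_norm u (f2 p + c • u)
    rw [inner_add_right, hf2, inner_smul_right, huu, hu] at h2
    linarith
  · apply Set.ncard_le_ncard
    · rintro A ⟨hAG, hAc, hAp⟩
      refine ⟨hAG, hAc, ?_⟩
      set H := convexHull ℝ (⋃₀ (A : Set (Set (EuclideanSpace ℝ (Fin d))))) with hH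
      have hHc : Convex ℝ H := convex_convexHull ℝ _
      have hsub : ∀ S ∈ A, S ⊆ H := fun S hS =>
        (Set.subset_sUnion_of_mem (by exact hS)).trans (subset_convexHull ℝ _)
      have h1 : ∀ S ∈ A, f1 (φ.symm (x S, b S)) = x S := by
        intro S hS; simp [f1]
      have h2 : ∀ S ∈ A, g (φ.symm (x S, b S)) = y' S := by
        intro S hS
        simp [g, f1, f2, hb S (hAG hS)]
        abel
      refine hHc.segment_subset ?_ ?_
      · refine convexHull_min (t := f1 ⁻¹' H) ?_ (hHc.linear_preimage f1) hAp
        rintro _ ⟨S, hS, rfl⟩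
        simp only [Set.mem_preimage]
        rw [h1 S hS]
        exact hsub S hS (hx S (hAG hS))
      · refine convexHull_min (t := g ⁻¹' H) ?_ (hHc.affine_preimage g) hAp
        rintro _ ⟨S, hS, rfl⟩
        simp only [Set.mem_preimage]
        rw [h2 S hS]
        exact hHc.segment_subset (hsub S hS (hx S (hAG hS))) (hsub S hS (hy S (hAG hS)))
          (hy'seg S (hAG hS))
    · exact G.powerset.finite_toSet.subset (fun T hT => by simpa using hT.1)

/-- **Selection lemma for the diameter.**  For a positive integer `d` and `0 < δ < 1`, there is
`λ = λ(δ, d) > 0` such that: for any finite family `𝓕` of at least `2d` compact sets in `ℝ^d`,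
each of diameter at least one, there is a convex set `K` of diameter at least `1 - δ` with
`K ⊆ conv(∪ A)` for at least `λ · C(|𝓕|, 2d)` subsets `A ⊆ 𝓕` of cardinality `2d`. -/
theorem selection_lemma_for_diameter (d : ℕ) (hd : 0 < d)
    (δ : ℝ) (hδ0 : 0 < δ) (hδ1 : δ < 1) :
    ∃ lam : ℝ, 0 < lam ∧
      ∀ F : Finset (Set (EuclideanSpace ℝ (Fin d))),
        2 * d ≤ F.card →
        (∀ A ∈ F, IsCompact A ∧ 1 ≤ Metric.diam A) →
        ∃ K : Set (EuclideanSpace ℝ (Fin d)),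
          Convex ℝ K ∧ 1 - δ ≤ Metric.diam K ∧
          lam * (F.card.choose (2 * d) : ℝ) ≤
            ({A : Finset (Set (EuclideanSpace ℝ (Fin d))) |
              A ⊆ F ∧ A.card = 2 * d ∧
                K ⊆ convexHull ℝ (⋃₀ (A : Set (Set (EuclideanSpace ℝ (Fin d)))))}.ncard : ℝ) := by
  classical
  obtain ⟨t, ht1, htc⟩ := sel_cover d δ hδ0
  obtain ⟨lam, hlam, hnum⟩ := sel_numeric (2 * d) ((t.card + 1) * (2 * d) ^ 2) (by omega)
    (by positivity)
  refine ⟨lam, hlam, fun F hF hFA => ?_⟩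
  have hpts : ∀ A ∈ F, ∃ x y, x ∈ A ∧ y ∈ A ∧ 1 ≤ dist x y := by
    intro A hA
    obtain ⟨x, hx, y, hy, h⟩ := sel_diam_pts (hFA A hA).1 (hFA A hA).2
    exact ⟨x, y, hx, hy, h⟩
  choose! x y hx hy hxy using hpts
  have hfin : ∀ K : Set (EuclideanSpace ℝ (Fin d)),
      {A : Finset (Set (EuclideanSpace ℝ (Fin d))) |
        A ⊆ F ∧ A.card = 2 * d ∧
          K ⊆ convexHull ℝ (⋃₀ (A : Set (Set (EuclideanSpace ℝ (Fin d)))))}.Finite := fun K =>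
    F.powerset.finite_toSet.subset (fun T hT => by simpa using hT.1)
  rcases hnum F.card with h | h
  · obtain ⟨A, hAF, hAc⟩ := Finset.exists_subset_card_eq hF
    obtain ⟨S, hS⟩ : A.Nonempty := Finset.card_pos.1 (by omega)
    refine ⟨segment ℝ (x S) (y S), convex_segment _ _, ?_, h.trans ?_⟩
    · have := hxy S (hAF hS)
      have := sel_diam_segment (x S) (y S)
      linarith
    · have : 0 < {A : Finset (Set (EuclideanSpace ℝ (Fin d))) |
        A ⊆ F ∧ A.card = 2 * d ∧ segment ℝ (x S) (y S) ⊆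
          convexHull ℝ (⋃₀ (A : Set (Set (EuclideanSpace ℝ (Fin d)))))}.ncard := by
        rw [Set.ncard_pos (hfin _)]
        have hsub : S ⊆ convexHull ℝ (⋃₀ (A : Set (Set (EuclideanSpace ℝ (Fin d))))) :=
          (Set.subset_sUnion_of_mem (by exact hS)).trans (subset_convexHull ℝ _)
        exact ⟨A, hAF, hAc, (convex_convexHull ℝ _).segment_subset
          (hsub (hx S (hAF hS))) (hsub (hy S (hAF hS)))⟩
      exact_mod_cast this
  · have hdir : ∀ A ∈ F, ∃ u ∈ t, 1 - δ ≤ inner ℝ u (y A - x A) := by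
      intro A hA
      have h1 : 1 ≤ ‖y A - x A‖ := by
        rw [← dist_eq_norm, dist_comm]; exact hxy A hA
      obtain ⟨u, hu, hue⟩ := htc (‖y A - x A‖⁻¹ • (y A - x A)) (by
        rw [norm_smul, norm_inv, norm_norm, inv_mul_cancel₀ (by linarith)])
      refine ⟨u, hu, ?_⟩
      rw [inner_smul_right, inv_mul_eq_div, le_div_iff₀ (by linarith)] at hue
      nlinarith
    choose! v hvt hv using hdir
    have htne : t.Nonempty := by
      obtain ⟨S, hS⟩ : F.Nonempty := Finset.card_pos.1 (by omega)
      exact ⟨v S, hvt S hS⟩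
    set r := F.card / ((t.card + 1) * (2 * d) ^ 2) with hr
    have hrF : ((t.card + 1) * (2 * d) ^ 2) * r ≤ F.card := Nat.mul_div_le _ _
    obtain ⟨u, hut, hucard⟩ := Finset.exists_le_card_fiber_of_mul_le_card_of_maps_to
      (n := (2 * d) ^ 2 * r) hvt htne (by nlinarith [Nat.zero_le ((2 * d) ^ 2 * r)])
    have hG : ∀ A ∈ F.filter (fun A => v A = u), A ∈ F ∧ v A = u := fun A hA => by
      simpa using hA
    obtain ⟨K, hK, hKd, hKc⟩ := sel_large d hd (1 - δ) (by linarith)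
      (F.filter (fun A => v A = u)) u (ht1 u hut) x y
      (fun A hA => hx A (hG A hA).1) (fun A hA => hy A (hG A hA).1)
      (fun A hA => (hG A hA).2 ▸ hv A (hG A hA).1) r hucard
    refine ⟨K, hK, hKd, h.trans ?_⟩
    refine Nat.cast_le.2 (hKc.trans (Set.ncard_le_ncard ?_ (hfin K)))
    rintro A ⟨hA1, hA2⟩
    exact ⟨hA1.trans (Finset.filter_subset _ _), hA2⟩
end
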